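/- arXiv:math/0503747 — 2 statements merged into one kernel-verified Lean document; each statement's English description precedes it below -/
import Mathlib

section
/- In a finite von Neumann algebra, singletons in P(M)/∼ are closed in the quotient operator topology; that is, the quotient topology is T₁. -/
open ContinuousLinearMap Filter Topology

universe u

noncomputable section

variable {H : Type u} [NormedAddCommGroup H] [InnerProductSpace ℂ H] [CompleteSpace H]

/-- `p` is an (orthogonal) projection belonging to the von Neumann algebra `M`. -/
def IsProjIn (M : VonNeumannAlgebra H) (p : H →L[ℂ] H) : Prop :=
  p ∈ M ∧ IsSelfAdjoint p ∧ p * p = p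

/-- Murray–von Neumann equivalence of `p` and `q` relative to `M`:
there is a partial isometry `v ∈ M` with `v* v = p` and `v v* = q`. -/
def MvNEquiv (M : VonNeumannAlgebra H) (p q : H →L[ℂ] H) : Prop :=
  ∃ v ∈ M, adjoint v * v = p ∧ v * adjoint v = q

/-- The order on projections: `p ≤ q` iff `p q = p = q p`. -/
def ProjLE (p q : H →L[ℂ] H) : Prop := p * q = p ∧ q * p = p

/-- Murray–von Neumann subequivalence `p ≼ q`: `p` is equivalent to a subprojection of `q`. -/
def SubEquiv (M : VonNeumannAlgebra H) (p q : H →L[ℂ] H) : Prop :=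
  ∃ r, IsProjIn M r ∧ MvNEquiv M p r ∧ ProjLE r q

/-- `z` is a central projection of `M`. -/
def IsCentralProj (M : VonNeumannAlgebra H) (z : H →L[ℂ] H) : Prop :=
  IsProjIn M z ∧ ∀ x ∈ M, z * x = x * z

/-- A projection `p` is finite: `p ∼ q ≤ p` implies `q = p`. -/
def FiniteProj (M : VonNeumannAlgebra H) (p : H →L[ℂ] H) : Prop :=
  ∀ q, IsProjIn M q → ProjLE q p → MvNEquiv M p q → q = p

/-- A projection `p` is properly infinite: it is a countably infinite sum of pairwise
orthogonal projections, each equivalent to `p`. -/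
def ProperlyInfiniteProj (M : VonNeumannAlgebra H) (p : H →L[ℂ] H) : Prop :=
  p ≠ 0 ∧ ∃ e : ℕ → H →L[ℂ] H, (∀ n, IsProjIn M (e n)) ∧
    (Pairwise fun m n => e m * e n = 0) ∧ (∀ n, MvNEquiv M (e n) p) ∧
    ∀ ξ : H, HasSum (fun n => e n ξ) (p ξ)

/-- `z` is the central support of `h`: the smallest central projection with `z h = h`. -/
def IsCentralSupport (M : VonNeumannAlgebra H) (h z : H →L[ℂ] H) : Prop :=
  IsCentralProj M z ∧ z * h = h ∧ ∀ w, IsCentralProj M w → w * h = h → z * w = z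

/-- The projection `e` is σ-finite relative to `M`: every family of pairwise orthogonal
nonzero subprojections of `e` in `M` is countable. -/
def SigmaFiniteProj (M : VonNeumannAlgebra H) (e : H →L[ℂ] H) : Prop :=
  ∀ S : Set (H →L[ℂ] H), (∀ q ∈ S, IsProjIn M q ∧ q ≠ 0 ∧ ProjLE q e) →
    (S.Pairwise fun a b => a * b = 0) → S.Countable

/-- Kadison–Pedersen equivalence on the positive cone: `h ≈ k` iff there is a family
`{x_α} ⊆ M` with `h = Σ x_α* x_α` and `k = Σ x_α x_α*` (sums in the strong topology). -/
def KPEquiv (M : VonNeumannAlgebra H) (h k : H →L[ℂ] H) : Prop :=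
  ∃ (ι : Type u) (x : ι → H →L[ℂ] H), (∀ i, x i ∈ M) ∧
    (∀ ξ : H, HasSum (fun i => (adjoint (x i) * x i) ξ) (h ξ)) ∧
    (∀ ξ : H, HasSum (fun i => (x i * adjoint (x i)) ξ) (k ξ))

/-- Operator order: `a ≤ b` iff `b - a` is positive. -/
def OpLE (a b : H →L[ℂ] H) : Prop := (b - a).IsPositive

/-- `h ∈ M₊` is finite in the Kadison–Pedersen sense: `h ≈ k ≤ h` implies `k = h`. -/
def KPFinite (M : VonNeumannAlgebra H) (h : H →L[ℂ] H) : Prop :=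
  ∀ k, k ∈ M → k.IsPositive → OpLE k h → KPEquiv M h k → k = h

/-- `h ∈ M₊` is properly infinite: `z h` is finite and nonzero for no central projection `z`. -/
def KPProperlyInfinite (M : VonNeumannAlgebra H) (h : H →L[ℂ] H) : Prop :=
  h ≠ 0 ∧ ∀ z, IsCentralProj M z → KPFinite M (z * h) → z * h = 0

/-- The set of projections of `M`. -/
def ProjSet (M : VonNeumannAlgebra H) := {p : H →L[ℂ] H // IsProjIn M p}

/-- The strong operator topology on the projections of `M` (topology of pointwise convergence). -/
instance (M : VonNeumannAlgebra H) : TopologicalSpace (ProjSet M) :=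
  TopologicalSpace.induced (fun p : ProjSet M => (fun ξ => p.1 ξ : H → H)) inferInstance

/-- The quotient `P(M)/∼` of the projections of `M` by Murray–von Neumann equivalence,
carrying the quotient (strong operator) topology. -/
abbrev PQuot (M : VonNeumannAlgebra H) :=
  Quot (fun p q : ProjSet M => MvNEquiv M p.1 q.1)

/-- The quotient map `P(M) → P(M)/∼`. -/
def pquotMk (M : VonNeumannAlgebra H) : ProjSet M → PQuot M := Quot.mk _

/-- The strong operator topology on `B(H)`. -/
def SOT : TopologicalSpace (H →L[ℂ] H) :=
  TopologicalSpace.induced (fun a : H →L[ℂ] H => (fun ξ => a ξ : H → H)) inferInstance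

/-- The order induced on `P(M)/∼` by Murray–von Neumann subequivalence. -/
def QLE (M : VonNeumannAlgebra H) (a b : PQuot M) : Prop :=
  ∃ p q : ProjSet M, a = pquotMk M p ∧ b = pquotMk M q ∧ SubEquiv M p.1 q.1


namespace PQ

open scoped InnerProductSpace

set_option linter.unusedSectionVars false

lemma ap (a b : H →L[ℂ] H) (ξ : H) : (a * b) ξ = a (b ξ) := rfl

lemma zap (ξ : H) : (0 : H →L[ℂ] H) ξ = 0 := rfl

lemma mem_of_comm {M : VonNeumannAlgebra H} {x : H →L[ℂ] H}
    (h : ∀ y ∈ M.commutant, y * x = x * y) : x ∈ M := by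
  rw [← VonNeumannAlgebra.commutant_commutant M, VonNeumannAlgebra.mem_commutant_iff]
  exact h

lemma comm_of_mem {M : VonNeumannAlgebra H} {x y : H →L[ℂ] H} (hx : x ∈ M)
    (hy : y ∈ M.commutant) : y * x = x * y :=
  ((VonNeumannAlgebra.mem_commutant_iff.1 hy) x hx).symm

lemma mem_of_tendsto {M : VonNeumannAlgebra H} {ι : Type*} {l : Filter ι} [l.NeBot]
    {f : ι → H →L[ℂ] H} {x : H →L[ℂ] H} (hf : ∀ i, f i ∈ M)
    (h : ∀ ξ, Tendsto (fun i => f i ξ) l (𝓝 (x ξ))) : x ∈ M := by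
  refine mem_of_comm fun y hy => ?_
  ext ξ
  have h1 : Tendsto (fun i => y (f i ξ)) l (𝓝 (y (x ξ))) :=
    (y.continuous.tendsto _).comp (h ξ)
  have h2 := h (y ξ)
  refine tendsto_nhds_unique h1 (h2.congr fun i => ?_)
  exact (congrArg (fun z : H →L[ℂ] H => z ξ) (comm_of_mem (hf i) hy)).symm

/-- closed subspaces invariant under the commutant give projections in `M`. -/
lemma proj_mem {M : VonNeumannAlgebra H} (K : Submodule ℂ H) [K.HasOrthogonalProjection]
    (h : ∀ y ∈ M.commutant, ∀ ξ ∈ K, y ξ ∈ K) : K.starProjection ∈ M := by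
  rw [VonNeumannAlgebra.IsStarProjection.mem_iff isStarProjection_starProjection]
  intro y hy
  rw [Module.End.mem_invtSubmodule]
  intro ξ hξ
  have : ξ ∈ K := by simpa using hξ
  have h2 := h y hy ξ this
  simpa using h2

lemma clos_inv {K : Submodule ℂ H} {y : H →L[ℂ] H} (h : ∀ ξ ∈ K, y ξ ∈ K) :
    ∀ ξ ∈ K.topologicalClosure, y ξ ∈ K.topologicalClosure := by
  intro ξ hξ
  have : Set.MapsTo y (K : Set H) K := h
  exact (this.closure y.continuous) hξ

/-- An operator killing `K` kills the closure -/
lemma kill_clos {K : Submodule ℂ H} {y : H →L[ℂ] H} (h : ∀ ξ ∈ K, y ξ = 0) :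
    y * K.topologicalClosure.starProjection = 0 := by
  have h1 : K ≤ y.ker := fun ξ hξ => h ξ hξ
  have h2 : K.topologicalClosure ≤ y.ker :=
    K.topologicalClosure_minimal h1 y.isClosed_ker
  ext ξ
  exact h2 (Submodule.starProjection_apply_mem _ ξ)

lemma cfc_mem {M : VonNeumannAlgebra H} {a : H →L[ℂ] H} (ha : a ∈ M) (f : ℝ → ℝ) :
    cfc f a ∈ M := by
  refine mem_of_comm fun y hy => ?_
  have := Commute.cfc (p := IsSelfAdjoint) (a := a) (b := y) (comm_of_mem ha hy).symm
    (comm_of_mem (star_mem ha) hy).symm f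
  exact this.eq.symm

lemma sqrt_mem {M : VonNeumannAlgebra H} {a : H →L[ℂ] H} (ha : a ∈ M) (h0 : 0 ≤ a) :
    CFC.sqrt a ∈ M := by
  rw [CFC.sqrt_eq_real_sqrt a h0, cfcₙ_eq_cfc]
  exact cfc_mem ha _

lemma norm_sq_eq (x : H →L[ℂ] H) (ξ : H) : ‖x ξ‖ ^ 2 = (⟪(star x * x) ξ, ξ⟫_ℂ).re := by
  rw [ContinuousLinearMap.star_eq_adjoint]
  exact ContinuousLinearMap.apply_norm_sq_eq_inner_adjoint_left x ξ

lemma inner_star (x : H →L[ℂ] H) (ξ η : H) : ⟪star x ξ, η⟫_ℂ = ⟪ξ, x η⟫_ℂ := by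
  rw [ContinuousLinearMap.star_eq_adjoint, ContinuousLinearMap.adjoint_inner_left]

lemma inner_star' (x : H →L[ℂ] H) (ξ η : H) : ⟪ξ, star x η⟫_ℂ = ⟪x ξ, η⟫_ℂ := by
  rw [ContinuousLinearMap.star_eq_adjoint, ContinuousLinearMap.adjoint_inner_right]

lemma ss_eq {v w : H →L[ℂ] H} (h : ∀ ξ, ‖v ξ‖ = ‖w ξ‖) : star v * v = star w * w := by
  have : ((star v * v : H →L[ℂ] H) : H →ₗ[ℂ] H) = ((star w * w : H →L[ℂ] H) : H →ₗ[ℂ] H) := by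
    rw [← ext_inner_map]
    intro ξ
    show ⟪star v (v ξ), ξ⟫_ℂ = ⟪star w (w ξ), ξ⟫_ℂ
    rw [inner_star, inner_star, inner_self_eq_norm_sq_to_K, inner_self_eq_norm_sq_to_K, h]
  exact ContinuousLinearMap.coe_injective this

/-- polar decomposition -/
lemma polar {M : VonNeumannAlgebra H} {x : H →L[ℂ] H} (hx : x ∈ M) :
    ∃ v ∈ M, v * star v * v = v ∧ (∀ ξ, v ξ = 0 ↔ x ξ = 0) ∧
      ∀ y : H →L[ℂ] H, y * x = 0 → y * v = 0 := by
  set a : H →L[ℂ] H := CFC.sqrt (star x * x) with ha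
  have h0 : 0 ≤ star x * x := star_mul_self_nonneg x
  have haM : a ∈ M := sqrt_mem (mul_mem (star_mem hx) hx) h0
  have hasa : star a = a := (CFC.sqrt_nonneg (star x * x)).isSelfAdjoint
  have haa : star a * a = star x * x := by rw [hasa]; exact CFC.sqrt_mul_sqrt_self _ h0
  have hn : ∀ ξ, ‖a ξ‖ = ‖x ξ‖ := by
    intro ξ
    have : ‖a ξ‖ ^ 2 = ‖x ξ‖ ^ 2 := by rw [norm_sq_eq, norm_sq_eq, haa]
    exact (pow_left_inj₀ (norm_nonneg _) (norm_nonneg _) two_ne_zero).1 this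
  let K : Submodule ℂ H := a.range.topologicalClosure
  have hKc : CompleteSpace K := a.range.isClosed_topologicalClosure.completeSpace_coe
  have hmem : ∀ ξ, a ξ ∈ K := fun ξ => a.range.le_topologicalClosure ⟨ξ, rfl⟩
  let e : H →ₗ[ℂ] K := a.toLinearMap.codRestrict K hmem
  have hd : DenseRange e := by
    intro k
    rw [closure_subtype]
    have : (Subtype.val '' Set.range e : Set H) = (a.range : Set H) := by
      ext t; constructor
      · rintro ⟨_, ⟨s, rfl⟩, rfl⟩; exact ⟨s, rfl⟩
      · rintro ⟨s, rfl⟩; exact ⟨e s, ⟨s, rfl⟩, rfl⟩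
    rw [this]
    exact k.2
  have hne : ∀ ξ, ‖x.toLinearMap ξ‖ = ‖e ξ‖ := fun ξ => (hn ξ).symm
  let u : K →L[ℂ] H := x.toLinearMap.extendOfNorm e
  have hu : ∀ ξ, u (e ξ) = x ξ := fun ξ =>
    LinearMap.extendOfNorm_eq hd ⟨1, fun ξ => by rw [one_mul]; exact (hne ξ).le⟩ ξ
  have hun : ∀ k, ‖u k‖ = ‖k‖ := by
    intro k
    have : (fun k => ‖u k‖) = fun k : K => ‖k‖ := by
      refine hd.equalizer (by fun_prop) (by fun_prop) ?_
      ext ξ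
      simp only [Function.comp]
      rw [hu]; exact hne ξ
    exact congrFun this k
  let v : H →L[ℂ] H := u ∘L K.orthogonalProjectionOnto
  have hvn : ∀ ξ, ‖v ξ‖ = ‖K.starProjection ξ‖ := by
    intro ξ
    rw [show v ξ = u (K.orthogonalProjectionOnto ξ) from rfl, hun]; rfl
  have hva : v * a = x := by
    ext ξ
    have : K.orthogonalProjectionOnto (a ξ) = e ξ :=
      Submodule.orthogonalProjectionOnto_mem_subspace_eq_self (e ξ)
    show u (K.orthogonalProjectionOnto (a ξ)) = x ξ
    rw [this, hu]
  have hKx : ∀ ξ, K.starProjection ξ = 0 ↔ x ξ = 0 := by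
    intro ξ
    rw [Submodule.starProjection_apply_eq_zero_iff, ← norm_eq_zero (a := x ξ), ← hn, norm_eq_zero]
    show ξ ∈ (a.range.topologicalClosure)ᗮ ↔ _
    rw [Submodule.orthogonal_closure, ContinuousLinearMap.orthogonal_range]
    rw [← ContinuousLinearMap.star_eq_adjoint, hasa]; rfl
  have hv0 : ∀ ξ, v ξ = 0 ↔ x ξ = 0 := by
    intro ξ
    rw [← hKx, ← norm_eq_zero, hvn, norm_eq_zero]
  have hPsa : star K.starProjection = K.starProjection :=
    (isStarProjection_starProjection (U := K)).isSelfAdjoint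
  have hPid : K.starProjection * K.starProjection = K.starProjection :=
    (isStarProjection_starProjection (U := K)).isIdempotentElem
  have hvP : v * K.starProjection = v := by
    have : v * (1 - K.starProjection) = 0 := by
      ext ξ
      rw [ap, zap, hv0, ← hKx,
        ← ap, mul_sub, hPid]
      simp
    rw [mul_sub, mul_one, sub_eq_zero] at this
    exact this.symm
  have hdens : ∀ d : H →L[ℂ] H, d * a = 0 → d * K.starProjection = 0 := by
    intro d hd
    refine kill_clos ?_
    rintro _ ⟨ξ, rfl⟩
    exact congrArg (fun z : H →L[ℂ] H => z ξ) hd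
  have hvv : star v * v = K.starProjection := by
    rw [ss_eq hvn, hPsa, hPid]
  refine ⟨v, ?_, ?_, hv0, ?_⟩
  · refine mem_of_comm fun y hy => ?_
    have h1 : (y * v - v * y) * a = 0 := by
      rw [sub_mul, mul_assoc, hva, mul_assoc v, comm_of_mem haM hy, ← mul_assoc, hva,
        comm_of_mem hx hy, sub_self]
    have h2 := hdens _ h1
    have h3 : v * y * (1 - K.starProjection) = 0 := by
      ext ξ
      have hx0 : x ((1 - K.starProjection) ξ) = 0 := by
        rw [← hv0, ← ap, mul_sub, hvP]; simp
      rw [ap, ap,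
        zap, hv0, ← ap,
        ← comm_of_mem hx hy, ap, hx0, map_zero]
    have h4 : y * v * (1 - K.starProjection) = 0 := by
      rw [mul_sub, mul_assoc y v K.starProjection, hvP]; simp
    have : y * v - v * y = (y * v - v * y) * K.starProjection
      + (y * v * (1 - K.starProjection) - v * y * (1 - K.starProjection)) := by noncomm_ring
    rw [h2, h3, h4] at this
    rw [← sub_eq_zero, this]; simp
  · rw [mul_assoc, hvv, hvP]
  · intro y hy
    rw [← hvP, ← mul_assoc]
    exact hdens _ (by rw [mul_assoc, hva, hy])

lemma lim_of_mono {ι : Type*} [Preorder ι] [IsDirectedOrder ι] [Nonempty ι] {f : ι → H}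
    {φ : ι → ℝ} {C : ℝ} (hφ : ∀ i, φ i ≤ C)
    (h : ∀ i j, i ≤ j → ‖f j - f i‖ ^ 2 ≤ φ j - φ i) :
    ∃ y, Tendsto f atTop (𝓝 y) := by
  have hm : Monotone φ := fun i j hij => by
    have := h i j hij
    nlinarith [sq_nonneg ‖f j - f i‖]
  have hb : BddAbove (Set.range φ) := ⟨C, by rintro _ ⟨i, rfl⟩; exact hφ i⟩
  have ht := tendsto_atTop_ciSup hm hb
  set L := ⨆ i, φ i
  have hle : ∀ i, φ i ≤ L := fun i => le_ciSup hb i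
  apply cauchy_map_iff_exists_tendsto.1
  rw [Metric.cauchy_iff]
  refine ⟨inferInstance, fun ε hε => ?_⟩
  have hev : ∀ᶠ i in atTop, L - (ε / 2) ^ 2 < φ i :=
    ht.eventually (lt_mem_nhds (by have : 0 < (ε/2)^2 := by positivity
                                   linarith))
  obtain ⟨i, hi⟩ := hev.exists
  refine ⟨f '' Set.Ici i, image_mem_map (mem_atTop i), ?_⟩
  have key : ∀ j, i ≤ j → ‖f j - f i‖ < ε / 2 := by
    intro j hij
    have h1 := h i j hij
    have h2 := hle j
    exact lt_of_pow_lt_pow_left₀ 2 (by positivity) (by linarith)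
  rintro _ ⟨j, hj, rfl⟩ _ ⟨k, hk, rfl⟩
  have h1 := key j hj
  have h2 := key k hk
  rw [dist_eq_norm, show f j - f k = (f j - f i) - (f k - f i) by abel]
  exact (norm_sub_le _ _).trans_lt (by linarith)

/-- pointwise limits of contractions. -/
lemma clm_of_lim {ι : Type*} {l : Filter ι} [l.NeBot] {f : ι → H →L[ℂ] H}
    (hf : ∀ i ξ, ‖f i ξ‖ ≤ ‖ξ‖) (h : ∀ ξ, ∃ y, Tendsto (fun i => f i ξ) l (𝓝 y)) :
    ∃ x : H →L[ℂ] H, ∀ ξ, Tendsto (fun i => f i ξ) l (𝓝 (x ξ)) := by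
  choose g hg using h
  have hT : Tendsto (fun i ξ => (f i).toLinearMap ξ) l (𝓝 g) := tendsto_pi_nhds.2 hg
  let L : H →ₗ[ℂ] H := linearMapOfTendsto _ (fun i => (f i).toLinearMap) hT
  refine ⟨L.mkContinuous 1 fun ξ => ?_, hg⟩
  rw [one_mul]
  exact le_of_tendsto (hg ξ).norm (Eventually.of_forall fun i => hf i ξ)

/-- partial isometries -/
def PI (v : H →L[ℂ] H) : Prop := v * star v * v = v

lemma PI.idem {v : H →L[ℂ] H} (h : PI v) : (star v * v) * (star v * v) = star v * v := by
  rw [mul_assoc, ← mul_assoc v, h]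

lemma ss_self (v : H →L[ℂ] H) : star (star v * v) = star v * v := by simp

lemma norm_eq_of_proj {v e : H →L[ℂ] H} (h : star v * v = e) (he : e * e = e) (ξ : H) :
    ‖v ξ‖ = ‖e ξ‖ := by
  have hs : star e = e := by rw [← h]; simp
  have : ‖v ξ‖ ^ 2 = ‖e ξ‖ ^ 2 := by rw [norm_sq_eq, norm_sq_eq, h, hs, he]
  exact (pow_left_inj₀ (norm_nonneg _) (norm_nonneg _) two_ne_zero).1 this

lemma proj_pyth {e : H →L[ℂ] H} (hs : star e = e) (he : e * e = e) (ξ : H) :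
    ‖ξ - e ξ‖ ^ 2 = ‖ξ‖ ^ 2 - ‖e ξ‖ ^ 2 := by
  have h1 : ‖ξ‖ ^ 2 = (⟪(1 : H →L[ℂ] H) ξ, ξ⟫_ℂ).re := by
    have := norm_sq_eq (1 : H →L[ℂ] H) ξ
    simpa using this
  have h2 : ‖ξ - e ξ‖ ^ 2 = (⟪(1 - e) ξ, ξ⟫_ℂ).re := by
    have := norm_sq_eq (1 - e : H →L[ℂ] H) ξ
    rw [show star (1 - e) * (1 - e) = 1 - e by
      rw [star_sub, star_one, hs, mul_sub, sub_mul, sub_mul, he]; simp] at this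
    exact this
  have h3 := norm_sq_eq e ξ
  rw [hs, he] at h3
  rw [h1, h2, h3]
  simp

lemma proj_norm_le {e : H →L[ℂ] H} (hs : star e = e) (he : e * e = e) (ξ : H) :
    ‖e ξ‖ ≤ ‖ξ‖ := by
  have := proj_pyth hs he ξ
  exact le_of_sq_le_sq (by nlinarith [sq_nonneg ‖ξ - e ξ‖]) (norm_nonneg _)

lemma star_mul_self_zero {x : H →L[ℂ] H} (h : star x * x = 0) : x = 0 :=
  (CStarRing.star_mul_self_eq_zero_iff x).1 h

lemma fe_of_efe {e f : H →L[ℂ] H} (he : star e = e) (hei : e * e = e) (hf : star f = f)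
    (hfi : f * f = f) (h : e * f * e = e) : f * e = e := by
  rw [← sub_eq_zero]
  apply star_mul_self_zero
  have : star (f * e - e) * (f * e - e) = e * (f * f) * e - e * f * e - e * f * e + e * e := by
    rw [star_sub, star_mul, he, hf]; noncomm_ring
  rw [this, hfi, h, hei]; abel

/-- extension order on partial isometries: the initial projections are ordered -/
lemma init_proj_le {v w : H →L[ℂ] H} (hv : PI v) (hw : PI w) (h : w * (star v * v) = v) :
    star w * w * (star v * v) = star v * v := by
  refine fe_of_efe (ss_self v) hv.idem (ss_self w) hw.idem ?_
  have h4 : star (w * (star v * v)) * (w * (star v * v)) = star v * v := by rw [h]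
  rw [star_mul, ss_self] at h4
  simpa only [mul_assoc] using h4

lemma PI.norm_le {v : H →L[ℂ] H} (h : PI v) (ξ : H) : ‖v ξ‖ ≤ ‖ξ‖ := by
  rw [norm_eq_of_proj rfl h.idem]
  exact proj_norm_le (ss_self v) h.idem ξ

lemma PI.ss {v : H →L[ℂ] H} (h : PI v) : PI (star v * v) := by
  rw [PI, ss_self, h.idem, h.idem]

lemma PI.star {v : H →L[ℂ] H} (h : PI v) : PI (star v) := by
  have := congrArg Star.star h
  rw [star_mul, star_mul] at this
  rw [PI, mul_assoc]; exact this

lemma PI_of_ss {v : H →L[ℂ] H} (h : (Star.star v * v) * (Star.star v * v) = Star.star v * v) :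
    PI v := by
  rw [PI, ← sub_eq_zero]
  apply star_mul_self_zero
  rw [star_sub, star_mul, star_mul, star_star]
  have : (star v * (v * star v) - star v) * (v * star v * v - v)
    = (star v * v) * (star v * v) * (star v * v) - (star v * v) * (star v * v)
      - (star v * v) * (star v * v) + star v * v := by noncomm_ring
  rw [this, h, h]; abel

lemma pi_lim0 {ι : Type*} [Preorder ι] [IsDirectedOrder ι] [Nonempty ι] {v : ι → H →L[ℂ] H}
    (hv : ∀ i, PI (v i)) (h : ∀ i j, i ≤ j → v j * (star (v i) * v i) = v i) :
    ∃ V : H →L[ℂ] H, ∀ ξ, Tendsto (fun i => v i ξ) atTop (𝓝 (V ξ)) := by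
  refine clm_of_lim (fun i ξ => (hv i).norm_le ξ) fun ξ => ?_
  refine lim_of_mono (φ := fun i => ‖v i ξ‖ ^ 2) (C := ‖ξ‖ ^ 2) (fun i => ?_) ?_
  · have := (hv i).norm_le ξ
    gcongr
  · intro i j hij
    set e := star (v i) * v i with he
    set f := star (v j) * v j with hf
    have h1 : v j ξ - v i ξ = v j (ξ - e ξ) := by
      rw [map_sub, ← ap, h i j hij]
    have hfe : f * e = e := init_proj_le (hv i) (hv j) (h i j hij)
    have hef : e * f = e := by
      have := congrArg star hfe
      rwa [star_mul, ss_self, ss_self] at this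
    rw [h1, norm_eq_of_proj rfl (hv j).idem, norm_eq_of_proj (v := v j) rfl (hv j).idem,
      norm_eq_of_proj (v := v i) rfl (hv i).idem, map_sub, ← ap, ← hf, ← he, hfe]
    have := proj_pyth (ss_self (v i)) (hv i).idem (f ξ)
    rw [← ap, ← he, hef] at this
    exact this.le

lemma pi_lim {M : VonNeumannAlgebra H} {ι : Type*} [Preorder ι] [IsDirectedOrder ι] [Nonempty ι]
    {v : ι → H →L[ℂ] H} (hM : ∀ i, v i ∈ M)
    (hv : ∀ i, PI (v i)) (h : ∀ i j, i ≤ j → v j * (star (v i) * v i) = v i) :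
    ∃ V ∈ M, PI V ∧ (∀ i, V * (star (v i) * v i) = v i) ∧
      (∀ ξ, Tendsto (fun i => v i ξ) atTop (𝓝 (V ξ))) ∧
      (∀ ξ, Tendsto (fun i => (star (v i) * v i) ξ) atTop (𝓝 ((star V * V) ξ))) := by
  obtain ⟨V, hV⟩ := pi_lim0 hv h
  obtain ⟨F, hF⟩ := pi_lim0 (v := fun i => star (v i) * v i) (fun i => (hv i).ss) (by
    intro i j hij
    show _ * (star (star (v i) * v i) * _) = _
    rw [ss_self, (hv i).idem]
    exact init_proj_le (hv i) (hv j) (h i j hij))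
  have hVF : star V * V = F := by
    ext ξ
    refine ext_inner_right ℂ fun η => ?_
    rw [ap, inner_star]
    have h1 : Tendsto (fun i => ⟪v i ξ, v i η⟫_ℂ) atTop (𝓝 ⟪V ξ, V η⟫_ℂ) := (hV ξ).inner (hV η)
    have h2 : Tendsto (fun i => ⟪(star (v i) * v i) ξ, η⟫_ℂ) atTop (𝓝 ⟪F ξ, η⟫_ℂ) :=
      (hF ξ).inner tendsto_const_nhds
    refine tendsto_nhds_unique h1 (h2.congr fun i => ?_)
    rw [ap, inner_star]
  have hext : ∀ i, V * (star (v i) * v i) = v i := by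
    intro i
    ext ξ
    refine tendsto_nhds_unique (hV ((star (v i) * v i) ξ)) ?_
    refine tendsto_const_nhds.congr' ?_
    filter_upwards [eventually_ge_atTop i] with j hj
    rw [← ap (v j), h i j hj]
  refine ⟨V, mem_of_tendsto hM hV, ?_, hext, hV, by rw [hVF]; exact hF⟩
  rw [PI, mul_assoc, hVF]
  ext ξ
  have h1 : Tendsto (fun i => V ((star (v i) * v i) ξ)) atTop (𝓝 (V (F ξ))) :=
    (V.continuous.tendsto _).comp (hF ξ)
  refine tendsto_nhds_unique h1 ((hV ξ).congr fun i => ?_)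
  rw [← ap V, hext]

lemma left_of_tendsto {ι : Type*} {l : Filter ι} [l.NeBot] {f : ι → H →L[ℂ] H}
    {V a b : H →L[ℂ] H} (hV : ∀ ξ, Tendsto (fun i => f i ξ) l (𝓝 (V ξ)))
    (h : ∀ i, a * f i = b * f i) : a * V = b * V := by
  ext ξ
  have h1 : Tendsto (fun i => a (f i ξ)) l (𝓝 (a (V ξ))) := (a.continuous.tendsto _).comp (hV ξ)
  have h2 : Tendsto (fun i => b (f i ξ)) l (𝓝 (b (V ξ))) := (b.continuous.tendsto _).comp (hV ξ)
  refine tendsto_nhds_unique h1 (h2.congr fun i => ?_)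
  rw [← ap, ← ap, h]

lemma right_of_tendsto {ι : Type*} {l : Filter ι} [l.NeBot] {f : ι → H →L[ℂ] H}
    {V a : H →L[ℂ] H} (hV : ∀ ξ, Tendsto (fun i => f i ξ) l (𝓝 (V ξ)))
    (h : ∀ i, f i * a = f i) : V * a = V := by
  ext ξ
  refine tendsto_nhds_unique (hV (a ξ)) ((hV ξ).congr fun i => ?_)
  rw [← ap, h]

structure Wrap (α : Type*) where
  val : α

lemma pi_lim_total {M : VonNeumannAlgebra H} {ι : Type*} [Nonempty ι] {v : ι → H →L[ℂ] H}
    (r : ι → ι → Prop) (hrefl : ∀ a, r a a) (htr : ∀ a b c, r a b → r b c → r a c)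
    (htot : ∀ a b, r a b ∨ r b a) (hM : ∀ i, v i ∈ M)
    (hv : ∀ i, PI (v i)) (h : ∀ i j, r i j → v j * (star (v i) * v i) = v i) :
    ∃ V ∈ M, PI V ∧ (∀ i, V * (star (v i) * v i) = v i) ∧
      ∃ l : Filter ι, l.NeBot ∧ (∀ ξ, Tendsto (fun i => v i ξ) l (𝓝 (V ξ))) := by
  let _i : Preorder (Wrap ι) :=
      { le := fun a b => r a.1 b.1
        lt := fun a b => r a.1 b.1 ∧ ¬ r b.1 a.1
        lt_iff_le_not_ge := fun _ _ => Iff.rfl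
        le_refl := fun a => hrefl a.1
        le_trans := fun a b c => htr a.1 b.1 c.1 }
  have : Nonempty (Wrap ι) := ⟨⟨Classical.arbitrary ι⟩⟩
  have : IsDirectedOrder (Wrap ι) := ⟨fun a b => by
      rcases htot a.1 b.1 with h | h
      · exact ⟨b, h, hrefl _⟩
      · exact ⟨a, hrefl _, h⟩⟩
  obtain ⟨V, hVM, hVPI, hVe, hVt, -⟩ := pi_lim (M := M) (ι := Wrap ι) (v := fun a => v a.1)
      (fun a => hM a.1) (fun a => hv a.1) (fun a b hab => h _ _ hab)
  refine ⟨V, hVM, hVPI, fun i => hVe ⟨i⟩, map Wrap.val atTop, inferInstance, fun ξ => ?_⟩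
  rw [tendsto_map'_iff]
  exact hVt ξ

/-- Zorn: maximal partial isometries extending a given one. -/
lemma exists_max {M : VonNeumannAlgebra H} {p q v : H →L[ℂ] H} (hpM : p ∈ M) (hqM : q ∈ M)
    (hp : star p = p) (hpi : p * p = p) (hq : star q = q) (hqi : q * q = q)
    (hvM : v ∈ M) (hv : PI v) (hqv : q * v = v) (hvp : v * p = v) :
    ∃ V ∈ M, PI V ∧ q * V = V ∧ V * p = V ∧ V * (star v * v) = v ∧
      ∀ y ∈ M, (q - V * star V) * y * (p - star V * V) = 0 := by
  let S := {w : H →L[ℂ] H // w ∈ M ∧ PI w ∧ q * w = w ∧ w * p = w ∧ w * (star v * v) = v}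
  let r : S → S → Prop := fun a b => b.1 * (star a.1 * a.1) = a.1
  have htr : ∀ {a b c : S}, r a b → r b c → r a c := by
    intro a b c hab hbc
    have h1 : star b.1 * b.1 * (star a.1 * a.1) = star a.1 * a.1 :=
      init_proj_le a.2.2.1 b.2.2.1 hab
    show c.1 * (star a.1 * a.1) = a.1
    rw [← h1, ← mul_assoc, show c.1 * (star b.1 * b.1) = b.1 from hbc]
    exact hab
  have hrefl : ∀ a : S, r a a := fun a => by
    show a.1 * (star a.1 * a.1) = a.1
    rw [← mul_assoc]; exact a.2.2.1
  have : Nonempty S := ⟨⟨v, hvM, hv, hqv, hvp, by rw [← mul_assoc]; exact hv⟩⟩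
  obtain ⟨m, hm⟩ := exists_maximal_of_nonempty_chains_bounded (r := r) (by
    intro c hc hne
    have hne' : Nonempty c := hne.to_subtype
    have : Std.Refl r := ⟨hrefl⟩
    obtain ⟨V, hVM, hVPI, hVe, l, hl, hVt⟩ := pi_lim_total (M := M) (ι := c)
      (v := fun a => a.1.1) (fun a b => r a.1 b.1) (fun a => hrefl a.1) (fun a b c => htr)
      (fun a b => hc.total a.2 b.2)
      (fun a => a.1.2.1) (fun a => a.1.2.2.1) (fun a b hab => hab)
    refine ⟨⟨V, hVM, hVPI, ?_, ?_, ?_⟩, fun a ha => hVe ⟨a, ha⟩⟩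
    · have := left_of_tendsto (a := q) (b := 1) hVt (fun a => by rw [one_mul]; exact a.1.2.2.2.1)
      rwa [one_mul] at this
    · exact right_of_tendsto hVt fun a => a.1.2.2.2.2.1
    · obtain ⟨a, ha⟩ := hne
      have h1 : V * (star a.1 * a.1) = a.1 := hVe ⟨a, ha⟩
      have h2 := init_proj_le hv a.2.2.1 a.2.2.2.2.2
      rw [← h2, ← mul_assoc, h1]; exact a.2.2.2.2.2) htr
  obtain ⟨V, hVM, hVPI, hqV, hVp, hVv⟩ := m
  refine ⟨V, hVM, hVPI, hqV, hVp, hVv, fun y hy => ?_⟩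
  set x := (q - V * star V) * y * (p - star V * V) with hx
  have hVsM := star_mem hVM
  have hxM : x ∈ M := mul_mem (mul_mem (sub_mem hqM (mul_mem hVM hVsM)) hy)
    (sub_mem hpM (mul_mem hVsM hVM))
  obtain ⟨w, hwM, hwPI, hw0, hwl⟩ := polar hxM
  -- relations for `x`
  have hVqs : star V * q = star V := by
    have := congrArg star hqV; rwa [star_mul, hq] at this
  have hpVs : p * star V = star V := by
    have := congrArg star hVp; rwa [star_mul, hp] at this
  have hVVV : V * (star V * V) = V := by rw [← mul_assoc]; exact hVPI
  have hVVs : star V * (V * star V) = star V := by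
    have := congrArg star hVPI
    rwa [star_mul, star_mul, star_star] at this
  have g1 : star V * (q - V * star V) = 0 := by rw [mul_sub, hVqs, hVVs, sub_self]
  have g2 : (1 - q) * (q - V * star V) = 0 := by
    rw [sub_mul, one_mul, mul_sub, hqi, ← mul_assoc, hqV, sub_self]
  have g3 : (p - star V * V) * star V = 0 := by rw [sub_mul, hpVs, mul_assoc, hVVs, sub_self]
  have g4 : (p - star V * V) * (1 - p) = 0 := by
    rw [mul_sub, mul_one, sub_mul, hpi, mul_assoc, hVp, sub_self]
  have e1 : star V * x = 0 := by
    rw [hx, ← mul_assoc, ← mul_assoc, g1, zero_mul, zero_mul]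
  have e2 : (1 - q) * x = 0 := by
    rw [hx, ← mul_assoc, ← mul_assoc, g2, zero_mul, zero_mul]
  have e3 : x * star V = 0 := by
    rw [hx, mul_assoc, g3, mul_zero]
  have e4 : x * (1 - p) = 0 := by
    rw [hx, mul_assoc, g4, mul_zero]
  have hwr : ∀ a : H →L[ℂ] H, x * a = 0 → w * a = 0 := by
    intro a ha
    ext ξ
    rw [ap, zap, hw0, ← ap, ha, zap]
  have f1 := hwl _ e1
  have f2 := hwl _ e2
  have f3 := hwr _ e3
  have f4 := hwr _ e4
  have f3' : V * star w = 0 := by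
    have := congrArg star f3; rwa [star_mul, star_star, star_zero] at this
  have f1' : star w * V = 0 := by
    have := congrArg star f1; rwa [star_mul, star_star, star_zero] at this
  rw [sub_mul, one_mul, sub_eq_zero] at f2
  rw [mul_sub, mul_one, sub_eq_zero] at f4
  have hss : star (V + w) * (V + w) = star V * V + star w * w := by
    rw [star_add, add_mul, mul_add, mul_add, f1, f1']; simp
  have hnew : PI (V + w) := by
    rw [PI, mul_assoc, hss, add_mul, mul_add, mul_add, hVVV, ← mul_assoc V (star w), f3',
      ← mul_assoc w (star V), f3, ← mul_assoc w, hwPI]; simp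
  have hwv : w * (star v * v) = 0 := by
    have h2 := init_proj_le hv hVPI hVv
    rw [← h2, mul_assoc (star V) V, ← mul_assoc w (star V), f3, zero_mul]
  have hmax := hm ⟨V + w, add_mem hVM hwM, hnew, by rw [mul_add, hqV, ← f2], by
    rw [add_mul, hVp, ← f4], by rw [add_mul, hVv, hwv, add_zero]⟩ (by
      show (V + w) * (star V * V) = V
      rw [add_mul, hVVV, ← mul_assoc, f3]; simp)
  have hmax' : V * (star (V + w) * (V + w)) = V + w := hmax
  rw [hss, mul_add, hVVV, ← mul_assoc, f3'] at hmax'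
  have hw : w = 0 := by
    simpa using hmax'
  ext ξ
  rw [zap, ← hw0, hw, zap]

/-- finiteness in algebraic form -/
def FIN (M : VonNeumannAlgebra H) : Prop := ∀ v ∈ M, star v * v = 1 → v * star v = 1

lemma fin_of {M : VonNeumannAlgebra H} (hfin : FiniteProj M (1 : H →L[ℂ] H)) : FIN M := by
  intro v hv h
  refine hfin (v * star v) ⟨mul_mem hv (star_mem hv), ?_, ?_⟩ ⟨by simp, by simp⟩ ⟨v, hv, ?_, ?_⟩
  · exact IsSelfAdjoint.mul_star_self v
  · rw [mul_assoc, ← mul_assoc (star v), h, one_mul]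
  · rw [← ContinuousLinearMap.star_eq_adjoint]; exact h
  · rw [← ContinuousLinearMap.star_eq_adjoint]

/-- projections of `M` -/
structure PJ (M : VonNeumannAlgebra H) (p : H →L[ℂ] H) : Prop where
  mem : p ∈ M
  sa : star p = p
  idem : p * p = p

lemma PJ.one (M : VonNeumannAlgebra H) : PJ M 1 := ⟨one_mem _, star_one _, one_mul _⟩

lemma PJ.compl {M : VonNeumannAlgebra H} {p : H →L[ℂ] H} (h : PJ M p) : PJ M (1 - p) :=
  ⟨sub_mem (one_mem _) h.mem, by rw [star_sub, star_one, h.sa], by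
    rw [sub_mul, one_mul, mul_sub, mul_one, h.idem, sub_self, sub_zero]⟩

lemma PJ.pi {M : VonNeumannAlgebra H} {p : H →L[ℂ] H} (h : PJ M p) : PI p := by
  rw [PI, h.sa, h.idem, h.idem]

lemma PJ.ss {M : VonNeumannAlgebra H} {v : H →L[ℂ] H} (hv : v ∈ M) (h : PI v) :
    PJ M (star v * v) := ⟨mul_mem (star_mem hv) hv, ss_self v, h.idem⟩

lemma PJ.ss' {M : VonNeumannAlgebra H} {v : H →L[ℂ] H} (hv : v ∈ M) (h : PI v) :
    PJ M (v * star v) := by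
  have := PJ.ss (star_mem hv) h.star
  rwa [star_star] at this

lemma PI.mul_ss {v : H →L[ℂ] H} (h : PI v) : v * (Star.star v * v) = v := by
  rw [← mul_assoc]; exact h

lemma PI.star_mul_ss {v : H →L[ℂ] H} (h : PI v) : Star.star v * v * Star.star v = Star.star v := by
  have := h.star
  rwa [PI, star_star] at this

lemma PJ.sub {M : VonNeumannAlgebra H} {p q : H →L[ℂ] H} (hp : PJ M p) (hq : PJ M q)
    (h : p * q = q) : PJ M (p - q) := by
  have h' : q * p = q := by
    have := congrArg star h
    rwa [star_mul, hp.sa, hq.sa] at this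
  refine ⟨sub_mem hp.mem hq.mem, by rw [star_sub, hp.sa, hq.sa], ?_⟩
  rw [sub_mul, mul_sub, mul_sub, hp.idem, hq.idem, h, h', sub_self, sub_zero]

lemma PJ.add {M : VonNeumannAlgebra H} {p q : H →L[ℂ] H} (hp : PJ M p) (hq : PJ M q)
    (h : p * q = 0) : PJ M (p + q) := by
  have h' : q * p = 0 := by
    have := congrArg star h
    rwa [star_mul, hp.sa, hq.sa, star_zero] at this
  refine ⟨add_mem hp.mem hq.mem, by rw [star_add, hp.sa, hq.sa], ?_⟩
  rw [add_mul, mul_add, mul_add, hp.idem, hq.idem, h, h', add_zero, zero_add]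

lemma PJ.mul {M : VonNeumannAlgebra H} {p q : H →L[ℂ] H} (hp : PJ M p) (hq : PJ M q)
    (h : p * q = q * p) : PJ M (p * q) := by
  refine ⟨mul_mem hp.mem hq.mem, by rw [star_mul, hp.sa, hq.sa, h], ?_⟩
  rw [mul_assoc, ← mul_assoc q, ← h, mul_assoc p q q, hq.idem, ← mul_assoc, hp.idem]

lemma starProj_PJ {M : VonNeumannAlgebra H} (K : Submodule ℂ H) [K.HasOrthogonalProjection]
    (h : ∀ y ∈ M.commutant, ∀ ξ ∈ K, y ξ ∈ K) : PJ M K.starProjection :=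
  ⟨proj_mem K h, (isStarProjection_starProjection (U := K)).isSelfAdjoint,
    (isStarProjection_starProjection (U := K)).isIdempotentElem⟩

/-- Step 2: central support. -/
lemma central {M : VonNeumannAlgebra H} {a b : H →L[ℂ] H} (ha : a ∈ M)
    (hb : ∀ y ∈ M, b * y * a = 0) :
    ∃ z, PJ M z ∧ (∀ x ∈ M, z * x = x * z) ∧ z * a = a ∧ b * z = 0 := by
  let K : Submodule ℂ H := Submodule.span ℂ {η | ∃ y ∈ M, ∃ ξ, η = y (a ξ)}
  have hinv : ∀ y ∈ M, ∀ ξ ∈ K, y ξ ∈ K := by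
    intro y hy ξ hξ
    induction hξ using Submodule.span_induction with
    | mem x hx =>
      obtain ⟨w, hw, ζ, rfl⟩ := hx
      exact Submodule.subset_span ⟨y * w, mul_mem hy hw, ζ, rfl⟩
    | zero => rw [map_zero]; exact zero_mem _
    | add x w _ _ h1 h2 => rw [map_add]; exact add_mem h1 h2
    | smul c x _ h1 => rw [map_smul]; exact Submodule.smul_mem _ _ h1
  have hinv' : ∀ y ∈ M.commutant, ∀ ξ ∈ K, y ξ ∈ K := by
    intro y hy ξ hξ
    induction hξ using Submodule.span_induction with
    | mem x hx =>
      obtain ⟨w, hw, ζ, rfl⟩ := hx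
      refine Submodule.subset_span ⟨w, hw, y ζ, ?_⟩
      have h1 := DFunLike.congr_fun (comm_of_mem (mul_mem hw ha) hy) ζ
      exact h1
    | zero => rw [map_zero]; exact zero_mem _
    | add x w _ _ h1 h2 => rw [map_add]; exact add_mem h1 h2
    | smul c x _ h1 => rw [map_smul]; exact Submodule.smul_mem _ _ h1
  have : CompleteSpace K.topologicalClosure := K.isClosed_topologicalClosure.completeSpace_coe
  refine ⟨K.topologicalClosure.starProjection, ?_, ?_, ?_, ?_⟩
  · exact starProj_PJ _ fun y hy => clos_inv (hinv' y hy)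
  · intro x hx
    have h1 : K.topologicalClosure.starProjection ∈ M.commutant := by
      refine proj_mem _ fun y hy => clos_inv (hinv y ?_)
      rwa [VonNeumannAlgebra.commutant_commutant] at hy
    exact comm_of_mem hx h1
  · ext ξ
    rw [ap]
    refine Submodule.starProjection_eq_self_iff.2 (K.le_topologicalClosure ?_)
    exact Submodule.subset_span ⟨1, one_mem _, ξ, rfl⟩
  · refine kill_clos fun ξ hξ => ?_
    induction hξ using Submodule.span_induction with
    | mem x hx =>
      obtain ⟨w, hw, ζ, rfl⟩ := hx
      exact DFunLike.congr_fun (hb w hw) ζ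
    | zero => rw [map_zero]
    | add x w _ _ h1 h2 => rw [map_add, h1, h2, add_zero]
    | smul c x _ h1 => rw [map_smul, h1, smul_zero]

/-- Step 3: extension to unitaries. -/
lemma unitary_ext {M : VonNeumannAlgebra H} (hF : FIN M) {v : H →L[ℂ] H} (hvM : v ∈ M)
    (hv : PI v) : ∃ u ∈ M, star u * u = 1 ∧ u * star u = 1 ∧ u * (star v * v) = v := by
  obtain ⟨V, hVM, hV, -, -, hVv, hmax⟩ := exists_max (M := M) (p := 1) (q := 1)
    (one_mem _) (one_mem _) (star_one _) (one_mul _) (star_one _) (one_mul _) hvM hv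
    (one_mul _) (mul_one _)
  have hVsM := star_mem hVM
  obtain ⟨z, hz, hzc, hza, hbz⟩ := central (M := M) (a := 1 - star V * V) (b := 1 - V * star V)
    (sub_mem (one_mem _) (mul_mem hVsM hVM)) hmax
  have h1 : V * star V * z = z := by
    rw [sub_mul, one_mul, sub_eq_zero] at hbz; exact hbz.symm
  have hzVs := hzc _ hVsM
  have hzV := hzc _ hVM
  have hW : star (z * star V + (1 - z)) = V * z + (1 - z) := by
    rw [star_add, star_mul, star_star, hz.sa, star_sub, star_one, hz.sa]
  have hWM : z * star V + (1 - z) ∈ M := add_mem (mul_mem hz.mem hVsM) hz.compl.mem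
  have c1 : z * (1 - z) = 0 := by rw [mul_sub, mul_one, hz.idem, sub_self]
  have c2 : (1 - z) * z = 0 := by rw [sub_mul, one_mul, hz.idem, sub_self]
  have c3 : (1 - z) * V * z = 0 := by rw [mul_assoc, ← hzV, ← mul_assoc, c2, zero_mul]
  have hiso := hF _ hWM (by
    rw [hW, add_mul, mul_add, mul_add, hz.compl.idem, ← mul_assoc (1 - z), c2, zero_mul,
      mul_assoc V z (1 - z), c1, mul_zero, mul_assoc V, ← mul_assoc z, hz.idem, hzVs, ← mul_assoc, h1]
    abel)
  rw [hW, add_mul, mul_add, mul_add, hz.compl.idem, mul_assoc z (star V) (1 - z),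
    mul_sub (star V), mul_one, ← hzVs, mul_sub z, ← mul_assoc z z, hz.idem, sub_self,
    ← mul_assoc (1 - z), c3, mul_assoc z, ← mul_assoc (star V), ← hzc _ (mul_mem hVsM hVM),
    ← mul_assoc z z, hz.idem, add_zero, zero_add] at hiso
  have hza0 : 1 - star V * V = 0 := by
    rw [← hza, mul_sub, mul_one, sub_eq_zero]
    have := hiso
    rw [← sub_eq_zero] at this ⊢
    rw [← neg_eq_zero, ← this]; abel
  rw [sub_eq_zero] at hza0
  exact ⟨V, hVM, hza0.symm, hF V hVM hza0.symm, hVv⟩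

/-- Step 4. -/
lemma ext_lem {M : VonNeumannAlgebra H} (hF : FIN M) {r P P' v w : H →L[ℂ] H} (hr : PJ M r)
    (hP : PJ M P) (hP' : PJ M P') (hPP : P' * P = P) (hvM : v ∈ M) (hwM : w ∈ M)
    (hv : star v * v = P) (hw : star w * w = P') (hrv : r * v = v) (hrw : r * w = w) :
    ∃ v' ∈ M, star v' * v' = P' ∧ r * v' = v' ∧ v' * P = v := by
  have hvPI : PI v := PI_of_ss (by rw [hv, hP.idem])
  have hwPI : PI w := PI_of_ss (by rw [hw, hP'.idem])
  have hvP : v * P = v := by rw [← hv]; exact hvPI.mul_ss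
  have hPP' : P * P' = P := by
    have := congrArg star hPP; rwa [star_mul, hP.sa, hP'.sa] at this
  have hPv : P * star v = star v := by
    have := congrArg star hvP; rwa [star_mul, hP.sa] at this
  have hrv' : star v * r = star v := by
    have := congrArg star hrv; rwa [star_mul, hr.sa] at this
  have hrw' : star w * r = star w := by
    have := congrArg star hrw; rwa [star_mul, hr.sa] at this
  set s := v * star w with hs
  have hss : star s * s = w * P * star w := by
    rw [hs, star_mul, star_star, mul_assoc, ← mul_assoc (star v), hv, mul_assoc]
  have hrs : r * s = s := by rw [hs, ← mul_assoc, hrv]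
  have hsr : s * r = s := by rw [hs, mul_assoc, hrw']
  have hrs' : star s * r = star s := by
    have := congrArg star hrs; rwa [star_mul, hr.sa] at this
  have hsr' : r * star s = star s := by
    have := congrArg star hsr; rwa [star_mul, hr.sa] at this
  have hsM : s ∈ M := mul_mem hvM (star_mem hwM)
  have hxx : star (s + (1 - r)) * (s + (1 - r)) = star s * s + (1 - r) := by
    rw [star_add, hr.compl.sa, add_mul, mul_add, mul_add, hr.compl.idem, mul_sub, mul_one, hrs',
      sub_mul, one_mul, hrs]; abel
  have hsw : s * w * P = v := by
    rw [hs, mul_assoc v, hw, mul_assoc, hPP, hvP]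
  have hssw : star s * s * (w * P) = w * P := by
    rw [hss, mul_assoc (w * P), ← mul_assoc (star w), hw, hPP, mul_assoc, hP.idem]
  have hssi : star s * s * (star s * s) = star s * s := by
    nth_rewrite 2 [hss]
    rw [← mul_assoc, hssw, ← hss]
  have hPI : PI (s + (1 - r)) := by
    apply PI_of_ss
    rw [hxx, add_mul, mul_add, mul_add, hssi, hr.compl.idem, mul_sub (star s * s), mul_one,
      mul_assoc (star s) s r, hsr, sub_self, sub_mul 1 r (star s * s), one_mul, ← mul_assoc r, hsr',
      sub_self, add_zero, zero_add]
  obtain ⟨u, huM, hu1, hu2, hue⟩ := unitary_ext hF (add_mem hsM hr.compl.mem) hPI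
  rw [hxx] at hue
  have hus : u * (star s * s) = s := by
    have := congrArg (· * r) hue
    simp only [add_mul, mul_assoc, mul_add, hsr] at this
    rw [show (1 - r) * r = 0 by rw [sub_mul, one_mul, hr.idem, sub_self]] at this
    simpa using this
  have hur : u * (1 - r) = 1 - r := by
    rw [mul_add, hus] at hue
    exact add_left_cancel hue
  have hur' : (1 - r) * u = 1 - r := by
    have h1 : star u * (1 - r) = 1 - r := by
      nth_rewrite 1 [← hur]; rw [← mul_assoc, hu1, one_mul]
    have := congrArg star h1
    rwa [star_mul, star_star, hr.compl.sa] at this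
  refine ⟨u * w, mul_mem huM hwM, ?_, ?_, ?_⟩
  · rw [star_mul, mul_assoc, ← mul_assoc (star u), hu1, one_mul, hw]
  · have : (1 - r) * (u * w) = 0 := by
      rw [← mul_assoc, hur', sub_mul, one_mul, hrw, sub_self]
    rw [sub_mul, one_mul, sub_eq_zero] at this
    exact this.symm
  · rw [mul_assoc, ← hssw, ← mul_assoc, hus, ← mul_assoc, hsw]

lemma seq_ext {v : ℕ → H →L[ℂ] H} (hv : ∀ k, PI (v k))
    (h : ∀ k, v (k + 1) * (star (v k) * v k) = v k) :
    ∀ i j, i ≤ j → v j * (star (v i) * v i) = v i := by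
  intro i j hij
  induction j, hij using Nat.le_induction with
  | base => exact (hv i).mul_ss
  | succ j hij ih =>
    have h1 := init_proj_le (hv i) (hv j) ih
    rw [← h1, ← mul_assoc, h j, ih]

/-- `p` is equivalent to a subprojection of `r`. -/
def Sb (M : VonNeumannAlgebra H) (p r : H →L[ℂ] H) : Prop :=
  ∃ v ∈ M, star v * v = p ∧ r * v = v

lemma Sb.pi {M : VonNeumannAlgebra H} {p v : H →L[ℂ] H} (hp : PJ M p) (h : star v * v = p) :
    PI v := PI_of_ss (by rw [h, hp.idem])

/-- Step 5. -/
lemma mono {M : VonNeumannAlgebra H} (hF : FIN M) {r : H →L[ℂ] H} (hr : PJ M r)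
    {P : ℕ → H →L[ℂ] H} (hP : ∀ k, PJ M (P k)) (hPP : ∀ k, P (k + 1) * P k = P k)
    (hs : ∀ k, Sb M (P k) r) :
    ∃ v ∈ M, PI v ∧ r * v = v ∧ ∀ k, star v * v * P k = P k := by
  let X : ℕ → Type _ := fun k => {v : H →L[ℂ] H // v ∈ M ∧ star v * v = P k ∧ r * v = v}
  have hnext : ∀ k (x : X k), ∃ y : X (k + 1), y.1 * P k = x.1 := by
    intro k x
    obtain ⟨w, hwM, hw, hrw⟩ := hs (k + 1)
    obtain ⟨v', h1, h2, h3, h4⟩ := ext_lem hF hr (hP k) (hP (k + 1)) (hPP k) x.2.1 hwM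
      x.2.2.1 hw x.2.2.2 hrw
    exact ⟨⟨v', h1, h2, h3⟩, h4⟩
  choose nx hnx using hnext
  obtain ⟨w0, hw0⟩ := hs 0
  let v : (k : ℕ) → X k := fun k => Nat.rec (motive := X) ⟨w0, hw0⟩ nx k
  have hvs : ∀ k, (v (k + 1)).1 * P k = (v k).1 := fun k => hnx k (v k)
  have hvPI : ∀ k, PI (v k).1 := fun k => Sb.pi (hP k) (v k).2.2.1
  have hord := seq_ext hvPI (fun k => by rw [(v k).2.2.1]; exact hvs k)
  obtain ⟨V, hVM, hV, hVe, hVt, -⟩ := pi_lim (M := M) (fun k => (v k).2.1) hvPI hord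
  refine ⟨V, hVM, hV, ?_, fun k => ?_⟩
  · have := left_of_tendsto (a := r) (b := 1) hVt (fun a => by rw [one_mul]; exact (v a).2.2.2)
    rwa [one_mul] at this
  · have := init_proj_le (hvPI k) hV (hVe k)
    rwa [(v k).2.2.1] at this

lemma eq_of_ker {M : VonNeumannAlgebra H} {e f : H →L[ℂ] H} (he : PJ M e) (hf : PJ M f)
    (h : ∀ ξ, e ξ = 0 ↔ f ξ = 0) : e = f := by
  have key : ∀ {e f : H →L[ℂ] H}, PJ M f → (∀ ξ, f ξ = 0 → e ξ = 0) → e * f = e := by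
    intro e f hf h
    have : e * (1 - f) = 0 := by
      ext ξ
      rw [ap, zap]
      apply h
      rw [← ap, mul_sub, mul_one, hf.idem, sub_self, zap]
    rw [mul_sub, mul_one, sub_eq_zero] at this
    exact this.symm
  have h1 := key hf (fun ξ => (h ξ).2)
  have h2 := key he (fun ξ => (h ξ).1)
  have h3 := congrArg star h1
  rw [star_mul, he.sa, hf.sa, h2] at h3
  exact h3.symm

/-- Step 6. -/
lemma close {M : VonNeumannAlgebra H} {q r : H →L[ℂ] H} (hq : PJ M q) (hr : PJ M r)
    (h : ∀ ξ, ‖(1 - r) (q ξ)‖ ^ 2 ≤ 1 / 2 * ‖q ξ‖ ^ 2) : Sb M q r := by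
  obtain ⟨v, hvM, hv, hv0, hvl⟩ := polar (mul_mem hr.mem hq.mem)
  have hvPI : PI v := hv
  refine ⟨v, hvM, ?_, ?_⟩
  · refine eq_of_ker (M := M) (PJ.ss hvM hvPI) hq fun ξ => ?_
    have h1 : (star v * v) ξ = 0 ↔ v ξ = 0 := by
      rw [← norm_eq_zero, ← norm_eq_of_proj (v := v) rfl hvPI.idem, norm_eq_zero]
    rw [h1, hv0, ap]
    constructor
    · intro h2
      have h3 := h ξ
      have h4 : (1 - r) (q ξ) = q ξ - r (q ξ) := rfl
      rw [h4, h2, sub_zero] at h3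
      have : ‖q ξ‖ ^ 2 = 0 := by nlinarith [sq_nonneg ‖q ξ‖]
      simpa using this
    · intro h2; rw [h2, map_zero]
  · have := hvl (1 - r) (by rw [← mul_assoc, sub_mul, one_mul, hr.idem, sub_self, zero_mul])
    rw [sub_mul, one_mul, sub_eq_zero] at this
    exact this.symm

lemma re_mono {A B : H →L[ℂ] H} (h : A ≤ B) (ξ : H) : (⟪A ξ, ξ⟫_ℂ).re ≤ (⟪B ξ, ξ⟫_ℂ).re := by
  have h1 := ((ContinuousLinearMap.le_def A B).1 h).re_inner_nonneg_left ξ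
  have h2 : ⟪(B - A) ξ, ξ⟫_ℂ = ⟪B ξ, ξ⟫_ℂ - ⟪A ξ, ξ⟫_ℂ := by
    rw [sub_apply, inner_sub_left]
  rw [h2] at h1
  simpa using h1

lemma re_nonneg {A : H →L[ℂ] H} (h : 0 ≤ A) (ξ : H) : 0 ≤ (⟪A ξ, ξ⟫_ℂ).re := by
  simpa using re_mono h ξ

lemma sqrt_facts {A : H →L[ℂ] H} (h : 0 ≤ A) :
    star (CFC.sqrt A) = CFC.sqrt A ∧ CFC.sqrt A * CFC.sqrt A = A :=
  ⟨(CFC.sqrt_nonneg A).isSelfAdjoint, CFC.sqrt_mul_sqrt_self A h⟩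

lemma sqrt_norm {A : H →L[ℂ] H} (h : 0 ≤ A) (ξ : H) :
    ‖CFC.sqrt A ξ‖ ^ 2 = (⟪A ξ, ξ⟫_ℂ).re := by
  rw [norm_sq_eq, (sqrt_facts h).1, (sqrt_facts h).2]

lemma pos_cs {A : H →L[ℂ] H} (h : 0 ≤ A) (ξ η : H) :
    ‖⟪A ξ, η⟫_ℂ‖ ^ 2 ≤ (⟪A ξ, ξ⟫_ℂ).re * (⟪A η, η⟫_ℂ).re := by
  rw [← sqrt_norm h, ← sqrt_norm h, ← mul_pow]
  have h1 : ⟪A ξ, η⟫_ℂ = ⟪CFC.sqrt A ξ, CFC.sqrt A η⟫_ℂ := by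
    conv_lhs => rw [← (sqrt_facts h).2, ap, ← (sqrt_facts h).1, inner_star]
    rw [(sqrt_facts h).1]
  rw [h1]
  gcongr
  exact norm_inner_le_norm _ _

lemma contr_sq {A : H →L[ℂ] H} (h : 0 ≤ A) (h1 : A ≤ 1) (ξ : H) :
    ‖A ξ‖ ^ 2 ≤ (⟪A ξ, ξ⟫_ℂ).re := by
  have hA : star A = A := h.isSelfAdjoint
  rw [norm_sq_eq, hA]
  apply re_mono
  have h2 := conjugate_le_conjugate_of_nonneg h1 (CFC.sqrt_nonneg A)
  rw [mul_one, (sqrt_facts h).2] at h2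
  calc A * A = CFC.sqrt A * A * CFC.sqrt A := by
        generalize hB : CFC.sqrt A = B
        have hBB : B * B = A := by rw [← hB]; exact (sqrt_facts h).2
        rw [← hBB]; simp only [mul_assoc]
    _ ≤ A := h2

lemma contr_norm {A : H →L[ℂ] H} (h : 0 ≤ A) (h1 : A ≤ 1) (ξ : H) : ‖A ξ‖ ≤ ‖ξ‖ := by
  have h2 := contr_sq h h1 ξ
  have h3 := re_mono h1 ξ
  have h4 : (⟪(1 : H →L[ℂ] H) ξ, ξ⟫_ℂ).re = ‖ξ‖ ^ 2 := by
    have := norm_sq_eq (1 : H →L[ℂ] H) ξ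
    simpa using this.symm
  exact le_of_sq_le_sq (by linarith) (norm_nonneg _)

lemma one_pos0 : IsStrictlyPositive (1 : H →L[ℂ] H) := ⟨zero_le_one, isUnit_one⟩

lemma inv_facts {M : VonNeumannAlgebra H} {R : H →L[ℂ] H} (hR : R ∈ M) (h : 1 ≤ R) :
    R * (Ring.inverse R) = 1 ∧ (Ring.inverse R) * R = 1 ∧ (Ring.inverse R) ∈ M ∧ 0 ≤ (Ring.inverse R) ∧ (Ring.inverse R) ≤ 1 := by
  have h1 : IsStrictlyPositive (1 : H →L[ℂ] H) := one_pos0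
  have hs : IsStrictlyPositive R := h1.of_le h
  have hRu : IsUnit R := hs.isUnit
  have e1 : R * (Ring.inverse R) = 1 := Ring.mul_inverse_cancel _ hRu
  have e2 : (Ring.inverse R) * R = 1 := Ring.inverse_mul_cancel _ hRu
  refine ⟨e1, e2, ?_, ?_, ?_⟩
  · refine mem_of_comm fun y hy => ?_
    have := comm_of_mem hR hy
    calc y * (Ring.inverse R) = ((Ring.inverse R) * R) * y * (Ring.inverse R) := by rw [e2, one_mul]
      _ = (Ring.inverse R) * (R * y) * (Ring.inverse R) := by simp only [mul_assoc]
      _ = (Ring.inverse R) * y * (R * (Ring.inverse R)) := by rw [← this]; simp only [mul_assoc]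
      _ = (Ring.inverse R) * y := by rw [e1, mul_one]
  · have hsa : star R = R := hs.nonneg.isSelfAdjoint
    have hst : star (Ring.inverse R) = (Ring.inverse R) := by
      have h3 : star (Ring.inverse R) * R = 1 := by
        have := congrArg star e1
        rwa [star_mul, hsa, star_one] at this
      calc star (Ring.inverse R) = star (Ring.inverse R) * (R * (Ring.inverse R)) := by rw [e1, mul_one]
        _ = (Ring.inverse R) := by rw [← mul_assoc, h3, one_mul]
    have h4 := star_left_conjugate_nonneg hs.nonneg (Ring.inverse R)
    rwa [hst, e2, one_mul] at h4
  · have := CStarAlgebra.ringInverse_le_ringInverse h h1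
    simpa using this

lemma egorov1 {M : VonNeumannAlgebra H} {b : ℕ → H →L[ℂ] H} (hbM : ∀ n, b n ∈ M)
    (hb : ∀ n, 0 ≤ b n) :
    ∃ T ∈ M, 0 ≤ T ∧ (∀ n ζ, (⟪b n (T ζ), T ζ⟫_ℂ).re ≤ (⟪T ζ, ζ⟫_ℂ).re) ∧
      ∀ x : H →L[ℂ] H, x * T = 0 → ∀ η,
        (∃ C : ℝ, ∀ m, (⟪(∑ n ∈ Finset.range m, b n) η, η⟫_ℂ).re ≤ C) → x η = 0 := by
  let R : ℕ → H →L[ℂ] H := fun m => 1 + ∑ n ∈ Finset.range m, b n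
  have hRM : ∀ m, R m ∈ M := fun m => add_mem (one_mem _) (sum_mem fun n _ => hbM n)
  have hR1 : ∀ m, 1 ≤ R m := fun m =>
    le_add_of_nonneg_right (Finset.sum_nonneg fun n _ => hb n)
  have hRmono : Monotone R := by
    refine monotone_nat_of_le_succ fun m => ?_
    show 1 + _ ≤ 1 + _
    rw [Finset.sum_range_succ, ← add_assoc]
    exact le_add_of_nonneg_right (hb m)
  have hbR : ∀ n, b n ≤ R (n + 1) := by
    intro n
    show b n ≤ 1 + _
    rw [Finset.sum_range_succ, ← add_assoc]
    exact le_add_of_nonneg_left ((zero_le_one).trans (hR1 n))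
  let T : ℕ → H →L[ℂ] H := fun m => Ring.inverse (R m)
  have hRT : ∀ m, R m * T m = 1 := fun m => (inv_facts (hRM m) (hR1 m)).1
  have hTR : ∀ m, T m * R m = 1 := fun m => (inv_facts (hRM m) (hR1 m)).2.1
  have hTM : ∀ m, T m ∈ M := fun m => (inv_facts (hRM m) (hR1 m)).2.2.1
  have hT0 : ∀ m, 0 ≤ T m := fun m => (inv_facts (hRM m) (hR1 m)).2.2.2.1
  have hT1 : ∀ m, T m ≤ 1 := fun m => (inv_facts (hRM m) (hR1 m)).2.2.2.2
  have hTanti : ∀ i j, i ≤ j → T j ≤ T i := fun i j hij =>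
    CStarAlgebra.ringInverse_le_ringInverse (hRmono hij) ((one_pos0).of_le (hR1 i))
  obtain ⟨Tl, hT⟩ := clm_of_lim (l := atTop) (f := T) (fun i ξ => contr_norm (hT0 i) (hT1 i) ξ)
    (fun ξ => lim_of_mono (φ := fun i => - (⟪T i ξ, ξ⟫_ℂ).re) (C := 0)
      (fun i => by have := re_nonneg (hT0 i) ξ; linarith) (fun i j hij => by
        have h1 := contr_sq (A := T i - T j) (sub_nonneg.2 (hTanti i j hij))
          ((sub_le_self _ (hT0 j)).trans (hT1 i)) ξ
        rw [sub_apply, inner_sub_left, Complex.sub_re] at h1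
        rw [norm_sub_rev]; linarith))
  have hTin : ∀ ξ, Tendsto (fun k => (⟪T k ξ, ξ⟫_ℂ).re) atTop (𝓝 (⟪Tl ξ, ξ⟫_ℂ).re) := fun ξ =>
    (Complex.continuous_re.tendsto _).comp ((hT ξ).inner tendsto_const_nhds)
  have hTpos : 0 ≤ Tl := by
    rw [ContinuousLinearMap.nonneg_iff_isPositive, ContinuousLinearMap.isPositive_iff_complex]
    intro ξ
    refine ⟨?_, ge_of_tendsto (hTin ξ) (Eventually.of_forall fun k => re_nonneg (hT0 k) ξ)⟩
    have h1 : Tendsto (fun k => ⟪T k ξ, ξ⟫_ℂ) atTop (𝓝 ⟪Tl ξ, ξ⟫_ℂ) :=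
      (hT ξ).inner tendsto_const_nhds
    have h2 : Tendsto (fun k => (((⟪T k ξ, ξ⟫_ℂ).re : ℝ) : ℂ)) atTop
        (𝓝 (((⟪Tl ξ, ξ⟫_ℂ).re : ℝ) : ℂ)) := (Complex.continuous_ofReal.tendsto _).comp (hTin ξ)
    refine tendsto_nhds_unique h2 (h1.congr fun k => ?_)
    exact ((((ContinuousLinearMap.isPositive_iff_complex _).1
      ((ContinuousLinearMap.nonneg_iff_isPositive _).1 (hT0 k))) ξ).1).symm
  refine ⟨Tl, mem_of_tendsto hTM hT, hTpos, ?_, ?_⟩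
  · intro n ζ
    have h1 : Tendsto (fun k => (⟪b n (T k ζ), T k ζ⟫_ℂ).re) atTop
        (𝓝 (⟪b n (Tl ζ), Tl ζ⟫_ℂ).re) :=
      (Complex.continuous_re.tendsto _).comp
        ((((b n).continuous.tendsto _).comp (hT ζ)).inner (hT ζ))
    refine le_of_tendsto_of_tendsto h1 (hTin ζ) ?_
    filter_upwards [eventually_ge_atTop (n + 1)] with k hk
    calc (⟪b n (T k ζ), T k ζ⟫_ℂ).re ≤ (⟪R k (T k ζ), T k ζ⟫_ℂ).re :=
          re_mono ((hbR n).trans (hRmono hk)) _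
      _ = (⟪T k ζ, ζ⟫_ℂ).re := by
          rw [← ap, hRT, ← Complex.conj_re, inner_conj_symm]; rfl
  · rintro x hx η ⟨C, hC⟩
    have hTsa : star Tl = Tl := hTpos.isSelfAdjoint
    have hTx : Tl * star x = 0 := by
      have := congrArg star hx
      rwa [star_mul, hTsa, star_zero] at this
    refine ext_inner_right ℂ fun ζ => ?_
    rw [inner_zero_left, ← star_star x, inner_star]
    set a := star x ζ with ha
    have hTa : Tl a = 0 := by rw [ha, ← ap, hTx, zap]
    have h1 : ∀ k, ‖⟪η, a⟫_ℂ‖ ^ 2 ≤ (‖η‖ ^ 2 + C) * (⟪T k a, a⟫_ℂ).re := by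
      intro k
      have h2 := pos_cs (hT0 k) (R k η) a
      rw [← ap, hTR] at h2
      refine h2.trans ?_
      refine mul_le_mul_of_nonneg_right ?_ (re_nonneg (hT0 k) a)
      have h3 : ⟪(1 : H →L[ℂ] H) η, R k η⟫_ℂ = ⟪η, η⟫_ℂ
          + ⟪η, (∑ n ∈ Finset.range k, b n) η⟫_ℂ := by
        show ⟪η, η + _⟫_ℂ = _
        rw [inner_add_right]; rfl
      rw [h3, Complex.add_re]
      have h4 : (⟪η, η⟫_ℂ).re = ‖η‖ ^ 2 := by
        rw [inner_self_eq_norm_sq_to_K]; norm_cast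
      have h5 : (⟪η, (∑ n ∈ Finset.range k, b n) η⟫_ℂ).re
        = (⟪(∑ n ∈ Finset.range k, b n) η, η⟫_ℂ).re := by
          rw [← Complex.conj_re, inner_conj_symm]
      rw [h4, h5]
      have := hC k
      linarith
    have h6 : Tendsto (fun k => (‖η‖ ^ 2 + C) * (⟪T k a, a⟫_ℂ).re) atTop (𝓝 0) := by
      have := (hTin a).const_mul (‖η‖ ^ 2 + C)
      rw [hTa] at this
      simpa using this
    have h7 : ‖⟪η, a⟫_ℂ‖ ^ 2 ≤ 0 := ge_of_tendsto h6 (Eventually.of_forall h1)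
    have : ‖⟪η, a⟫_ℂ‖ = 0 := by nlinarith [norm_nonneg ⟪η, a⟫_ℂ]
    simpa using this

def hf (ε : ℝ) : ℝ → ℝ := fun t => max (t - ε) 0
def kf (ε : ℝ) : ℝ → ℝ := fun t => max (t - ε) 0 / max t ε
def gf (ε ε' : ℝ) : ℝ → ℝ := fun t => max (t - ε) 0 / max (t - ε') (ε - ε')

lemma hf_cont (ε : ℝ) : Continuous (hf ε) := by unfold hf; fun_prop
lemma kf_cont {ε : ℝ} (h : 0 < ε) : Continuous (kf ε) := by
  unfold kf
  exact Continuous.div (by fun_prop) (by fun_prop) fun t => (lt_max_of_lt_right h).ne'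
lemma gf_cont {ε ε' : ℝ} (h : ε' < ε) : Continuous (gf ε ε') := by
  unfold gf
  exact Continuous.div (by fun_prop) (by fun_prop)
    fun t => (lt_max_of_lt_right (sub_pos.2 h)).ne'

lemma hk (ε t : ℝ) (h : 0 < ε) : t * kf ε t = hf ε t := by
  unfold kf hf
  rcases le_total t ε with h1 | h1
  · rw [max_eq_right (by linarith : t - ε ≤ 0)]; simp
  · rw [max_eq_left h1]
    have : t ≠ 0 := (h.trans_le h1).ne'
    field_simp

lemma hg (ε ε' t : ℝ) (h : ε' < ε) : hf ε' t * gf ε ε' t = hf ε t := by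
  unfold gf hf
  rcases le_total t ε with h1 | h1
  · rw [max_eq_right (by linarith : t - ε ≤ 0)]; simp
  · rw [max_eq_left (by linarith : ε - ε' ≤ t - ε'), max_eq_left (by linarith : 0 ≤ t - ε')]
    have : t - ε' ≠ 0 := by have : 0 < t - ε' := by linarith
                            exact this.ne'
    field_simp

lemma kk (ε t : ℝ) (h : 0 < ε) : kf ε t * t * kf ε t ≤ ε⁻¹ * (hf ε t * hf ε t) := by
  rw [mul_comm (kf ε t) t, hk ε t h]
  have h0 : 0 ≤ hf ε t := le_max_right _ _
  have h1 : kf ε t ≤ ε⁻¹ * hf ε t := by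
    unfold kf hf
    rw [div_eq_mul_inv, mul_comm]
    gcongr
    exact le_max_right _ _
  nlinarith

lemma egorov2 {M : VonNeumannAlgebra H} {T : H →L[ℂ] H} (hTM : T ∈ M) (hT : 0 ≤ T) :
    ∃ P : ℕ → H →L[ℂ] H, (∀ k, PJ M (P k)) ∧ (∀ k, P (k + 1) * P k = P k) ∧
      (∀ x : H →L[ℂ] H, (∀ k, x * P k = 0) → x * T = 0) ∧
      ∀ k, ∃ C : ℝ, 0 < C ∧ ∀ b : H →L[ℂ] H,
        (∀ ζ, (⟪b (T ζ), T ζ⟫_ℂ).re ≤ (⟪T ζ, ζ⟫_ℂ).re) →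
        ∀ ξ, (⟪b (P k ξ), P k ξ⟫_ℂ).re ≤ C * ‖P k ξ‖ ^ 2 := by
  have hTs : IsSelfAdjoint T := hT.isSelfAdjoint
  let ε : ℕ → ℝ := fun k => 1 / ((k : ℝ) + 1)
  have hε : ∀ k, 0 < ε k := fun k => by positivity
  have hε' : ∀ k, ε (k + 1) < ε k := fun k => by
    show 1 / (((k + 1 : ℕ) : ℝ) + 1) < 1 / ((k : ℝ) + 1)
    push_cast
    apply one_div_lt_one_div_of_lt <;> [positivity; linarith]
  let h : ℕ → H →L[ℂ] H := fun k => cfc (hf (ε k)) T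
  have hhM : ∀ k, h k ∈ M := fun k => cfc_mem hTM _
  have hhs : ∀ k, star (h k) = h k := fun k => (cfc_predicate (hf (ε k)) T : IsSelfAdjoint _)
  let K : ℕ → Submodule ℂ H := fun k => (LinearMap.range (h k).toLinearMap).topologicalClosure
  have hC : ∀ k, CompleteSpace (K k) := fun k =>
    (Submodule.isClosed_topologicalClosure _).completeSpace_coe
  have hKmono : ∀ k, K k ≤ K (k + 1) := by
    intro k
    refine Submodule.topologicalClosure_mono ?_
    rintro _ ⟨ζ, rfl⟩
    refine ⟨cfc (gf (ε k) (ε (k + 1))) T ζ, ?_⟩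
    have : h (k + 1) * cfc (gf (ε k) (ε (k + 1))) T = h k := by
      show cfc _ T * cfc _ T = cfc _ T
      rw [← cfc_mul _ _ T (hf_cont _).continuousOn (gf_cont (hε' k)).continuousOn]
      exact cfc_congr fun t _ => hg _ _ t (hε' k)
    exact DFunLike.congr_fun this ζ
  refine ⟨fun k => (K k).starProjection, fun k => starProj_PJ _ fun y hy => clos_inv ?_, ?_, ?_, ?_⟩
  · rintro _ ⟨ζ, rfl⟩
    exact ⟨y ζ, (DFunLike.congr_fun (comm_of_mem (hhM k) hy) ζ).symm⟩
  · intro k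
    ext ξ
    exact Submodule.starProjection_eq_self_iff.2 (hKmono k (Submodule.starProjection_apply_mem _ ξ))
  · intro x hx
    have h1 : ∀ k, x * h k = 0 := by
      intro k
      ext ξ
      have h2 : (K k).starProjection (h k ξ) = h k ξ :=
        Submodule.starProjection_eq_self_iff.2 (Submodule.le_topologicalClosure _ ⟨ξ, rfl⟩)
      rw [ap, ← h2, ← ap, hx k]; rfl
    have h3 : ∀ k, ‖T - h k‖ ≤ ε k := by
      intro k
      have : T - h k = cfc (fun t => t - hf (ε k) t) T := by
        rw [cfc_sub (fun t => t) (hf (ε k)) T continuousOn_id (hf_cont _).continuousOn,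
          cfc_id' ℝ T]
      rw [this]
      refine norm_cfc_le (hε k).le fun t ht => ?_
      have ht0 : 0 ≤ t := spectrum_nonneg_of_nonneg hT ht
      have := hε k
      unfold hf
      rw [Real.norm_eq_abs, abs_le]
      rcases le_total t (ε k) with h1 | h1
      · rw [max_eq_right (by linarith : t - ε k ≤ 0)]; constructor <;> linarith
      · rw [max_eq_left (by linarith : 0 ≤ t - ε k)]; constructor <;> linarith
    have h4 : ∀ k, ‖x * T‖ ≤ ‖x‖ * ε k := by
      intro k
      calc ‖x * T‖ = ‖x * (T - h k)‖ := by rw [mul_sub, h1, sub_zero]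
        _ ≤ ‖x‖ * ‖T - h k‖ := norm_mul_le _ _
        _ ≤ ‖x‖ * ε k := by gcongr; exact h3 k
    have h5 : Tendsto (fun k => ‖x‖ * ε k) atTop (𝓝 0) := by
      have := (tendsto_one_div_add_atTop_nhds_zero_nat (𝕜 := ℝ)).const_mul ‖x‖
      rw [mul_zero] at this
      exact this
    exact norm_le_zero_iff.1 (ge_of_tendsto h5 (Eventually.of_forall h4))
  · intro k
    refine ⟨(ε k)⁻¹, inv_pos.2 (hε k), fun b hb => ?_⟩
    have h1 : ∀ ξ ∈ K k, (⟪b ξ, ξ⟫_ℂ).re ≤ (ε k)⁻¹ * ‖ξ‖ ^ 2 := by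
      have hcl : IsClosed {ξ : H | (⟪b ξ, ξ⟫_ℂ).re ≤ (ε k)⁻¹ * ‖ξ‖ ^ 2} := by
        refine isClosed_le ?_ ?_
        · exact Complex.continuous_re.comp (b.continuous.inner continuous_id)
        · fun_prop
      intro ξ hξ
      refine closure_minimal ?_ hcl hξ
      rintro _ ⟨ζ, rfl⟩
      set κ := cfc (kf (ε k)) T with hκ
      have hκs : star κ = κ := (cfc_predicate (kf (ε k)) T : IsSelfAdjoint _)
      have e1 : T * κ = h k := by
        show T * κ = cfc _ T
        rw [hκ]
        nth_rewrite 1 [← cfc_id' ℝ T]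
        rw [← cfc_mul (fun t => t) _ T continuousOn_id (kf_cont (hε k)).continuousOn]
        exact cfc_congr fun t _ => hk _ t (hε k)
      have e2 : κ * T * κ ≤ (ε k)⁻¹ • (h k * h k) := by
        have a1 : κ * T * κ = cfc (fun t => kf (ε k) t * t * kf (ε k) t) T := by
          rw [cfc_mul (fun t => kf (ε k) t * t) _ T
            ((kf_cont (hε k)).mul continuous_id).continuousOn (kf_cont (hε k)).continuousOn,
            cfc_mul _ (fun t => t) T (kf_cont (hε k)).continuousOn continuousOn_id, cfc_id' ℝ T]
        have a2 : (ε k)⁻¹ • (h k * h k) = cfc (fun t => (ε k)⁻¹ * (hf (ε k) t * hf (ε k) t)) T := by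
          rw [cfc_const_mul _ (fun t => hf (ε k) t * hf (ε k) t) T ((hf_cont _).mul (hf_cont _)).continuousOn,
            cfc_mul _ _ T (hf_cont _).continuousOn (hf_cont _).continuousOn]
        rw [a1, a2]
        refine cfc_mono (fun t _ => kk _ t (hε k)) ?_ ?_
        · exact (((kf_cont (hε k)).mul continuous_id).mul (kf_cont (hε k))).continuousOn
        · exact (continuous_const.mul ((hf_cont _).mul (hf_cont _))).continuousOn
      have e3 := re_mono e2 ζ
      have e4 : (⟪((ε k)⁻¹ • (h k * h k)) ζ, ζ⟫_ℂ).re = (ε k)⁻¹ * ‖h k ζ‖ ^ 2 := by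
        have := norm_sq_eq (h k) ζ
        rw [hhs] at this
        rw [this, smul_apply, inner_smul_left_eq_smul, Complex.smul_re, smul_eq_mul]
      have e5 : (⟪(κ * T * κ) ζ, ζ⟫_ℂ).re = (⟪T (κ ζ), κ ζ⟫_ℂ).re := by
        rw [mul_assoc, ap, ap]
        conv_lhs => rw [← hκs, inner_star]
        rw [hκs]
      have e6 := hb (κ ζ)
      rw [← ap T, e1] at e6
      show (⟪b (h k ζ), h k ζ⟫_ℂ).re ≤ (ε k)⁻¹ * ‖h k ζ‖ ^ 2
      rw [← ap T, e1] at e5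
      linarith
    exact fun ξ => h1 _ (Submodule.starProjection_apply_mem _ ξ)

lemma Sb.trans {M : VonNeumannAlgebra H} {p q r : H →L[ℂ] H} (h1 : Sb M p q) (h2 : Sb M q r) :
    Sb M p r := by
  obtain ⟨v, hvM, hv, hqv⟩ := h1
  obtain ⟨w, hwM, hw, hrw⟩ := h2
  refine ⟨w * v, mul_mem hwM hvM, ?_, by rw [← mul_assoc, hrw]⟩
  rw [star_mul, mul_assoc, ← mul_assoc (star w), hw, hqv, hv]

/-- Step 8. -/
lemma em {M : VonNeumannAlgebra H} (hF : FIN M) {r E : H →L[ℂ] H} (hr : PJ M r) (hE : PJ M E)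
    {D : Set H} (hgen : ∀ x ∈ M, (∀ η ∈ D, x η = 0) → x * E = 0)
    (happ : ∀ ε : ℝ, 0 < ε → ∃ p', PJ M p' ∧ Sb M p' r ∧ ∀ η ∈ D, ‖(1 - p') η‖ ≤ ε) :
    Sb M E r := by
  choose p hp hpr hpD using fun n : ℕ => happ ((1 / 2) ^ n) (by positivity)
  let b : ℕ → H →L[ℂ] H := fun n => ((2 : ℝ) ^ n) • (1 - p n)
  have hbM : ∀ n, b n ∈ M := fun n => by
    refine mem_of_comm fun y hy => ?_
    show y * (((2 : ℝ) ^ n) • (1 - p n)) = (((2 : ℝ) ^ n) • (1 - p n)) * y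
    rw [mul_smul_comm, smul_mul_assoc, comm_of_mem (hp n).compl.mem hy]
  have hb : ∀ n, 0 ≤ b n := fun n => by
    refine smul_nonneg (by positivity) ?_
    have := star_mul_self_nonneg (1 - p n)
    rwa [(hp n).compl.sa, (hp n).compl.idem] at this
  have hbin : ∀ n η, (⟪b n η, η⟫_ℂ).re = 2 ^ n * ‖(1 - p n) η‖ ^ 2 := by
    intro n η
    show (⟪(((2 : ℝ) ^ n) • (1 - p n)) η, η⟫_ℂ).re = _
    rw [smul_apply, inner_smul_left_eq_smul, Complex.smul_re, smul_eq_mul, norm_sq_eq,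
      (hp n).compl.sa, (hp n).compl.idem]
  obtain ⟨T, hTM, hT0, hTb, hTx⟩ := egorov1 hbM hb
  obtain ⟨P, hP, hPP, hPx, hPb⟩ := egorov2 hTM hT0
  have hPr : ∀ k, Sb M (P k) r := by
    intro k
    obtain ⟨C, hC0, hC⟩ := hPb k
    obtain ⟨n, hn⟩ := pow_unbounded_of_one_lt (2 * C) (one_lt_two)
    refine Sb.trans (close (hP k) (hp n) fun ξ => ?_) (hpr n)
    have h1 := hC (b n) (hTb n) ξ
    rw [hbin] at h1
    have h2 : (0 : ℝ) < 2 ^ n := by positivity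
    have h3 : 2 * C * ‖(1 - p n) (P k ξ)‖ ^ 2 ≤ C * ‖P k ξ‖ ^ 2 :=
      le_trans (by gcongr) h1
    have h4 : C * (2 * ‖(1 - p n) (P k ξ)‖ ^ 2) ≤ C * ‖P k ξ‖ ^ 2 := by linarith
    have h5 := le_of_mul_le_mul_left h4 hC0
    linarith
  obtain ⟨v, hvM, hv, hrv, hvP⟩ := mono hF hr hP hPP hPr
  have hx : (1 - star v * v) * E = 0 := by
    refine hgen _ (PJ.ss hvM hv).compl.mem fun η hη => ?_
    refine hTx _ (hPx _ fun k => by rw [sub_mul, one_mul, hvP, sub_self]) η ⟨2, fun m => ?_⟩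
    have h1 : (⟪(∑ n ∈ Finset.range m, b n) η, η⟫_ℂ).re
        = ∑ n ∈ Finset.range m, (⟪b n η, η⟫_ℂ).re := by
      rw [sum_apply, sum_inner, Complex.re_sum]
    rw [h1]
    calc ∑ n ∈ Finset.range m, (⟪b n η, η⟫_ℂ).re ≤ ∑ n ∈ Finset.range m, (1 / 2 : ℝ) ^ n := by
          refine Finset.sum_le_sum fun n _ => ?_
          rw [hbin]
          have h2 := hpD n η hη
          calc (2 : ℝ) ^ n * ‖(1 - p n) η‖ ^ 2 ≤ 2 ^ n * ((1 / 2) ^ n) ^ 2 := by gcongr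
            _ = (1 / 2) ^ n := by
              rw [pow_two, ← mul_assoc, ← mul_pow]; norm_num
      _ ≤ 2 := sum_geometric_two_le m
  rw [sub_mul, one_mul, sub_eq_zero] at hx
  refine ⟨v * E, mul_mem hvM hE.mem, ?_, by rw [← mul_assoc, hrv]⟩
  rw [star_mul, hE.sa, mul_assoc, ← mul_assoc (star v), ← hx, hE.idem]

/-- Step 9. -/
lemma iter {M : VonNeumannAlgebra H} (hF : FIN M) {r e : H →L[ℂ] H} (hr : PJ M r) (he : PJ M e)
    (hre : r * e = 0) {ξ : H} (hξ : e ξ = ξ) (hgen : ∀ x ∈ M, x ξ = 0 → x * e = 0)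
    (happ : ∀ D : Set H, D.Finite → (∀ η ∈ D, (r + e) η = η) → ∀ ε : ℝ, 0 < ε →
      ∃ p', PJ M p' ∧ Sb M p' r ∧ ∀ η ∈ D, ‖(1 - p') η‖ ≤ ε) : e = 0 := by
  have her : e * r = 0 := by
    have := congrArg star hre
    rwa [star_mul, hr.sa, he.sa, star_zero] at this
  have es0 : ∀ {s : H →L[ℂ] H}, r * s = s → e * s = 0 := fun {s} h => by
    rw [← h, ← mul_assoc, her, zero_mul]
  have se0 : ∀ {s : H →L[ℂ] H}, r * s = s → star s * e = 0 := fun {s} h => by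
    have := congrArg star (es0 h)
    rwa [star_mul, he.sa, star_zero] at this
  have hξD : (r + e) ξ = ξ := by
    have : r ξ = 0 := by rw [← hξ, ← ap, hre, zap]
    rw [add_apply, this, zero_add, hξ]
  let St := {x : (H →L[ℂ] H) × Set H // x.1 ∈ M ∧ PI x.1 ∧ r * x.1 = x.1 ∧ x.2.Finite ∧
    (∀ η ∈ x.2, (r + e) η = η) ∧
    (∀ y ∈ M, (∀ η ∈ x.2, y η = 0) → y * (star x.1 * x.1) = 0) ∧
    (e + x.1 * star x.1) * (star x.1 * x.1) = star x.1 * x.1}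
  have hstart : ∃ x : St, star x.1.1 * x.1.1 = e := by
    obtain ⟨s, hsM, hs, hrs⟩ := em hF hr he (D := {ξ})
      (fun x hx h => hgen x hx (h ξ rfl))
      (happ {ξ} (Set.finite_singleton _) (by rintro η rfl; exact hξD))
    refine ⟨⟨(s, {ξ}), hsM, Sb.pi he hs, hrs, Set.finite_singleton _,
      by rintro η rfl; exact hξD, ?_, ?_⟩, hs⟩
    · show ∀ y ∈ M, (∀ η ∈ ({ξ} : Set H), y η = 0) → y * (star s * s) = 0
      rw [hs]; exact fun x hx h => hgen x hx (h ξ rfl)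
    · show (e + s * star s) * (star s * s) = star s * s
      rw [hs, add_mul, he.idem, mul_assoc, se0 hrs, mul_zero, add_zero]
  have hstep : ∀ x : St, ∃ y : St, star y.1.1 * y.1.1 = e + x.1.1 * star x.1.1 ∧
      y.1.1 * (star x.1.1 * x.1.1) = x.1.1 := by
    rintro ⟨⟨s, D⟩, hsM, hsPI, hrs, hDf, hDr, hDg, hinv⟩
    simp only at hsM hsPI hrs hDf hDr hDg hinv
    have hE' : PJ M (e + s * star s) := he.add (PJ.ss' hsM hsPI) (by
      rw [← mul_assoc, es0 hrs, zero_mul])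
    have hDf' : (insert ξ (s '' D)).Finite := (hDf.image s).insert ξ
    have hDr' : ∀ η ∈ insert ξ (s '' D), (r + e) η = η := by
      rintro η (rfl | ⟨ζ, hζ, rfl⟩)
      · exact hξD
      · rw [← ap, add_mul, hrs, es0 hrs, add_zero]
    have hDg' : ∀ y ∈ M, (∀ η ∈ insert ξ (s '' D), y η = 0) → y * (e + s * star s) = 0 := by
      intro y hy h
      have h1 := hgen y hy (h ξ (Set.mem_insert _ _))
      have h2 := hDg (y * s) (mul_mem hy hsM) fun η hη =>
        h (s η) (Set.mem_insert_of_mem _ ⟨η, hη, rfl⟩)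
      rw [mul_assoc, hsPI.mul_ss] at h2
      rw [mul_add, h1, ← mul_assoc, h2, zero_mul, add_zero]
    obtain ⟨w, hwM, hw, hrw⟩ := em hF hr hE' hDg' (happ _ hDf' hDr')
    obtain ⟨s', hsM', hs', hrs', hss'⟩ := ext_lem hF hr (PJ.ss hsM hsPI) hE' hinv hsM hwM rfl hw
      hrs hrw
    refine ⟨⟨(s', insert ξ (s '' D)), hsM', Sb.pi hE' hs', hrs', hDf', hDr', ?_, ?_⟩, hs', hss'⟩
    · show ∀ y ∈ M, _ → y * (star s' * s') = 0
      rw [hs']; exact hDg'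
    · show (e + s' * star s') * (star s' * s') = star s' * s'
      have hPI' : PI s' := Sb.pi hE' hs'
      have h3 : s' * star s' * s = s := by
        nth_rewrite 1 [← hss']
        rw [← mul_assoc, hPI', hss']
      rw [hs', add_mul, mul_add, mul_add, he.idem, ← mul_assoc e, es0 hrs, zero_mul,
        mul_assoc s' (star s') e, se0 hrs', mul_zero, ← mul_assoc (s' * star s'), h3,
        add_zero, zero_add]
  choose nx hnx1 hnx2 using hstep
  obtain ⟨x0, hx0⟩ := hstart
  let x : ℕ → St := fun k => Nat.rec x0 (fun _ y => nx y) k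
  let s : ℕ → H →L[ℂ] H := fun k => (x k).1.1
  have hsPI : ∀ k, PI (s k) := fun k => (x k).2.2.1
  have hsM : ∀ k, s k ∈ M := fun k => (x k).2.1
  have hrs : ∀ k, r * s k = s k := fun k => (x k).2.2.2.1
  have hs1 : ∀ k, star (s (k + 1)) * s (k + 1) = e + s k * star (s k) := fun k => hnx1 (x k)
  have hs2 : ∀ k, s (k + 1) * (star (s k) * s k) = s k := fun k => hnx2 (x k)
  obtain ⟨V, hVM, hV, hVe, hVt, -⟩ := pi_lim (M := M) hsM hsPI (seq_ext hsPI hs2)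
  have hrV : r * V = V := by
    have := left_of_tendsto (a := r) (b := 1) hVt (fun a => by rw [one_mul]; exact hrs a)
    rwa [one_mul] at this
  set F := star V * V with hFd
  have hFE : ∀ k, F * (star (s k) * s k) = star (s k) * s k := fun k =>
    init_proj_le (hsPI k) hV (hVe k)
  have hFs : ∀ k, F * s k = s k := by
    intro k
    have h1 : (e + s k * star (s k)) * s k = s k := by
      rw [add_mul, es0 (hrs k), zero_add]; exact hsPI k
    rw [← h1, ← mul_assoc, ← hs1]; exact congrArg (· * s k) (hFE (k + 1))
  have hFV : F * V = V := by
    have := left_of_tendsto (a := F) (b := 1) hVt (fun a => by rw [one_mul]; exact hFs a)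
    rwa [one_mul] at this
  have hFP : PJ M F := PJ.ss hVM hV
  have hFe : F * e = e := by
    have h1 : star (s 0) * s 0 = e := hx0
    rw [← h1]; exact hFE 0
  have heF : e * F = e := by
    have := congrArg star hFe
    rwa [star_mul, he.sa, hFP.sa] at this
  have hVF : star V * F = star V := by
    have := congrArg star hFV
    rwa [star_mul, hFP.sa] at this
  have hiso := hF (V + (1 - F)) (add_mem hVM hFP.compl.mem) (by
    rw [star_add, hFP.compl.sa, add_mul, mul_add, mul_add, hFP.compl.idem, mul_sub, mul_one, hVF,
      sub_mul, one_mul, hFV, ← hFd]; abel)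
  have heW : e * (V + (1 - F)) = 0 := by
    rw [mul_add, es0 hrV, mul_sub, mul_one, heF, sub_self, add_zero]
  calc e = e * ((V + (1 - F)) * star (V + (1 - F))) := by rw [hiso, mul_one]
    _ = 0 := by rw [← mul_assoc, heW, zero_mul]

lemma cyclic {M : VonNeumannAlgebra H} (ξ : H) :
    ∃ e, PJ M e ∧ e ξ = ξ ∧ ∀ x ∈ M, x ξ = 0 → x * e = 0 := by
  let K : Submodule ℂ H := Submodule.span ℂ {η | ∃ y ∈ M.commutant, η = y ξ}
  have hinv : ∀ y ∈ M.commutant, ∀ ζ ∈ K, y ζ ∈ K := by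
    intro y hy ζ hζ
    induction hζ using Submodule.span_induction with
    | mem x hx =>
      obtain ⟨w, hw, rfl⟩ := hx
      exact Submodule.subset_span ⟨y * w, mul_mem hy hw, rfl⟩
    | zero => rw [map_zero]; exact zero_mem _
    | add x w _ _ h1 h2 => rw [map_add]; exact add_mem h1 h2
    | smul c x _ h1 => rw [map_smul]; exact Submodule.smul_mem _ _ h1
  have : CompleteSpace K.topologicalClosure := K.isClosed_topologicalClosure.completeSpace_coe
  refine ⟨K.topologicalClosure.starProjection, starProj_PJ _ fun y hy => clos_inv (hinv y hy),
    ?_, ?_⟩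
  · refine Submodule.starProjection_eq_self_iff.2 (K.le_topologicalClosure ?_)
    exact Submodule.subset_span ⟨1, one_mem _, rfl⟩
  · intro x hx h0
    refine kill_clos fun ζ hζ => ?_
    induction hζ using Submodule.span_induction with
    | mem w hw =>
      obtain ⟨y, hy, rfl⟩ := hw
      rw [← ap, ← comm_of_mem hx hy, ap, h0, map_zero]
    | zero => rw [map_zero]
    | add x w _ _ h1 h2 => rw [map_add, h1, h2, add_zero]
    | smul c x _ h1 => rw [map_smul, h1, smul_zero]

/-- Step 10. -/
lemma final1 {M : VonNeumannAlgebra H} (hF : FIN M) {p p0 : H →L[ℂ] H} (hp : PJ M p)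
    (hp0 : PJ M p0)
    (happ : ∀ D : Set H, D.Finite → ∀ ε : ℝ, 0 < ε → ∃ q, PJ M q ∧
      (∃ u ∈ M, star u * u = q ∧ u * star u = p0) ∧ ∀ η ∈ D, ‖p η - q η‖ ≤ ε) :
    Sb M p p0 := by
  obtain ⟨V, hVM, hV, hqV, hVp, -, hmax⟩ := exists_max (M := M) (v := 0) hp.mem hp0.mem
    hp.sa hp.idem hp0.sa hp0.idem (zero_mem _) (by simp [PI]) (by simp) (by simp)
  have hVsM := star_mem hVM
  have hpVs : p * star V = star V := by
    have := congrArg star hVp; rwa [star_mul, hp.sa] at this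
  have ha : PJ M (p - star V * V) := hp.sub (PJ.ss hVM hV) (by rw [← mul_assoc, hpVs])
  obtain ⟨z, hz, hzc, hza, hbz⟩ := central (M := M) ha.mem hmax
  set a := p - star V * V with had
  by_cases h0 : a = 0
  · refine ⟨V, hVM, ?_, hqV⟩
    rw [had, sub_eq_zero] at h0; exact h0.symm
  exfalso
  obtain ⟨ζ, hζ⟩ : ∃ ζ, a ζ ≠ 0 := by
    by_contra hcon
    push Not at hcon
    exact h0 (by ext ζ; exact hcon ζ)
  set ξ := a ζ with hξd
  have haξ : a ξ = ξ := by rw [hξd, ← ap, ha.idem]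
  obtain ⟨e, he, heξ, hegen⟩ := cyclic (M := M) ξ
  have hae : a * e = e := by
    have h1 := hegen (1 - a) ha.compl.mem (by
      rw [sub_apply, haξ]; exact sub_self ξ)
    rw [sub_mul, one_mul, sub_eq_zero] at h1
    exact h1.symm
  have hea : e * a = e := by
    have := congrArg star hae; rwa [star_mul, ha.sa, he.sa] at this
  have hpa : p * a = a := by rw [had, mul_sub, hp.idem, ← mul_assoc, hpVs]
  have hze : z * e = e := by
    calc z * e = z * a * e := by rw [mul_assoc, hae]
      _ = e := by rw [hza, hae]
  have hpe : p * e = e := by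
    calc p * e = p * a * e := by rw [mul_assoc, hae]
      _ = e := by rw [hpa, hae]
  have hzp : PJ M (z * p) := hz.mul hp (hzc p hp.mem)
  have hzpe : z * p * e = e := by rw [mul_assoc, hpe, hze]
  have hr : PJ M (z * p - e) := hzp.sub he hzpe
  have haVs : a * star V = 0 := by
    rw [had, sub_mul, hpVs, hV.star_mul_ss, sub_self]
  have heVs : e * star V = 0 := by rw [← hea, mul_assoc, haVs, mul_zero]
  have hzV : V * star V * z = p0 * z := by
    rw [sub_mul, sub_eq_zero] at hbz; exact hbz.symm
  have key := iter hF hr he (by rw [sub_mul, hzpe, he.idem, sub_self]) heξ hegen (by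
    intro D hD hDr ε hε
    obtain ⟨q, hq, ⟨u, huM, hu1, hu2⟩, hqD⟩ := happ D hD ε hε
    refine ⟨z * q, hz.mul hq (hzc q hq.mem), ?_, fun η hη => ?_⟩
    · have huPI : PI u := Sb.pi hq hu1
      have hp0u : p0 * u = u := by rw [← hu2]; exact huPI
      refine ⟨star V * (z * u), mul_mem hVsM (mul_mem hz.mem huM), ?_, ?_⟩
      · calc star (star V * (z * u)) * (star V * (z * u))
            = star u * z * (V * star V * z) * u := by
              simp only [star_mul, star_star, hz.sa, mul_assoc]
          _ = star u * z * (z * p0) * u := by rw [hzV, hzc p0 hp0.mem]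
          _ = star u * (z * z) * (p0 * u) := by simp only [mul_assoc]
          _ = z * q := by
              rw [hz.idem, hp0u, ← hzc _ (star_mem huM), mul_assoc, hu1]
      · have h1 : z * star V * (z * u) = star V * (z * u) := by
          rw [hzc _ hVsM, mul_assoc, ← mul_assoc z z, hz.idem]
        rw [sub_mul, ← mul_assoc e, heVs, zero_mul, sub_zero, ← mul_assoc (z * p), mul_assoc z,
          hpVs, h1]
    · have h1 := hDr η hη
      rw [sub_add_cancel] at h1
      have h2 : (1 - z * q) η = z (p η - q η) := by
        rw [map_sub, ← ap z p, h1]; rfl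
      rw [h2]
      exact (proj_norm_le hz.sa hz.idem _).trans (hqD η hη))
  apply hζ
  rw [← heξ, key, zap]

lemma compl_equiv {M : VonNeumannAlgebra H} (hF : FIN M) {q p0 u : H →L[ℂ] H} (hq : PJ M q)
    (huM : u ∈ M) (hu1 : star u * u = q) (hu2 : u * star u = p0) :
    ∃ w ∈ M, star w * w = 1 - q ∧ w * star w = 1 - p0 := by
  obtain ⟨U, hUM, hU1, hU2, hU⟩ := unitary_ext hF huM (Sb.pi hq hu1)
  rw [hu1] at hU
  refine ⟨U * (1 - q), mul_mem hUM hq.compl.mem, ?_, ?_⟩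
  · rw [star_mul, mul_assoc, ← mul_assoc (star U), hU1, one_mul, hq.compl.sa, hq.compl.idem]
  · have h1 : U * q * star U = p0 := by
      rw [← hu2, ← hU, star_mul, hq.sa, mul_assoc U q (q * star U), ← mul_assoc q q, hq.idem,
        mul_assoc]
    rw [star_mul, hq.compl.sa, mul_assoc, ← mul_assoc (1 - q), hq.compl.idem, sub_mul, one_mul,
      mul_sub, hU2, ← mul_assoc, h1]

lemma final2 {M : VonNeumannAlgebra H} (hF : FIN M) {p p0 : H →L[ℂ] H} (hp : PJ M p)
    (hp0 : PJ M p0)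
    (happ : ∀ D : Set H, D.Finite → ∀ ε : ℝ, 0 < ε → ∃ q, PJ M q ∧
      (∃ u ∈ M, star u * u = q ∧ u * star u = p0) ∧ ∀ η ∈ D, ‖p η - q η‖ ≤ ε) :
    ∃ v ∈ M, star v * v = p ∧ v * star v = p0 := by
  obtain ⟨v, hvM, hv, hpv⟩ := final1 hF hp hp0 happ
  obtain ⟨w, hwM, hw, hpw⟩ := final1 hF hp.compl hp0.compl (by
    intro D hD ε hε
    obtain ⟨q, hq, ⟨u, huM, hu1, hu2⟩, hqD⟩ := happ D hD ε hε
    refine ⟨1 - q, hq.compl, compl_equiv hF hq huM hu1 hu2, fun η hη => ?_⟩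
    have : (1 - p) η - (1 - q) η = -(p η - q η) := by
      show η - p η - (η - q η) = _
      abel
    rw [this, norm_neg]
    exact hqD η hη)
  have hvPI : PI v := Sb.pi hp hv
  have hwPI : PI w := Sb.pi hp.compl hw
  have hvp : v * p = v := by rw [← hv]; exact hvPI.mul_ss
  have hwp : w * (1 - p) = w := by rw [← hw]; exact hwPI.mul_ss
  have hp0w : p0 * w = 0 := by
    rw [sub_mul, one_mul] at hpw
    exact sub_eq_self.1 hpw
  have hwp' : p * star w = 0 := by
    have h1 : w * p = 0 := by
      rw [mul_sub, mul_one] at hwp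
      exact sub_eq_self.1 hwp
    have := congrArg star h1; rwa [star_mul, hp.sa, star_zero] at this
  have hvw : star v * w = 0 := by
    have h1 : star v * p0 = star v := by
      have := congrArg star hpv; rwa [star_mul, hp0.sa] at this
    rw [← h1, mul_assoc, hp0w, mul_zero]
  have hwv : star w * v = 0 := by
    have := congrArg star hvw; rwa [star_mul, star_star, star_zero] at this
  have hvws : v * star w = 0 := by rw [← hvp, mul_assoc, hwp', mul_zero]
  have hwvs : w * star v = 0 := by
    have := congrArg star hvws; rwa [star_mul, star_star, star_zero] at this
  have hiso := hF (v + w) (add_mem hvM hwM) (by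
    rw [star_add, add_mul, mul_add, mul_add, hv, hw, hvw, hwv]; abel)
  refine ⟨v, hvM, hv, ?_⟩
  rw [star_add, add_mul, mul_add, mul_add, hvws, hwvs, add_zero, zero_add] at hiso
  have := congrArg (p0 * ·) hiso
  simp only [mul_add, ← mul_assoc, hpv, hp0w, zero_mul, add_zero, mul_one] at this
  exact this

lemma PJ_of {M : VonNeumannAlgebra H} {p : H →L[ℂ] H} (h : IsProjIn M p) : PJ M p :=
  ⟨h.1, h.2.1, h.2.2⟩

lemma mvn_iff {M : VonNeumannAlgebra H} {p q : H →L[ℂ] H} :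
    MvNEquiv M p q ↔ ∃ v ∈ M, star v * v = p ∧ v * star v = q := by
  simp only [MvNEquiv, ContinuousLinearMap.star_eq_adjoint]

lemma mvn_equivalence (M : VonNeumannAlgebra H) :
    Equivalence (fun p q : ProjSet M => MvNEquiv M p.1 q.1) where
  refl p := by
    have h := PJ_of p.2
    exact mvn_iff.2 ⟨p.1, h.mem, by rw [h.sa, h.idem], by rw [h.sa, h.idem]⟩
  symm {p q} h := by
    obtain ⟨v, hv, h1, h2⟩ := mvn_iff.1 h
    exact mvn_iff.2 ⟨star v, star_mem hv, by rw [star_star, h2], by rw [star_star, h1]⟩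
  trans {p q t} h h' := by
    obtain ⟨v, hv, h1, h2⟩ := mvn_iff.1 h
    obtain ⟨w, hw, h3, h4⟩ := mvn_iff.1 h'
    have hvPI : PI v := Sb.pi (PJ_of p.2) h1
    have hwPI : PI w := Sb.pi (PJ_of q.2) h3
    refine mvn_iff.2 ⟨w * v, mul_mem hw hv, ?_, ?_⟩
    · rw [star_mul, mul_assoc, ← mul_assoc (star w), h3, ← h2, hvPI, h1]
    · rw [star_mul, mul_assoc, ← mul_assoc v, h2, ← h3, ← mul_assoc, hwPI.mul_ss, h4]

lemma mk_eq {M : VonNeumannAlgebra H} {p q : ProjSet M} :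
    (Quot.mk _ p : PQuot M) = Quot.mk _ q ↔ MvNEquiv M p.1 q.1 := by
  rw [Quot.eq, (mvn_equivalence M).eqvGen_iff]

lemma ev_cont (M : VonNeumannAlgebra H) (ξ : H) : Continuous (fun p : ProjSet M => p.1 ξ) :=
  (continuous_apply ξ).comp (continuous_induced_dom (f := fun p : ProjSet M =>
    (fun ξ => p.1 ξ : H → H)))

end PQ

/-- In a finite von Neumann algebra, singletons of `P(M)/∼` are closed
in the quotient operator topology; that is, the quotient topology is `T₁`. -/
theorem pquot_t1Space (M : VonNeumannAlgebra H)
    (hfin : FiniteProj M (1 : H →L[ℂ] H)) :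
    T1Space (PQuot M) := by
  refine ⟨fun x => ?_⟩
  induction x using Quot.ind with
  | mk p0 =>
  rw [← isQuotientMap_quot_mk.isClosed_preimage]
  refine isClosed_of_closure_subset fun p hp => ?_
  show (Quot.mk _ p : PQuot M) = Quot.mk _ p0
  rw [PQ.mk_eq, PQ.mvn_iff]
  refine PQ.final2 (PQ.fin_of hfin) (PQ.PJ_of p.2) (PQ.PJ_of p0.2) fun D hD ε hε => ?_
  have hN : ∀ᶠ q in 𝓝 p, ∀ η ∈ D, ‖p.1 η - q.1 η‖ < ε := by
    rw [eventually_all_finite hD]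
    intro η _
    have h1 : Continuous fun q : ProjSet M => ‖p.1 η - q.1 η‖ :=
      (continuous_const.sub (PQ.ev_cont M η)).norm
    exact h1.continuousAt.eventually_lt continuousAt_const (by simpa using hε)
  obtain ⟨q, hq, hqN⟩ := (mem_closure_iff_frequently.1 hp).and_eventually hN |>.exists
  have hq' : (Quot.mk _ q : PQuot M) = Quot.mk _ p0 := hq
  rw [PQ.mk_eq, PQ.mvn_iff] at hq'
  exact ⟨q.1, PQ.PJ_of q.2, hq', fun η hη => (hqN η hη).le⟩
end
end

section
/- Let M be a properly infinite von Neumann algebra and p a finite projection in M. Then the QOT-closure of {[p]} in P(M)/∼ equals {[q] : q ≼ p}. -/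
open ContinuousLinearMap Filter Topology

universe u

noncomputable section

variable {H : Type u} [NormedAddCommGroup H] [InnerProductSpace ℂ H] [CompleteSpace H]

theorem qt_eq_zero (x : H →L[ℂ] H) (h : star x * x = 0) : x = 0 := 
  (CStarRing.star_mul_self_eq_zero_iff x).1 h

theorem qt_normsq (x : H →L[ℂ] H) (ξ : H) : ‖x ξ‖ ^ 2 = RCLike.re (inner ℂ ((star x * x) ξ) ξ) := by
  rw [ContinuousLinearMap.apply_norm_sq_eq_inner_adjoint_left]; rfl

/-- projection onto the closed span of a set invariant under the commutant -/
theorem qt_projOn (M : VonNeumannAlgebra H) (S : Set H)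
    (hS : ∀ y ∈ M.commutant, ∀ η ∈ S, y η ∈ S) :
    ∃ s, IsProjIn M s ∧ (∀ η ∈ S, s η = η) ∧
      ∀ x : H →L[ℂ] H, (∀ η ∈ S, x η = 0) → x * s = 0 := by
  set K : Submodule ℂ H := (Submodule.span ℂ S).topologicalClosure with hK
  have hKc : IsClosed (K : Set H) := Submodule.isClosed_topologicalClosure _
  have : CompleteSpace K := hKc.completeSpace_coe
  have hker : ∀ x : H →L[ℂ] H, (∀ η ∈ S, x η = 0) → ∀ η ∈ K, x η = 0 := by
    intro x hx η hη
    have h1 : Submodule.span ℂ S ≤ LinearMap.ker (x : H →ₗ[ℂ] H) := by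
      rw [Submodule.span_le]; intro η hη; exact hx η hη
    have h2 := Submodule.topologicalClosure_minimal _ h1 x.isClosed_ker
    exact h2 hη
  have hsub : ∀ η ∈ S, η ∈ K := fun η hη =>
    Submodule.le_topologicalClosure _ (Submodule.subset_span hη)
  refine ⟨K.starProjection, ⟨?_, isSelfAdjoint_starProjection K, K.isIdempotentElem_starProjection⟩, ?_, ?_⟩
  · rw [VonNeumannAlgebra.IsStarProjection.mem_iff isStarProjection_starProjection]
    intro y hy
    rw [Submodule.range_starProjection, Module.End.mem_invtSubmodule]
    intro η hη
    have h1 : Submodule.span ℂ S ≤ K.comap (y : H →ₗ[ℂ] H) := by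
      rw [Submodule.span_le]; intro η hη; exact hsub _ (hS y hy η hη)
    have h2 := Submodule.topologicalClosure_minimal _ h1 (hKc.preimage y.continuous)
    exact h2 hη
  · intro η hη
    exact Submodule.starProjection_eq_self_iff.2 (hsub η hη)
  · intro x hx
    ext η
    exact hker x hx _ (Submodule.starProjection_apply_mem K η)

theorem qt_cfc_mem (M : VonNeumannAlgebra H) {h : H →L[ℂ] H} (hh : h ∈ M) (f : ℝ → ℝ) :
    cfc f h ∈ M := by
  rw [← VonNeumannAlgebra.commutant_commutant M, VonNeumannAlgebra.mem_commutant_iff]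
  intro g hg
  rw [VonNeumannAlgebra.mem_commutant_iff] at hg
  exact ((show Commute h g from hg h hh).cfc_real f).symm

theorem qt_spec (M : VonNeumannAlgebra H) {x : H →L[ℂ] H} (hx : x ∈ M) {δ : ℝ} (hδ : 0 < δ) :
    ∃ u s c : H →L[ℂ] H, u ∈ M ∧ c ∈ M ∧ IsProjIn M s ∧ star u * u = s ∧ u = x * c ∧
      (∀ r, star r = r → x * r = x → s * r = s ∧ r * s = s) ∧
      (∀ ξ, δ * ‖(star u) ξ‖ ^ 2 ≤ ‖(star x) ξ‖ ^ 2) ∧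
      (∀ ζ, ‖x ζ‖ ^ 2 ≤ ‖x (s ζ)‖ ^ 2 + δ * ‖ζ - s ζ‖ ^ 2) := by
  set h := star x * x with hh
  have hhM : h ∈ M := mul_mem (star_mem hx) hx
  have hsa : IsSelfAdjoint h := IsSelfAdjoint.star_mul_self x
  have hmx : ∀ t : ℝ, max t δ ≠ 0 := fun t => (lt_max_of_lt_right hδ).ne'
  set k := cfc (fun t : ℝ => max (t - δ) 0) h with hk
  set m := cfc (fun t : ℝ => max (t - δ) 0 / max t δ) h with hm
  set b := cfc (fun t : ℝ => (√(max t δ))⁻¹) h with hb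
  have hsq : ∀ t : ℝ, √(max t δ) ≠ 0 := fun t => (Real.sqrt_pos.2 (lt_max_of_lt_right hδ)).ne'
  have cb : Continuous (fun t : ℝ => (√(max t δ))⁻¹) := by
    apply Continuous.inv₀ (by fun_prop) hsq
  have cm : Continuous (fun t : ℝ => max (t - δ) 0 / max t δ) := by
    apply Continuous.div (by fun_prop) (by fun_prop) hmx
  have ck : Continuous (fun t : ℝ => max (t - δ) 0) := by fun_prop
  have hksa : star k = k := (cfc_predicate (fun t : ℝ => max (t - δ) 0) h : IsSelfAdjoint k)
  have hbsa : star b = b := (cfc_predicate (fun t : ℝ => (√(max t δ))⁻¹) h : IsSelfAdjoint b)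
  have hkM : k ∈ M := qt_cfc_mem M hhM _
  have hbM : b ∈ M := qt_cfc_mem M hhM _
  have hkhm : k = h * m := by
    rw [hk, hm]
    nth_rewrite 2 [← cfc_id ℝ h]
    rw [← cfc_mul _ _ h (by fun_prop) cm.continuousOn]
    congr 1; ext t
    rcases le_total t δ with h | h
    · simp [h]
    · have : t ≠ 0 := by linarith
      simp [h]; field_simp
  have hhk : h * k = k * h := ((Commute.refl h).cfc_real _).eq.symm
  have hbhb : b * h * b * k = k := by
    rw [hk, hb]
    nth_rewrite 2 [← cfc_id ℝ h]
    rw [← cfc_mul _ _ h cb.continuousOn (by fun_prop), ← cfc_mul _ _ h (by fun_prop) cb.continuousOn,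
      ← cfc_mul _ _ h (by fun_prop) ck.continuousOn]
    congr 1; ext t
    rcases le_total t δ with h | h
    · simp [h]
    · have h0 : 0 < t := by linarith
      have : √t ≠ 0 := (Real.sqrt_pos.2 h0).ne'
      have h3 : t = √t * √t := (Real.mul_self_sqrt h0.le).symm
      simp [h]
      have : (√t)⁻¹ * t * (√t)⁻¹ = 1 := by
        nth_rewrite 2 [h3]; field_simp
      rw [this, one_mul]
  have hle : h ≤ algebraMap ℝ _ δ + k := by
    have : cfc (fun t : ℝ => δ + max (t - δ) 0) h = algebraMap ℝ _ δ + k := by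
      rw [cfc_const_add _ _ _ ck.continuousOn]
    rw [← this]
    nth_rewrite 1 [← cfc_id ℝ h]
    refine cfc_mono ?_ continuousOn_id (continuous_const.add ck).continuousOn
    intro t _
    simp only [id]
    linarith [le_max_left (t - δ) 0]
  have hbn : ‖b‖ ^ 2 * δ ≤ 1 := by
    have : ‖b‖ ≤ (√δ)⁻¹ := by
      apply norm_cfc_le (by positivity)
      intro t _
      rw [Real.norm_of_nonneg (by positivity)]
      gcongr
      exact le_max_right _ _
    calc ‖b‖ ^ 2 * δ ≤ (√δ)⁻¹ ^ 2 * δ := by gcongr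
      _ = 1 := by rw [inv_pow, Real.sq_sqrt hδ.le]; field_simp
  obtain ⟨s, hs, hs1, hs2⟩ := qt_projOn M (Set.range k) (by
    rintro y hy _ ⟨η, rfl⟩
    rw [VonNeumannAlgebra.mem_commutant_iff] at hy
    exact ⟨y η, congr($(hy k hkM) η)⟩)
  have hs2' : ∀ x : H →L[ℂ] H, x * k = 0 → x * s = 0 := fun x hx => hs2 x (by
    rintro _ ⟨η, rfl⟩; exact congr($hx η))
  have hsk : s * k = k := by ext η; exact hs1 _ ⟨η, rfl⟩
  have hssa : star s = s := hs.2.1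
  have hks : k * s = k := by simpa [hssa, hksa] using congr(star $hsk)
  have hsh' : s * h * s = h * s := by
    have := hs2' ((1 - s) * h) (by rw [mul_assoc, hhk, ← mul_assoc, sub_mul, hsk]; simp)
    rw [sub_mul, sub_mul, one_mul, sub_eq_zero] at this
    exact this.symm
  have hsh : s * h = h * s := by
    have := congr(star $hsh')
    simp only [star_mul, hssa, hsa.star_eq] at this
    rw [← this, ← mul_assoc, hsh']
  have hbs : b * h * b * s = s := by
    have := hs2' (b * h * b - 1) (by rw [sub_mul, hbhb]; simp)
    rw [sub_mul, one_mul, sub_eq_zero] at this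
    exact this
  refine ⟨x * (b * s), s, b * s, mul_mem hx (mul_mem hbM hs.1), mul_mem hbM hs.1, hs, ?_, rfl, ?_, ?_, ?_⟩
  · simp only [star_mul, hssa, hbsa]
    calc s * b * star x * (x * (b * s)) = s * (b * h * b * s) := by rw [hh]; simp only [mul_assoc]
      _ = s := by rw [hbs, hs.2.2]
  · intro r hr hxr
    have h1 : r * h = h := by
      rw [hh, ← mul_assoc]
      have := congr(star $hxr)
      rw [star_mul, hr] at this
      rw [this]
    have h2 : r * s = s := by
      have := hs2' (r - 1) (by rw [sub_mul, hkhm, ← mul_assoc, h1]; simp)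
      rwa [sub_mul, one_mul, sub_eq_zero] at this
    refine ⟨?_, h2⟩
    simpa [hr, hssa] using congr(star $h2)
  · intro ξ
    have h1 : star (x * (b * s)) ξ = s (b (star x ξ)) := by
      simp only [star_mul, hssa, hbsa]; rfl
    have h2 : ∀ η, ‖s η‖ ≤ ‖η‖ := by
      intro η
      have h3 : ‖s η‖ ^ 2 ≤ ‖η‖ * ‖s η‖ := by
        have := qt_normsq s η
        rw [hssa, hs.2.2] at this
        rw [this]
        calc _ ≤ ‖inner ℂ (s η) η‖ := RCLike.re_le_norm _
          _ ≤ ‖s η‖ * ‖η‖ := norm_inner_le_norm _ _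
          _ = _ := mul_comm _ _
      rcases eq_or_lt_of_le (norm_nonneg (s η)) with h | h
      · rw [← h]; positivity
      · nlinarith
    rw [h1]
    calc δ * ‖s (b (star x ξ))‖ ^ 2 ≤ δ * (‖b‖ * ‖star x ξ‖) ^ 2 := by
          gcongr; exact (h2 _).trans (b.le_opNorm _)
      _ = (‖b‖ ^ 2 * δ) * ‖star x ξ‖ ^ 2 := by ring
      _ ≤ 1 * ‖star x ξ‖ ^ 2 := by gcongr
      _ = _ := one_mul _
  · intro ζ
    have hdec : h = s * h * s + (1 - s) * h * (1 - s) := by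
      have : (1 - s) * h * (1 - s) = h - h * s := by
        rw [sub_mul, hsh, one_mul, ← sub_eq_zero]; 
        simp only [mul_sub, sub_mul, mul_one, mul_assoc, hs.2.2]; abel
      rw [this, hsh']; abel
    have e1 : star (x * s) * (x * s) = s * h * s := by
      rw [star_mul, hssa, hh]; simp only [mul_assoc]
    have e2 : star (x * (1 - s)) * (x * (1 - s)) = (1 - s) * h * (1 - s) := by
      rw [star_mul, star_sub, hssa, hh, star_one]; simp only [mul_assoc]
    have n0 : ‖x ζ‖ ^ 2 = ‖x (s ζ)‖ ^ 2 + ‖x (ζ - s ζ)‖ ^ 2 := by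
      have := qt_normsq (x * s) ζ
      have t2 := qt_normsq (x * (1 - s)) ζ
      have t3 := qt_normsq x ζ
      rw [e1] at this
      rw [e2] at t2
      rw [← hh, hdec, add_apply, inner_add_left, map_add, ← this, ← t2] at t3
      exact t3
    have n1 : ‖x (ζ - s ζ)‖ ^ 2 ≤ δ * ‖ζ - s ζ‖ ^ 2 := by
      set η := ζ - s ζ with hη
      have hkη : k η = 0 := by
        have : k (s ζ) = k ζ := congr($hks ζ)
        rw [hη, map_sub, this, sub_self]
      rw [qt_normsq, ← hh]
      have := (ContinuousLinearMap.le_def _ _).1 hle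
      have := this.re_inner_nonneg_left η
      simp only [sub_apply, add_apply, hkη, add_zero, inner_sub_left, map_sub] at this
      have h5 : RCLike.re (inner ℂ ((algebraMap ℝ (H →L[ℂ] H) δ) η) η) = δ * ‖η‖ ^ 2 := by
        have : (algebraMap ℝ (H →L[ℂ] H) δ) η = (δ : ℂ) • η := by
          rw [Algebra.algebraMap_eq_smul_one]; simp
        rw [this, inner_smul_left]
        simp [inner_self_eq_norm_sq_to_K, ← Complex.ofReal_pow]
      linarith
    linarith

set_option linter.unusedSectionVars false
theorem qt_r {a b c : H →L[ℂ] H} (h : a * b = c) (x : H →L[ℂ] H) : a * (b * x) = c * x := by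
  rw [← mul_assoc, h]

theorem qt_pi_right {v e : H →L[ℂ] H} (h : star v * v = e) (he : e * e = e) : v * e = v := by
  have hes : star e = e := by rw [← h]; simp
  have : v * e - v = 0 := by
    apply qt_eq_zero
    simp only [star_sub, star_mul, hes, mul_sub, sub_mul]
    simp only [mul_assoc, qt_r h, h, he, sub_self]
  exact sub_eq_zero.1 this

theorem qt_norm_le {e : H →L[ℂ] H} (he : star e = e) (he2 : e * e = e) (η : H) : ‖e η‖ ≤ ‖η‖ := by
  have h3 : ‖e η‖ ^ 2 ≤ ‖η‖ * ‖e η‖ := by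
    have := qt_normsq e η
    rw [he, he2] at this
    rw [this]
    calc _ ≤ ‖inner ℂ (e η) η‖ := RCLike.re_le_norm _
      _ ≤ ‖e η‖ * ‖η‖ := norm_inner_le_norm _ _
      _ = _ := mul_comm _ _
  rcases eq_or_lt_of_le (norm_nonneg (e η)) with h | h
  · rw [← h]; positivity
  · nlinarith

theorem qt_norm_eq {v e : H →L[ℂ] H} (h : star v * v = e) (he : e * e = e) (η : H) :
    ‖v η‖ = ‖e η‖ := by
  have hes : star e = e := by rw [← h]; simp
  have h1 := qt_normsq v η
  have h2 := qt_normsq e η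
  rw [hes, he, ← h, ← h1] at h2
  rw [h] at h2
  exact ((sq_eq_sq₀ (norm_nonneg _) (norm_nonneg _)).1 h2).symm

/-- partial isometries of `M` -/
structure QPI (M : VonNeumannAlgebra H) (v : H →L[ℂ] H) : Prop where
  mem : v ∈ M
  pi : v * star v * v = v

theorem QPI.star {M : VonNeumannAlgebra H} {v : H →L[ℂ] H} (h : QPI M v) : QPI M (star v) :=
  ⟨star_mem h.mem, by simpa [mul_assoc] using congr(Star.star $(h.pi))⟩

theorem QPI.pi' {M : VonNeumannAlgebra H} {v : H →L[ℂ] H} (h : QPI M v) :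
    v * (Star.star v * v) = v := by rw [← mul_assoc, h.pi]

theorem QPI.idem {M : VonNeumannAlgebra H} {v : H →L[ℂ] H} (h : QPI M v) :
    (Star.star v * v) * (Star.star v * v) = Star.star v * v := by
  rw [mul_assoc, h.pi']

theorem QPI.proj {M : VonNeumannAlgebra H} {v : H →L[ℂ] H} (h : QPI M v) :
    IsProjIn M (Star.star v * v) :=
  ⟨mul_mem (star_mem h.mem) h.mem, IsSelfAdjoint.star_mul_self v, h.idem⟩

theorem QPI.proj' {M : VonNeumannAlgebra H} {v : H →L[ℂ] H} (h : QPI M v) :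
    IsProjIn M (v * Star.star v) := by
  simpa using h.star.proj

theorem QPI.norm_le {M : VonNeumannAlgebra H} {v : H →L[ℂ] H} (h : QPI M v) (ξ : H) :
    ‖v ξ‖ ≤ ‖ξ‖ := by
  rw [qt_norm_eq rfl h.idem]
  exact qt_norm_le h.proj.2.1 h.proj.2.2 ξ

theorem QPI.of {M : VonNeumannAlgebra H} {v e : H →L[ℂ] H} (hv : v ∈ M)
    (h : Star.star v * v = e) (he : e * e = e) : QPI M v := ⟨hv, by rw [mul_assoc, h, qt_pi_right h he]⟩

/-- `w` extends `v` -/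
def QExt (v w : H →L[ℂ] H) : Prop := w * (star v * v) = v ∧ (v * star v) * w = v

theorem QExt.star {v w : H →L[ℂ] H} (h : QExt v w) : QExt (star v) (star w) := by
  have h1 := congr(Star.star $(h.1))
  have h2 := congr(Star.star $(h.2))
  simp only [star_mul, star_star] at h1 h2
  refine ⟨?_, ?_⟩
  · simpa using h2
  · simpa using h1

theorem QExt.star_mul {M : VonNeumannAlgebra H} {v w : H →L[ℂ] H} (hv : QPI M v) (h : QExt v w) :
    Star.star w * v = Star.star v * v := by
  have h2 := h.star.1
  simp only [star_star] at h2
  calc Star.star w * v = Star.star w * (v * Star.star v * v) := by rw [hv.pi]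
    _ = _ := by rw [← mul_assoc, h2]

theorem QExt.star_mul' {M : VonNeumannAlgebra H} {v w : H →L[ℂ] H} (hv : QPI M v) (h : QExt v w) :
    Star.star v * w = Star.star v * v := by
  simpa using congr(Star.star $(h.star_mul hv))

theorem QExt.refl {M : VonNeumannAlgebra H} {v : H →L[ℂ] H} (hv : QPI M v) : QExt v v :=
  ⟨hv.pi', hv.pi⟩

theorem QExt.trans1 {M : VonNeumannAlgebra H} {v w t : H →L[ℂ] H} (hv : QPI M v)
    (h1 : QExt v w) (h2 : QExt w t) : t * (Star.star v * v) = v := by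
  have h3 : (Star.star w * w) * (Star.star v * v) = Star.star v * v := by
    rw [mul_assoc, h1.1, h1.star_mul hv]
  rw [← h3, ← mul_assoc, h2.1, h1.1]

theorem QExt.trans {M : VonNeumannAlgebra H} {v w t : H →L[ℂ] H} (hv : QPI M v)
    (h1 : QExt v w) (h2 : QExt w t) : QExt v t := by
  refine ⟨h1.trans1 hv h2, ?_⟩
  have := QExt.trans1 hv.star h1.star h2.star
  simpa using congr(Star.star $this)

theorem qt_ext_normsq {M : VonNeumannAlgebra H} {v w : H →L[ℂ] H} (hv : QPI M v)
    (h : QExt v w) (ξ : H) : ‖w ξ - v ξ‖ ^ 2 = ‖w ξ‖ ^ 2 - ‖v ξ‖ ^ 2 := by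
  have h1 := qt_normsq (w - v) ξ
  have : star (w - v) * (w - v) = star w * w - star v * v := by
    simp only [star_sub, mul_sub, sub_mul, h.star_mul hv, h.star_mul' hv]; abel
  rw [this, sub_apply, sub_apply, inner_sub_left, map_sub, ← qt_normsq, ← qt_normsq] at h1
  exact h1

theorem qt_lim_aux (M : VonNeumannAlgebra H) {ι : Type*} [Preorder ι] [IsDirectedOrder ι]
    [Nonempty ι] (v : ι → H →L[ℂ] H) (hv : ∀ i, QPI M (v i))
    (hmono : ∀ i j, i ≤ j → QExt (v i) (v j)) :
    ∃ w : H →L[ℂ] H, ∀ ξ, Tendsto (fun i => v i ξ) atTop (𝓝 (w ξ)) := by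
  have hc : ∀ ξ, ∃ η, Tendsto (fun i => v i ξ) atTop (𝓝 η) := by
    intro ξ
    apply CompleteSpace.complete
    rw [Metric.cauchy_iff]
    refine ⟨inferInstance, fun ε hε => ?_⟩
    have hm : Monotone (fun i => ‖v i ξ‖ ^ 2) := by
      intro i j hij
      have := qt_ext_normsq (hv i) (hmono i j hij) ξ
      have := sq_nonneg ‖v j ξ - v i ξ‖
      simp only; linarith
    have hb : BddAbove (Set.range (fun i => ‖v i ξ‖ ^ 2)) := by
      refine ⟨‖ξ‖ ^ 2, ?_⟩
      rintro _ ⟨i, rfl⟩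
      simp only
      gcongr
      exact (hv i).norm_le ξ
    have ht := tendsto_atTop_ciSup hm hb
    set L := ⨆ i, ‖v i ξ‖ ^ 2
    have hle : ∀ i, ‖v i ξ‖ ^ 2 ≤ L := fun i => le_ciSup hb i
    obtain ⟨i, hi⟩ := (ht.eventually (lt_mem_nhds (show L - (ε / 2) ^ 2 < L by
      have : 0 < (ε / 2) ^ 2 := by positivity
      linarith))).exists
    have key : ∀ j, i ≤ j → ‖v j ξ - v i ξ‖ < ε / 2 := by
      intro j hj
      have h1 := qt_ext_normsq (hv i) (hmono i j hj) ξ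
      have h2 := hle j
      have : ‖v j ξ - v i ξ‖ ^ 2 < (ε / 2) ^ 2 := by linarith
      exact lt_of_pow_lt_pow_left₀ 2 (by positivity) this
    refine ⟨(fun i => v i ξ) '' Set.Ici i, Filter.image_mem_map (Ici_mem_atTop i), ?_⟩
    rintro _ ⟨j, hj, rfl⟩ _ ⟨k, hk, rfl⟩
    calc dist (v j ξ) (v k ξ) ≤ dist (v j ξ) (v i ξ) + dist (v k ξ) (v i ξ) :=
          dist_triangle_right _ _ _
      _ < ε := by
        rw [dist_eq_norm, dist_eq_norm]
        linarith [key j hj, key k hk]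
  choose f hf using hc
  let g : H →ₗ[ℂ] H := linearMapOfTendsto f (fun i => (v i : H →ₗ[ℂ] H))
    (tendsto_pi_nhds.2 hf : Tendsto (fun i x => (v i : H →ₗ[ℂ] H) x) atTop (𝓝 f))
  refine ⟨g.mkContinuous 1 ?_, ?_⟩
  · intro ξ
    rw [one_mul]
    exact le_of_tendsto (hf ξ).norm (Eventually.of_forall fun i => (hv i).norm_le ξ)
  · intro ξ
    exact hf ξ

theorem qt_tend_mul {ι : Type*} {l : Filter ι} {v : ι → H →L[ℂ] H} {w : H →L[ℂ] H}
    (h : ∀ ξ, Tendsto (fun i => v i ξ) l (𝓝 (w ξ))) (a b : H →L[ℂ] H) (ξ : H) :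
    Tendsto (fun i => (a * v i * b) ξ) l (𝓝 ((a * w * b) ξ)) :=
  (a.continuous.tendsto _).comp (h (b ξ))

theorem qt_tend_unique {ι : Type*} {l : Filter ι} [l.NeBot] {v v' : ι → H →L[ℂ] H}
    {w w' : H →L[ℂ] H}
    (h : ∀ ξ, Tendsto (fun i => v i ξ) l (𝓝 (w ξ)))
    (h' : ∀ ξ, Tendsto (fun i => v' i ξ) l (𝓝 (w' ξ))) (he : ∀ᶠ i in l, v i = v' i) : w = w' := by
  ext ξ
  refine tendsto_nhds_unique (h ξ) ((h' ξ).congr' ?_)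
  filter_upwards [he] with i hi
  rw [hi]

theorem qt_lim (M : VonNeumannAlgebra H) {ι : Type*} [Preorder ι] [IsDirectedOrder ι]
    [Nonempty ι] (v : ι → H →L[ℂ] H) (hv : ∀ i, QPI M (v i))
    (hmono : ∀ i j, i ≤ j → QExt (v i) (v j)) :
    ∃ w : H →L[ℂ] H, QPI M w ∧ (∀ i, QExt (v i) w) ∧
      (∀ ξ, Tendsto (fun i => v i ξ) atTop (𝓝 (w ξ))) ∧
      (∀ ξ, Tendsto (fun i => star (v i) ξ) atTop (𝓝 (star w ξ))) := by
  obtain ⟨w, hw⟩ := qt_lim_aux M v hv hmono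
  obtain ⟨w', hw'⟩ := qt_lim_aux M (fun i => star (v i)) (fun i => (hv i).star)
    (fun i j hij => (hmono i j hij).star)
  have hww : w' = star w := by
    rw [star_eq_adjoint, eq_adjoint_iff]
    intro ξ η
    refine tendsto_nhds_unique ((hw' ξ).inner (tendsto_const_nhds (x := η))) ?_
    refine (Tendsto.inner (tendsto_const_nhds (x := ξ)) (hw η)).congr fun i => ?_
    rw [star_eq_adjoint, adjoint_inner_left]
  rw [hww] at hw'
  have c1 : ∀ (a : H →L[ℂ] H) ξ, Tendsto (fun _ : ι => a ξ) atTop (𝓝 (a ξ)) :=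
    fun a ξ => tendsto_const_nhds
  have hext1 : ∀ i, w * (star (v i) * v i) = v i := by
    intro i
    have := qt_tend_mul hw 1 (star (v i) * v i)
    simp only [one_mul] at this
    refine qt_tend_unique this (c1 _) ?_
    filter_upwards [Ici_mem_atTop i] with j hj
    exact (hmono i j hj).1
  have hext2 : ∀ i, (v i * star (v i)) * w = v i := by
    intro i
    have := qt_tend_mul hw (v i * star (v i)) 1
    simp only [mul_one] at this
    refine qt_tend_unique this (c1 _) ?_
    filter_upwards [Ici_mem_atTop i] with j hj
    exact (hmono i j hj).2
  have hext : ∀ i, QExt (v i) w := fun i => ⟨hext1 i, hext2 i⟩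
  have hwM : w ∈ M := by
    rw [← VonNeumannAlgebra.commutant_commutant M, VonNeumannAlgebra.mem_commutant_iff]
    intro y hy
    rw [VonNeumannAlgebra.mem_commutant_iff] at hy
    have h1 := qt_tend_mul hw y 1
    have h2 := qt_tend_mul hw 1 y
    simp only [mul_one, one_mul] at h1 h2
    exact qt_tend_unique h1 h2 (Eventually.of_forall fun i => (hy _ (hv i).mem).symm)
  refine ⟨w, ⟨hwM, ?_⟩, hext, hw, hw'⟩
  have h1 := qt_tend_mul hw (w * star w) 1
  simp only [mul_one] at h1
  refine qt_tend_unique h1 hw (Eventually.of_forall fun i => ?_)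
  rw [mul_assoc, (hext i).star_mul (hv i), hext1]

theorem qt_pyth {v u : H →L[ℂ] H} (h : star v * u = 0) (ξ : H) :
    ‖(v + u) ξ‖ ^ 2 = ‖v ξ‖ ^ 2 + ‖u ξ‖ ^ 2 := by
  have h' : star u * v = 0 := by simpa using congr(star $h)
  rw [qt_normsq, qt_normsq, qt_normsq]
  have : star (v + u) * (v + u) = star v * v + star u * u := by
    simp only [star_add, mul_add, add_mul, h, h']; abel
  rw [this, add_apply, inner_add_left, map_add]

structure QIdx {T : Type*} (c : Set T) where
  val : T
  mem : val ∈ c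

theorem qt_zorn (M : VonNeumannAlgebra H) (e f : H →L[ℂ] H) (ξ : H) :
    ∃ v, QPI M v ∧ v * e = v ∧ f * v = v ∧ 2 * ‖star v ξ‖ ^ 2 ≤ ‖v ξ‖ ^ 2 ∧
      ∀ u, QPI M u → u * e = u → f * u = u → u * star v = 0 → star v * u = 0 →
        2 * ‖star u ξ‖ ^ 2 ≤ ‖u ξ‖ ^ 2 → u = 0 := by
  let P : (H →L[ℂ] H) → Prop := fun v =>
    QPI M v ∧ v * e = v ∧ f * v = v ∧ 2 * ‖star v ξ‖ ^ 2 ≤ ‖v ξ‖ ^ 2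
  have hP0 : P 0 := ⟨⟨zero_mem M, by simp⟩, by simp, by simp, by simp⟩
  obtain ⟨⟨v, hv⟩, hmax⟩ := exists_maximal_of_chains_bounded
    (r := fun a b : {v // P v} => QExt a.1 b.1) (by
      intro c hc
      rcases c.eq_empty_or_nonempty with rfl | hne
      · exact ⟨⟨0, hP0⟩, by simp⟩
      let _ : Preorder (QIdx c) :=
        { le := fun a b => QExt a.val.1 b.val.1
          le_refl := fun a => QExt.refl a.val.2.1
          le_trans := fun a b d h1 h2 => QExt.trans a.val.2.1 h1 h2 }
      have : Nonempty (QIdx c) := ⟨⟨hne.choose, hne.choose_spec⟩⟩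
      have : IsDirectedOrder (QIdx c) := ⟨by
        intro a b
        by_cases hab : a.val = b.val
        · refine ⟨b, ?_, le_refl b⟩
          change QExt a.val.1 b.val.1
          rw [hab]
          exact QExt.refl b.val.2.1
        · rcases hc a.mem b.mem hab with h | h
          · exact ⟨b, h, le_refl b⟩
          · exact ⟨a, le_refl a, h⟩⟩
      obtain ⟨w, hw, hext, h1, h2⟩ := qt_lim M (fun i : QIdx c => i.val.1) (fun i => i.val.2.1)
        (fun i j hij => hij)
      refine ⟨⟨w, hw, ?_, ?_, ?_⟩, fun a ha => hext ⟨a, ha⟩⟩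
      · have := qt_tend_mul h1 1 e
        simp only [one_mul] at this
        exact qt_tend_unique this h1 (Eventually.of_forall fun i => i.val.2.2.1)
      · have := qt_tend_mul h1 f 1
        simp only [mul_one] at this
        exact qt_tend_unique this h1 (Eventually.of_forall fun i => i.val.2.2.2.1)
      · exact le_of_tendsto_of_tendsto (((h2 ξ).norm.pow 2).const_mul 2) ((h1 ξ).norm.pow 2)
          (Eventually.of_forall fun i => i.val.2.2.2.2))
    (fun {a b d} h1 h2 => QExt.trans a.2.1 h1 h2)
  refine ⟨v, hv.1, hv.2.1, hv.2.2.1, hv.2.2.2, ?_⟩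
  intro u hu hue hfu huv hvu hn
  have huv' : v * star u = 0 := by simpa using congr(star $huv)
  have hvu' : star u * v = 0 := by simpa using congr(star $hvu)
  have hsum : star (v + u) * (v + u) = star v * v + star u * u := by
    simp only [star_add, mul_add, add_mul, hvu, hvu']; abel
  have hb := hmax ⟨v + u, ⟨add_mem hv.1.mem hu.mem, ?_⟩, ?_, ?_, ?_⟩ ⟨?_, ?_⟩
  · have := hb.1
    simp only [hsum, mul_add, ← mul_assoc, hv.1.pi, huv', zero_mul, add_zero] at this
    simpa using this
  · rw [mul_assoc, hsum]
    simp only [mul_add, add_mul, ← mul_assoc, hv.1.pi, hu.pi, huv, huv', zero_mul, add_zero, zero_add]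
  · rw [add_mul, hv.2.1, hue]
  · rw [mul_add, hv.2.2.1, hfu]
  · rw [qt_pyth hvu, star_add, qt_pyth (by simpa using huv')]
    linarith [hv.2.2.2]
  · simp only [add_mul, ← mul_assoc, hv.1.pi, huv, zero_mul, add_zero]
  · simp only [mul_add, mul_assoc, hvu, mul_zero, add_zero, hv.1.pi']

theorem qt_nonzero (M : VonNeumannAlgebra H) {x : H →L[ℂ] H} (hx : x ∈ M) (h0 : x ≠ 0) :
    ∃ u, QPI M u ∧ u ≠ 0 ∧ (∃ c ∈ M, u = x * c) ∧ ∀ r, star r = r → x * r = x → u * r = u := by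
  have hn : 0 < ‖x‖ := norm_pos_iff.2 h0
  obtain ⟨u, s, c, hu, hc, hs, hus, huc, hr, -, hz⟩ := qt_spec M hx (δ := ‖x‖ ^ 2 / 4) (by positivity)
  refine ⟨u, QPI.of hu hus hs.2.2, ?_, ⟨c, hc, huc⟩, ?_⟩
  · rintro rfl
    have hs0 : s = 0 := by rw [← hus]; simp
    have : ‖x‖ ≤ ‖x‖ / 2 := by
      apply x.opNorm_le_bound (by positivity)
      intro ζ
      have := hz ζ
      simp only [hs0, zero_apply, map_zero, norm_zero, sub_zero] at this
      apply le_of_sq_le_sq _ (by positivity)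
      nlinarith
    linarith
  · intro r h1 h2
    have := (hr r h1 h2).1
    have h3 := qt_pi_right hus hs.2.2
    rw [← h3, mul_assoc, this]

theorem qt_compare (M : VonNeumannAlgebra H) {e f : H →L[ℂ] H} (he : IsProjIn M e)
    (hf : IsProjIn M f) :
    ∃ v z, QPI M v ∧ v * e = v ∧ f * v = v ∧ IsCentralProj M z ∧
      z * (e - star v * v) = e - star v * v ∧ z * (f - v * star v) = 0 := by
  obtain ⟨v, hv, hve, hfv, -, hmax⟩ := qt_zorn M e f 0
  set e1 := e - star v * v with he1
  set f1 := f - v * star v with hf1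
  have hes : star e = e := he.2.1
  have hfs : star f = f := hf.2.1
  have hev : e * star v = star v := by simpa [hes] using congr(star $hve)
  have hvf : star v * f = star v := by simpa [hfs] using congr(star $hfv)
  have he1s : star e1 = e1 := by simp [he1, hes]
  have hf1s : star f1 = f1 := by simp [hf1, hfs]
  have hp : v * (star v * v) = v := hv.pi'
  have hp' : star v * (v * star v) = star v := by simpa using hv.star.pi'
  have he1i : e1 * e1 = e1 := by
    simp only [he1, mul_sub, sub_mul, mul_assoc, he.2.2, hve, qt_r hev, hp]; abel
  have hf1i : f1 * f1 = f1 := by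
    simp only [hf1, mul_sub, sub_mul, mul_assoc, hf.2.2, hvf, qt_r hfv, hp']; abel
  have hee1 : e1 * e = e1 := by simp only [he1, sub_mul, mul_assoc, he.2.2, hve]
  have hff1 : f * f1 = f1 := by simp only [hf1, mul_sub, hf.2.2, qt_r hfv]
  have he1v : e1 * star v = 0 := by simp only [he1, sub_mul, mul_assoc, hp', hev, sub_self]
  have hvf1 : star v * f1 = 0 := by simp only [hf1, mul_sub, hp', hvf, sub_self]
  have he1M : e1 ∈ M := sub_mem he.1 hv.proj.1
  have hf1M : f1 ∈ M := sub_mem hf.1 hv.proj'.1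
  have key : ∀ m ∈ M, f1 * m * e1 = 0 := by
    intro m hm
    by_contra hne
    obtain ⟨u, hu, hu0, ⟨c, hc, huc⟩, hr⟩ := qt_nonzero M (mul_mem (mul_mem hf1M hm) he1M) hne
    have hue1 : u * e1 = u := hr e1 he1s (by rw [mul_assoc, he1i])
    have hf1u : f1 * u = u := by rw [huc]; simp only [← mul_assoc, hf1i]
    apply hu0
    apply hmax u hu
    · rw [← hue1, mul_assoc, hee1]
    · rw [← hf1u, ← mul_assoc, hff1]
    · rw [← hue1, mul_assoc, he1v, mul_zero]
    · rw [← hf1u, ← mul_assoc, hvf1, zero_mul]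
    · simp
  obtain ⟨z, hz, hz1, hz2⟩ := qt_projOn M {ζ | ∃ m ∈ M, ∃ η, ζ = m (e1 η)} (by
    rintro y hy _ ⟨m, hm, η, rfl⟩
    rw [VonNeumannAlgebra.mem_commutant_iff] at hy
    refine ⟨m, hm, y η, ?_⟩
    have h1 := congr($(hy m hm) (e1 η))
    have h2 := congr($(hy e1 he1M) η)
    simp only [ContinuousLinearMap.mul_apply] at h1 h2
    rw [← h1, ← h2])
  have hzs : star z = z := hz.2.1
  have hinv : ∀ m ∈ M, z * m * z = m * z := by
    intro m hm
    have := hz2 ((1 - z) * m) (by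
      rintro _ ⟨m', hm', η, rfl⟩
      have := hz1 (m (m' (e1 η))) ⟨m * m', mul_mem hm hm', η, rfl⟩
      simp [sub_mul, this])
    rw [sub_mul, sub_mul, one_mul, sub_eq_zero] at this
    exact this.symm
  have hcent : ∀ m ∈ M, z * m = m * z := by
    intro m hm
    have h1 := hinv m hm
    have h2 := congr(star $(hinv (star m) (star_mem hm)))
    simp only [star_mul, star_star, hzs] at h2
    calc z * m = z * (m * z) := h2.symm
      _ = m * z := by rw [← mul_assoc, h1]
  refine ⟨v, z, hv, hve, hfv, ⟨hz, hcent⟩, ?_, ?_⟩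
  · ext η
    exact hz1 _ ⟨1, one_mem M, η, rfl⟩
  · rw [hcent _ hf1M]
    apply hz2
    rintro _ ⟨m, hm, η, rfl⟩
    exact congr($(key m hm) η)

theorem qt_fin_use {M : VonNeumannAlgebra H} {p T : H →L[ℂ] H} (hp : IsProjIn M p)
    (hfin : FiniteProj M p) (hT : T ∈ M) (h1 : star T * T = p) (h2 : p * T = T) :
    T * star T = p := by
  have hq := QPI.of hT h1 hp.2.2
  refine hfin _ hq.proj' ⟨?_, ?_⟩ ⟨T, hT, h1, rfl⟩
  · have := congr(star $h2)
    rw [star_mul, hp.2.1.star_eq] at this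
    rw [mul_assoc, this]
  · rw [← mul_assoc, h2]

theorem qt_fin_sub {M : VonNeumannAlgebra H} {p r : H →L[ℂ] H} (hp : IsProjIn M p)
    (hfin : FiniteProj M p) (hr : IsProjIn M r) (hrp : ProjLE r p) : FiniteProj M r := by
  rintro q hq ⟨h1, h2⟩ ⟨x, hxM, hx1, hx2⟩
  replace hx1 : star x * x = r := hx1
  replace hx2 : x * star x = q := hx2
  have hrs : star r = r := hr.2.1
  have hps : star p = p := hp.2.1
  have hxr : x * r = x := qt_pi_right hx1 hr.2.2
  have hrx : r * star x = star x := by simpa [hrs] using congr(star $hxr)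
  have hqx : q * x = x := by rw [← hx2, mul_assoc, hx1, hxr]
  have hrx2 : r * x = x := by rw [← hqx, ← mul_assoc, h2]
  have hxr2 : star x * r = star x := by simpa [hrs] using congr(star $hrx2)
  have hpx : p * x = x := by rw [← hrx2, ← mul_assoc, hrp.2]
  have hxp : star x * p = star x := by simpa [hps] using congr(star $hpx)
  have hxp2 : x * p = x := by rw [← hxr, mul_assoc, hrp.1]
  have hpx2 : p * star x = star x := by simpa [hps] using congr(star $hxp2)
  have := qt_fin_use hp hfin (T := x + (p - r)) (add_mem hxM (sub_mem hp.1 hr.1)) (by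
    simp only [star_add, star_sub, hps, hrs, mul_add, add_mul, mul_sub, sub_mul, hx1, hxp, hxr2, hp.2.2,
      hr.2.2, hrp.1, hrp.2, hpx, hrx2]; abel) (by
    simp only [mul_add, mul_sub, hpx, hp.2.2, hrp.2])
  simp only [star_add, star_sub, hps, hrs, mul_add, add_mul, mul_sub, sub_mul, hx2, hp.2.2,
      hr.2.2, hrp.1, hrp.2, hxp2, hxr, hpx2, hrx] at this
  have h3 : q - r = 0 := by
    rw [← sub_eq_zero] at this
    rw [← this]; abel
  exact sub_eq_zero.1 h3

theorem qt_cancel {M : VonNeumannAlgebra H} {q x : H →L[ℂ] H} (hq : IsProjIn M q)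
    (hfin : FiniteProj M q) (hx : QPI M x) (hxq : x * q = x) (hqx : q * x = x) :
    ∃ w ∈ M, star w * w = q - star x * x ∧ w * star w = q - x * star x := by
  have hqs : star q = q := hq.2.1
  have hxq' : star x * q = star x := by simpa [hqs] using congr(star $hqx)
  have hqx' : q * star x = star x := by simpa [hqs] using congr(star $hxq)
  have hp : x * (star x * x) = x := hx.pi'
  have hp' : star x * (x * star x) = star x := by simpa using hx.star.pi'
  have hA : IsProjIn M (q - star x * x) := ⟨sub_mem hq.1 hx.proj.1, hq.2.1.sub hx.proj.2.1, by
    simp only [mul_sub, sub_mul, mul_assoc, hq.2.2, hxq, qt_r hqx', hp]; abel⟩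
  have hB : IsProjIn M (q - x * star x) := ⟨sub_mem hq.1 hx.proj'.1, hq.2.1.sub hx.proj'.2.1, by
    simp only [mul_sub, sub_mul, mul_assoc, hq.2.2, hxq', qt_r hqx, hp']; abel⟩
  obtain ⟨v, z, hv, hvA, hBv, hz, hz1, hz2⟩ := qt_compare M hA hB
  set A := q - star x * x with hAd
  set B := q - x * star x with hBd
  have hzs : star z = z := hz.1.2.1
  have hzz : z * z = z := hz.1.2.2
  have hAs : star A = A := hA.2.1
  have hBs : star B = B := hB.2.1
  have hAv : A * star v = star v := by simpa [hAs] using congr(star $hvA)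
  have hvB : star v * B = star v := by simpa [hBs] using congr(star $hBv)
  have hqA : q * A = A := by simp only [hAd, mul_sub, hq.2.2, qt_r hqx']
  have hqB : q * B = B := by simp only [hBd, mul_sub, hq.2.2, qt_r hqx]
  have hqv : q * v = v := by rw [← hBv, ← mul_assoc, hqB]
  have hqv' : q * star v = star v := by rw [← hAv, ← mul_assoc, hqA]
  have hxA : x * A = 0 := by simp only [hAd, mul_sub, hp, hxq, sub_self]
  have hxB : star x * B = 0 := by simp only [hBd, mul_sub, hp', hxq', sub_self]
  have hxv : x * star v = 0 := by rw [← hAv, ← mul_assoc, hxA, zero_mul]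
  have hxv' : star x * v = 0 := by rw [← hBv, ← mul_assoc, hxB, zero_mul]
  have hvx : v * star x = 0 := by simpa using congr(star $hxv)
  have hvx' : star v * x = 0 := by simpa using congr(star $hxv')
  set Y := x + v with hY
  have hYM : Y ∈ M := add_mem hx.mem hv.mem
  have hY1 : star Y * Y = q - (A - star v * v) := by
    simp only [hY, star_add, mul_add, add_mul, hxv', hvx', hAd]; abel
  have hY2 : Y * star Y = q - (B - v * star v) := by
    simp only [hY, star_add, mul_add, add_mul, hxv, hvx, hBd]; abel
  have hqY : q * Y = Y := by rw [hY, mul_add, hqx, hqv]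
  have hqY' : q * star Y = star Y := by rw [hY, star_add, mul_add, hqx', hqv']
  have cY : Y * z = z * Y := (hz.2 _ hYM).symm
  have cY' : star Y * z = z * star Y := (hz.2 _ (star_mem hYM)).symm
  have cq : q * z = z * q := (hz.2 _ hq.1).symm
  have hT := qt_fin_use hq hfin (T := Y - z * Y + z * star Y)
    (add_mem (sub_mem hYM (mul_mem hz.1.1 hYM)) (mul_mem hz.1.1 (star_mem hYM))) (by
      have : star (Y - z * Y + z * star Y) * (Y - z * Y + z * star Y)
        = star Y * Y - z * (star Y * Y) + z * (Y * star Y) := by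
        simp only [star_add, star_sub, star_mul, star_star, hzs, mul_add, add_mul, mul_sub, sub_mul,
          mul_assoc, qt_r hzz, qt_r cY, qt_r cY']; abel
      rw [this, hY1, hY2, mul_sub z q (A - star v * v), mul_sub z q (B - v * star v), hz1, hz2]; abel) (by
      simp only [mul_add, mul_sub, qt_r cq, mul_assoc, hqY, hqY'])
  have hT2 : (Y - z * Y + z * star Y) * star (Y - z * Y + z * star Y)
        = Y * star Y - z * (Y * star Y) + z * (star Y * Y) := by
    simp only [star_add, star_sub, star_mul, star_star, hzs, mul_add, add_mul, mul_sub, sub_mul,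
          mul_assoc, qt_r hzz, qt_r cY, qt_r cY', cY, cY']; abel
  rw [hT2, hY1, hY2, mul_sub z q (A - star v * v), mul_sub z q (B - v * star v), hz1, hz2] at hT
  have hsum : (B - v * star v) + (A - star v * v) = 0 := by
    rw [← sub_eq_zero] at hT
    rw [← neg_eq_zero, ← hT]; abel
  have hA0 : A - star v * v = 0 := by
    have := congr(z * $hsum)
    rwa [mul_add, hz1, hz2, zero_add, mul_zero] at this
  rw [hA0, add_zero] at hsum
  exact ⟨v, hv.mem, (sub_eq_zero.1 hA0).symm, (sub_eq_zero.1 hsum).symm⟩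

theorem qt_star_l {p x : H →L[ℂ] H} (hp : star p = p) (h : p * x = x) : star x * p = star x := by
  simpa [hp] using congr(star $h)

theorem qt_star_r {p x : H →L[ℂ] H} (hp : star p = p) (h : x * p = x) : p * star x = star x := by
  simpa [hp] using congr(star $h)

theorem qt_quasi {M : VonNeumannAlgebra H} {p0 : H →L[ℂ] H} (hp0 : IsProjIn M p0)
    (hfin : FiniteProj M p0) (h0 : p0 ≠ 0) :
    ∃ a b w, ∃ ξ : H, IsProjIn M a ∧ IsProjIn M b ∧ w ∈ M ∧ star w * w = a ∧ w * star w = b ∧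
      b ≠ 0 ∧ p0 * b = b ∧ (∀ g, IsProjIn M g → g * a = g → g ξ = 0 → g = 0) ∧
      ∀ u, QPI M u → u * a = u → b * u = u → ‖u ξ‖ ^ 2 ≤ 2 * ‖star u ξ‖ ^ 2 := by
  obtain ⟨ξ, hξ, hξ0⟩ : ∃ ξ, p0 ξ = ξ ∧ ξ ≠ 0 := by
    by_contra hcon
    push Not at hcon
    apply h0
    ext η
    exact hcon (p0 η) congr($(hp0.2.2) η)
  obtain ⟨s, hs, hs1, hs2⟩ := qt_projOn M {ζ | ∃ y ∈ M.commutant, ζ = y ξ} (by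
    rintro y hy _ ⟨y', hy', rfl⟩
    exact ⟨y * y', mul_mem hy hy', rfl⟩)
  have hcomm : ∀ g ∈ M, ∀ y ∈ M.commutant, g (y ξ) = y (g ξ) := by
    intro g hg y hy
    rw [VonNeumannAlgebra.mem_commutant_iff] at hy
    exact congr($(hy g hg) ξ)
  have hsξ : s ξ = ξ := hs1 ξ ⟨1, one_mem _, rfl⟩
  have hss : star s = s := hs.2.1
  have hps : p0 * s = s := by
    have := hs2 (1 - p0) (by
      rintro _ ⟨y, hy, rfl⟩
      simp [hcomm p0 hp0.1 y hy, hξ])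
    rw [sub_mul, one_mul, sub_eq_zero] at this
    exact this.symm
  have hsp : s * p0 = s := by simpa [hss] using qt_star_l hp0.2.1 hps
  have hsfin := qt_fin_sub hp0 hfin hs ⟨hsp, hps⟩
  obtain ⟨v, hv, hvs, hsv, hvn, hmax⟩ := qt_zorn M s s ξ
  obtain ⟨w, hwM, hw1, hw2⟩ := qt_cancel hs hsfin hv hvs hsv
  have hw : QPI M w := by
    refine QPI.of hwM hw1 ?_
    simp only [mul_sub, sub_mul, mul_assoc, hs.2.2, hvs, qt_r (qt_star_r hss hvs), hv.pi']; abel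
  have hp' : star v * (v * star v) = star v := by simpa using hv.star.pi'
  have hav : (s - star v * v) * star v = 0 := by
    simp only [sub_mul, mul_assoc, hp', qt_star_r hss hvs, sub_self]
  have hvb : star v * (s - v * star v) = 0 := by
    simp only [mul_sub, hp', qt_star_l hss hsv, sub_self]
  have has : (s - star v * v) * s = s - star v * v := by
    simp only [sub_mul, mul_assoc, hs.2.2, hvs]
  have hsb : s * (s - v * star v) = s - v * star v := by
    simp only [mul_sub, hs.2.2, qt_r hsv]
  refine ⟨s - star v * v, s - v * star v, w, ξ, hw1 ▸ hw.proj, hw2 ▸ hw.proj', hwM, hw1, hw2,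
    ?_, ?_, ?_, ?_⟩
  · intro hb
    have h1 : star (star v) * star v = s := by rw [star_star]; exact (sub_eq_zero.1 hb).symm
    have h2 := qt_norm_eq h1 hs.2.2 ξ
    rw [hsξ] at h2
    have h3 := hv.norm_le ξ
    have h4 : 0 < ‖ξ‖ := norm_pos_iff.2 hξ0
    rw [h2] at hvn
    nlinarith [norm_nonneg (v ξ)]
  · rw [mul_sub, ← mul_assoc, hps, ← hsv, ← mul_assoc, hps]
  · intro g hg hga hgξ
    have h1 := hs2 g (by
      rintro _ ⟨y, hy, rfl⟩
      rw [hcomm g hg.1 y hy, hgξ, map_zero])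
    rw [← hga, ← has, ← mul_assoc, hga, h1]
  · intro u hu hua hbu
    by_contra hcon
    push Not at hcon
    have hu0 := hmax u hu (by rw [← hua, mul_assoc, has]) (by rw [← hbu, ← mul_assoc, hsb])
      (by rw [← hua, mul_assoc, hav, mul_zero]) (by rw [← hbu, ← mul_assoc, hvb, zero_mul])
      hcon.le
    simp [hu0] at hcon

structure QQ (M : VonNeumannAlgebra H) (a b w : H →L[ℂ] H) (ξ : H) : Prop where
  ha : IsProjIn M a
  hb : IsProjIn M b
  hw : w ∈ M
  w1 : star w * w = a
  w2 : w * star w = b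
  faith : ∀ g, IsProjIn M g → g * a = g → g ξ = 0 → g = 0
  quasi : ∀ u, QPI M u → u * a = u → b * u = u → ‖u ξ‖ ^ 2 ≤ 2 * ‖star u ξ‖ ^ 2

def QGen (M : VonNeumannAlgebra H) (b q : H →L[ℂ] H) : Prop :=
  ∃ (κ : Type) (_ : Fintype κ) (y : κ → H →L[ℂ] H), (∀ k, y k ∈ M ∧ y k * b = y k) ∧
    q = ∑ k, y k * star (y k)

theorem QGen.zero (M : VonNeumannAlgebra H) (b : H →L[ℂ] H) : QGen M b 0 :=
  ⟨Empty, inferInstance, fun _ => 0, by simp, by simp⟩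

theorem QGen.single {M : VonNeumannAlgebra H} {b y : H →L[ℂ] H} (hy : y ∈ M) (h : y * b = y) :
    QGen M b (y * star y) :=
  ⟨Unit, inferInstance, fun _ => y, by simp [hy, h], by simp⟩

theorem QGen.add {M : VonNeumannAlgebra H} {b q r : H →L[ℂ] H} (hq : QGen M b q)
    (hr : QGen M b r) : QGen M b (q + r) := by
  obtain ⟨κ, _, y, hy, rfl⟩ := hq
  obtain ⟨κ', _, y', hy', rfl⟩ := hr
  refine ⟨κ ⊕ κ', inferInstance, Sum.elim y y', ?_, by simp⟩
  rintro (k | k)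
  · exact hy k
  · exact hy' k

theorem QGen.conj {M : VonNeumannAlgebra H} {b q m : H →L[ℂ] H} (hq : QGen M b q)
    (hm : m ∈ M) : QGen M b (m * q * star m) := by
  obtain ⟨κ, _, y, hy, rfl⟩ := hq
  refine ⟨κ, inferInstance, fun k => m * y k, fun k => ⟨mul_mem hm (hy k).1, ?_⟩, ?_⟩
  · rw [mul_assoc, (hy k).2]
  · simp [Finset.mul_sum, Finset.sum_mul, mul_assoc]

theorem qt_K_bound {M : VonNeumannAlgebra H} {a b w x r : H →L[ℂ] H} {ξ : H} (hQ : QQ M a b w ξ)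
    (hx : x ∈ M) (hxa : x * a = x) (hbx : b * x = x) (hr : IsProjIn M r) (hxr : x * r = x)
    (hn : ∀ ζ, ‖x ζ‖ ≤ ‖ζ‖) {δ : ℝ} (hδ : 0 < δ) :
    ‖x ξ‖ ^ 2 ≤ 2 * δ⁻¹ * ‖star x ξ‖ ^ 2 + δ * ‖r ξ‖ ^ 2 := by
  obtain ⟨u, s, c, hu, hc, hs, hus, huc, hsr, h1, h2⟩ := qt_spec M hx hδ
  have hup := QPI.of hu hus hs.2.2
  have hsu := qt_pi_right hus hs.2.2
  have h3 := h2 (r ξ)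
  have e1 : x (r ξ) = x ξ := congr($hxr ξ)
  have e2 : s (r ξ) = s ξ := congr($((hsr r hr.2.1 hxr).1) ξ)
  have h4 : ‖x (s ξ)‖ ≤ ‖s ξ‖ := hn _
  have h5 : ‖r ξ - s (r ξ)‖ ≤ ‖r ξ‖ := by
    have := qt_norm_le (e := 1 - s) (by rw [star_sub, star_one, hs.2.1.star_eq])
      (by simp only [mul_sub, sub_mul, hs.2.2, one_mul, mul_one]; abel) (r ξ)
    simpa using this
  rw [e1, e2] at h3
  rw [e2] at h5
  have h6 := qt_norm_eq hus hs.2.2 ξ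
  have h7 := hQ.quasi u hup (by rw [← hsu, mul_assoc, (hsr a hQ.ha.2.1 hxa).1])
    (by rw [huc, ← mul_assoc, hbx])
  rw [h6] at h7
  have h8 : ‖star u ξ‖ ^ 2 ≤ δ⁻¹ * ‖star x ξ‖ ^ 2 := by
    rw [inv_mul_eq_div, le_div_iff₀ hδ]
    linarith [h1 ξ]
  have h9 : ‖x (s ξ)‖ ^ 2 ≤ ‖s ξ‖ ^ 2 := by gcongr
  have h10 : ‖r ξ - s ξ‖ ^ 2 ≤ ‖r ξ‖ ^ 2 := by gcongr
  nlinarith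

theorem qt_K {M : VonNeumannAlgebra H} {a b w q d : H →L[ℂ] H} {ξ : H} (hQ : QQ M a b w ξ)
    (hgen : QGen M b q) {ι : Type*} (l : Filter ι) [NeBot l] (hd : IsProjIn M d)
    (v : ι → H →L[ℂ] H) (hv : ∀ i, v i ∈ M) (hvd : ∀ i, star (v i) * v i = d)
    (hqv : ∀ i, q * v i = v i) (hlim : ∀ η, Tendsto (fun i => star (v i) η) l (𝓝 0)) : d = 0 := by
  by_contra hd0
  obtain ⟨κ, _, y, hy, hq⟩ := hgen
  obtain ⟨i0⟩ : Nonempty ι := l.nonempty_of_neBot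
  obtain ⟨k0, hk0⟩ : ∃ k, star (v i0) * y k ≠ 0 := by
    by_contra hcon
    push Not at hcon
    apply hd0
    have hz : v i0 = 0 := by
      rw [← hqv i0, hq, Finset.sum_mul]
      apply Finset.sum_eq_zero
      intro k _
      have := congr(star $(hcon k))
      simp only [star_mul, star_star, star_zero] at this
      rw [mul_assoc, this, mul_zero]
    rw [← hvd i0, hz, mul_zero]
  have hwa := qt_pi_right hQ.w1 hQ.ha.2.2
  obtain ⟨u, hu, hu0, ⟨c, hc, huc⟩, hur⟩ := qt_nonzero M
    (x := star (v i0) * y k0 * w) (mul_mem (mul_mem (star_mem (hv i0)) (hy k0).1) hQ.hw) (by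
      intro h
      apply hk0
      have := congr($h * star w)
      rwa [mul_assoc, hQ.w2, mul_assoc, (hy k0).2, zero_mul] at this)
  have hua : u * a = u := hur a hQ.ha.2.1 (by rw [mul_assoc, hwa])
  have hdu : d * u = u := by
    have := qt_star_r hd.2.1 (qt_pi_right (hvd i0) hd.2.2)
    rw [huc, ← mul_assoc, ← mul_assoc, ← mul_assoc, this]
  have hf0 := hu.proj
  have huf : u * (star u * u) = u := hu.pi'
  have hsum : ∀ i, ∑ k, star (star (y k) * (v i * u)) * (star (y k) * (v i * u)) = star u * u := by
    intro i
    have : ∀ k, star (star (y k) * (v i * u)) * (star (y k) * (v i * u))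
      = star u * star (v i) * (y k * star (y k)) * (v i * u) := by
      intro k; simp only [star_mul, star_star, mul_assoc]
    simp only [this]
    rw [← Finset.sum_mul, ← Finset.mul_sum, ← hq]
    rw [mul_assoc, ← mul_assoc q, hqv, mul_assoc, ← mul_assoc (star (v i)), hvd, hdu]
  have hsumn : ∀ i ζ, ∑ k, ‖(star (y k) * (v i * u)) ζ‖ ^ 2 = ‖u ζ‖ ^ 2 := by
    intro i ζ
    simp only [qt_normsq]
    rw [← map_sum, ← sum_inner, ← hsum i, sum_apply]
  set δ : ℝ := 1 / (2 * (Fintype.card κ + 1)) with hδ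
  have hδ0 : 0 < δ := by positivity
  have hδn : Fintype.card κ * δ ≤ 1 / 2 := by
    rw [hδ, mul_one_div, div_le_div_iff₀ (by positivity) (by positivity)]
    linarith
  have hbound : ∀ i, ‖u ξ‖ ^ 2 ≤ 2 * ∑ k, 2 * δ⁻¹ * ‖star (v i) (y k ξ)‖ ^ 2 := by
    intro i
    have hk : ∀ k, ‖(star (y k) * (v i * u)) ξ‖ ^ 2 ≤
        2 * δ⁻¹ * ‖star (v i) (y k ξ)‖ ^ 2 + δ * ‖u ξ‖ ^ 2 := by
      intro k
      have h1 := qt_K_bound hQ (x := star (y k) * (v i * u)) (r := star u * u)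
        (mul_mem (star_mem (hy k).1) (mul_mem (hv i) hu.mem))
        (by simp only [mul_assoc, hua])
        (by rw [← mul_assoc, qt_star_r hQ.hb.2.1 (hy k).2]) hf0
        (by simp only [mul_assoc, huf])
        (by
          intro ζ
          have h2 : ‖(star (y k) * (v i * u)) ζ‖ ^ 2 ≤ ‖u ζ‖ ^ 2 := by
            rw [← hsumn i ζ]
            exact Finset.single_le_sum (f := fun k => ‖(star (y k) * (v i * u)) ζ‖ ^ 2)
              (fun _ _ => by positivity) (Finset.mem_univ k)
          exact (le_of_sq_le_sq h2 (norm_nonneg _)).trans (hu.norm_le ζ)) hδ0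
      have h3 : ‖star (star (y k) * (v i * u)) ξ‖ ≤ ‖star (v i) (y k ξ)‖ := by
        simp only [star_mul, star_star]
        exact hu.star.norm_le _
      have h4 : ‖star (star (y k) * (v i * u)) ξ‖ ^ 2 ≤ ‖star (v i) (y k ξ)‖ ^ 2 := by gcongr
      rw [← qt_norm_eq rfl hf0.2.2 ξ] at h1
      have h5 := mul_le_mul_of_nonneg_left h4 (show 0 ≤ 2 * δ⁻¹ by positivity)
      linarith
    have h6 := Finset.sum_le_sum (s := Finset.univ) (fun k _ => hk k)
    rw [hsumn, Finset.sum_add_distrib, Finset.sum_const, Finset.card_univ, nsmul_eq_mul,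
      ← mul_assoc] at h6
    have h7 := mul_le_mul_of_nonneg_right hδn (show 0 ≤ ‖u ξ‖ ^ 2 by positivity)
    linarith
  have hto : Tendsto (fun i => 2 * ∑ k, 2 * δ⁻¹ * ‖star (v i) (y k ξ)‖ ^ 2) l (𝓝 0) := by
    have : Tendsto (fun i => 2 * ∑ k, 2 * δ⁻¹ * ‖star (v i) (y k ξ)‖ ^ 2) l
        (𝓝 (2 * ∑ k : κ, 2 * δ⁻¹ * ‖(0 : H)‖ ^ 2)) :=
      (tendsto_finsetSum _ fun k _ => (((hlim (y k ξ)).norm.pow 2).const_mul _)).const_mul 2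
    simpa using this
  have hF := ge_of_tendsto hto (Eventually.of_forall hbound)
  have hn0 : ‖u ξ‖ = 0 := by
    have : 0 ≤ ‖u ξ‖ := norm_nonneg _
    nlinarith
  rw [qt_norm_eq rfl hf0.2.2 ξ, norm_eq_zero] at hn0
  have := hQ.faith _ hf0 (by rw [mul_assoc, hua]) hn0
  exact hu0 (qt_eq_zero _ this)

theorem qt_gen_fin {M : VonNeumannAlgebra H} {a b w q : H →L[ℂ] H} {ξ : H} (hQ : QQ M a b w ξ)
    (hgen : QGen M b q) (hq : IsProjIn M q) : FiniteProj M q := by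
  rintro s hs ⟨h1, h2⟩ ⟨x, hxM, hx1, hx2⟩
  replace hx1 : star x * x = q := hx1
  replace hx2 : x * star x = s := hx2
  have hqs : star q = q := hq.2.1
  have hss : star s = s := hs.2.1
  have hxq : x * q = x := qt_pi_right hx1 hq.2.2
  have hsx : s * x = x := by rw [← hx2, mul_assoc, hx1, hxq]
  have hqx : q * x = x := by rw [← hsx, ← mul_assoc, h2]
  have hxq' := qt_star_l hqs hqx
  have hd : IsProjIn M (q - s) := ⟨sub_mem hq.1 hs.1, hq.2.1.sub hs.2.1, by
    simp only [mul_sub, sub_mul, hq.2.2, hs.2.2, h1, h2]; abel⟩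
  have hds : star (q - s) = q - s := hd.2.1
  have hqd : q * (q - s) = q - s := by simp only [mul_sub, hq.2.2, h2]
  have hpow : ∀ n, q * (x ^ n * (q - s)) = x ^ n * (q - s) ∧
      star (x ^ n * (q - s)) * (x ^ n * (q - s)) = q - s := by
    intro n
    induction n with
    | zero => simp [hqd, hd.2.2, hds, -star_sub]
    | succ n ih =>
      refine ⟨by rw [pow_succ', mul_assoc, qt_r hqx], ?_⟩
      rw [pow_succ', mul_assoc, star_mul, mul_assoc, qt_r hx1, ih.1, ih.2]
  have hqd0 := qt_K hQ hgen (atTop : Filter ℕ) hd (fun n => x ^ n * (q - s))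
    (fun n => mul_mem (pow_mem hxM n) hd.1) (fun n => (hpow n).2) (fun n => (hpow n).1) (by
      intro η
      have hstep : ∀ n, ‖star (x ^ n * (q - s)) η‖ ^ 2 =
          ‖q (star (x ^ n) η)‖ ^ 2 - ‖q (star (x ^ (n + 1)) η)‖ ^ 2 := by
        intro n
        have e1 : q (star (x ^ (n + 1)) η) = star x (star (x ^ n) η) := by
          have : q * star (x ^ (n + 1)) = star x * star (x ^ n) := by
            rw [pow_succ, star_mul, ← mul_assoc, qt_star_r hqs hxq]
          exact congr($this η)
        have e2 : star (x ^ n * (q - s)) η = (q - s) (star (x ^ n) η) := by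
          rw [star_mul, hds]; rfl
        rw [e1, e2]
        have e3 := qt_norm_eq (v := star x) (e := s) (by rw [star_star, hx2]) hs.2.2 (star (x ^ n) η)
        rw [e3]
        have e4 := qt_pyth (v := s) (u := q - s) (by rw [hss, mul_sub, h1, hs.2.2, sub_self])
          (star (x ^ n) η)
        rw [add_sub_cancel] at e4
        linarith
      have hanti : Antitone fun n => ‖q (star (x ^ n) η)‖ ^ 2 := antitone_nat_of_succ_le fun n => by
        have := hstep n
        have h0 : 0 ≤ ‖star (x ^ n * (q - s)) η‖ ^ 2 := by positivity
        linarith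
      have hbdd : BddBelow (Set.range fun n => ‖q (star (x ^ n) η)‖ ^ 2) :=
        ⟨0, by rintro _ ⟨n, rfl⟩; positivity⟩
      have ht := tendsto_atTop_ciInf hanti hbdd
      have ht2 := ht.sub (ht.comp (tendsto_add_atTop_nat 1))
      rw [sub_self] at ht2
      have ht3 : Tendsto (fun n => ‖star (x ^ n * (q - s)) η‖ ^ 2) atTop (𝓝 0) := by
        refine ht2.congr fun n => ?_
        simp only [Function.comp]
        rw [hstep n]
      rw [tendsto_zero_iff_norm_tendsto_zero]
      have ht4 := ht3.sqrt
      simpa using ht4)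
  exact (sub_eq_zero.1 hqd0).symm

theorem qt_D_inf {M : VonNeumannAlgebra H} {p b : H →L[ℂ] H} (hp : IsProjIn M p)
    (hfin : FiniteProj M p) (hb : IsProjIn M b) (G : (H →L[ℂ] H) → Prop) (hG0 : G 0)
    (hGp : ∀ E, G E → IsProjIn M E ∧ p * E = E)
    (hG : ∀ E, G E → ∃ w ∈ M, star w * w = b ∧ (p - E) * w = w ∧ G (E + w * star w)) : b = 0 := by
  choose! W hWM hWb hWp hWG using hG
  let E : ℕ → H →L[ℂ] H := fun n => Nat.rec 0 (fun _ E => E + W E * star (W E)) n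
  have hE0 : E 0 = 0 := rfl
  let w : ℕ → H →L[ℂ] H := fun n => W (E n)
  have hES : ∀ n, E (n + 1) = E n + w n * star (w n) := fun n => rfl
  have hGE : ∀ n, G (E n) := by
    intro n
    induction n with
    | zero => exact hG0
    | succ n ih => exact hWG _ ih
  have hwM : ∀ n, w n ∈ M := fun n => hWM _ (hGE n)
  have hwb : ∀ n, star (w n) * w n = b := fun n => hWb _ (hGE n)
  have hwp : ∀ n, (p - E n) * w n = w n := fun n => hWp _ (hGE n)
  clear_value w
  clear_value E
  have hwb' : ∀ n, w n * b = w n := fun n => qt_pi_right (hwb n) hb.2.2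
  have hpE : ∀ n, p * E n = E n := fun n => (hGp _ (hGE n)).2
  have hEs : ∀ n, star (E n) = E n := fun n => (hGp _ (hGE n)).1.2.1
  have hEE : ∀ n, E n * E n = E n := fun n => (hGp _ (hGE n)).1.2.2
  have hEp : ∀ n, E n * p = E n := fun n => by simpa [hEs] using qt_star_l hp.2.1 (hpE n)
  have hEw : ∀ n, E n * w n = 0 := by
    intro n
    have h1 := hwp n
    rw [← h1, ← mul_assoc, mul_sub, hEp, hEE, sub_self, zero_mul]
  have hwE : ∀ n, star (w n) * E n = 0 := fun n => by simpa [hEs] using congr(star $(hEw n))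
  have hpw : ∀ n, p * w n = w n := by
    intro n
    have h1 := hwp n
    rwa [sub_mul, hEw, sub_zero] at h1
  have hE1w : ∀ n, E (n + 1) * w n = w n := by
    intro n
    rw [hES, add_mul, hEw, mul_assoc, hwb, hwb', zero_add]
  have hE1E : ∀ n, E (n + 1) * E n = E n := by
    intro n
    rw [hES, add_mul, hEE, mul_assoc, hwE, mul_zero, add_zero]
  have hEw0 : ∀ n, E (n + 1) * w 0 = w 0 := by
    intro n
    induction n with
    | zero => exact hE1w 0
    | succ n ih => rw [← ih, ← mul_assoc, hE1E]
  have hw0w : ∀ n, star (w 0) * w (n + 1) = 0 := by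
    intro n
    rw [← hEw0 n, star_mul, hEs, mul_assoc, hEw, mul_zero]
  let V : ℕ → H →L[ℂ] H := fun n => Nat.rec 0 (fun n v => v + w (n + 1) * star (w n)) n
  have hV0 : V 0 = 0 := rfl
  have hVS : ∀ n, V (n + 1) = V n + w (n + 1) * star (w n) := fun n => rfl
  clear_value V
  have hinv : ∀ n, V n ∈ M ∧ star (V n) * V n = E n ∧ E (n + 1) * V n = V n ∧
      star (w 0) * V n = 0 := by
    intro n
    induction n with
    | zero => simp [hV0, hE0, zero_mem]
    | succ n ih =>
      obtain ⟨i1, i2, i3, i4⟩ := ih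
      have hVw : star (V n) * w (n + 1) = 0 := by
        rw [← i3, star_mul, hEs, mul_assoc, hEw, mul_zero]
      have hwV : star (w (n + 1)) * V n = 0 := by simpa using congr(star $hVw)
      refine ⟨by rw [hVS]; exact add_mem i1 (mul_mem (hwM _) (star_mem (hwM _))), ?_, ?_, ?_⟩
      · rw [hVS, hES, star_add, star_mul, star_star, mul_add, add_mul, add_mul, i2,
          ← mul_assoc (star (V n)), hVw, mul_assoc (w n), hwV, mul_assoc (w n),
          ← mul_assoc (star (w (n + 1))), hwb, ← mul_assoc, hwb', zero_mul, mul_zero, add_zero, zero_add]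
      · rw [hVS, mul_add, ← mul_assoc, hE1w]
        nth_rw 1 [← i3]
        rw [← mul_assoc, hE1E, i3]
      · rw [hVS, mul_add, i4, ← mul_assoc, hw0w, zero_mul, add_zero]
  have hVE : ∀ n, V n * E n = V n := fun n => qt_pi_right (hinv n).2.1 (hEE n)
  have hQ : ∀ n, QPI M (V n) := fun n => QPI.of (hinv n).1 (hinv n).2.1 (hEE n)
  have hstep : ∀ n, QExt (V n) (V (n + 1)) := by
    intro n
    obtain ⟨i1, i2, i3, i4⟩ := hinv n
    have hVw : star (V n) * w (n + 1) = 0 := by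
      rw [← i3, star_mul, hEs, mul_assoc, hEw, mul_zero]
    constructor
    · rw [i2, hVS, add_mul, hVE, mul_assoc, hwE, mul_zero, add_zero]
    · rw [hVS, mul_add, (hQ n).pi, mul_assoc, ← mul_assoc (star (V n)), hVw, zero_mul, mul_zero,
        add_zero]
  have hmono : ∀ i j, i ≤ j → QExt (V i) (V j) := by
    intro i j hij
    induction j, hij using Nat.le_induction with
    | base => exact QExt.refl (hQ i)
    | succ j _ ih => exact QExt.trans (hQ i) ih (hstep j)
  obtain ⟨v, hv, hext, ht, -⟩ := qt_lim M V hQ hmono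
  have hlimL : ∀ m, (∀ n, m * V n = V n) → m * v = v := by
    intro m hm
    have := qt_tend_mul ht m 1
    simp only [mul_one] at this
    exact qt_tend_unique this ht (Eventually.of_forall hm)
  have hvp : v * p = v := by
    have := qt_tend_mul ht 1 p
    simp only [one_mul] at this
    refine qt_tend_unique this ht (Eventually.of_forall fun n => ?_)
    change V n * p = V n
    rw [← hVE, mul_assoc, hEp]
  have hpv : p * v = v := hlimL p fun n => by
    rw [← (hinv n).2.2.1, ← mul_assoc, hpE]
  have hvvE : ∀ n, star v * v * E n = E n := by
    intro n
    have h1 := (hext n).1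
    rw [(hinv n).2.1] at h1
    have h2 := QExt.star_mul (hQ n) (hext n)
    rw [mul_assoc, h1, h2, (hinv n).2.1]
  have hvv : star v * v * v = v := hlimL _ fun n => by
    rw [← (hinv n).2.2.1, ← mul_assoc, hvvE]
  have hps : star p = p := hp.2.1
  have hw0v : (1 - w 0 * star (w 0)) * v = v := hlimL _ fun n => by
    rw [sub_mul, mul_assoc, (hinv n).2.2.2, mul_zero, one_mul, sub_zero]
  have hw0v' : star (w 0) * v = 0 := by
    rw [← hw0v, ← mul_assoc, mul_sub, ← mul_assoc, hwb, mul_one]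
    have := qt_star_r hb.2.1 (hwb' 0)
    rw [this, sub_self, zero_mul]
  have hvw : star v * w 0 = 0 := by simpa using congr(star $hw0v')
  have hvv1 : star v * (v * v) = v := by rw [← mul_assoc, hvv]
  have hvv2 : star v * (star v * v) = star v := by
    simpa [mul_assoc] using congr(star $hvv)
  have hpv' := qt_star_r hps hvp
  have hvp' := qt_star_l hps hpv
  have hpi := hv.pi'
  have hpi' : star v * (v * star v) = star v := by simpa using hv.star.pi'
  have hT := qt_fin_use hp hfin (T := v + (p - star v * v))
    (add_mem hv.mem (sub_mem hp.1 hv.proj.1)) (by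
      simp only [star_add, star_sub, star_mul, star_star, hps, mul_add, add_mul, mul_sub, sub_mul,
        mul_assoc, hvv1, hvv2, hpv, hvp, hpv', hvp', hp.2.2, qt_r hpv', hpi]; abel)
    (by simp only [mul_add, mul_sub, hpv, hp.2.2, qt_r hpv'])
  simp only [star_add, star_sub, star_mul, star_star, hps, mul_add, add_mul, mul_sub, sub_mul,
        mul_assoc, hvv1, hvv2, hpv, hvp, hpv', hvp', hp.2.2, qt_r hpv', hpi, hpi'] at hT
  have hT2 : v * star v = star v * v := by
    rw [← sub_eq_zero] at hT
    rw [← sub_eq_zero, ← hT]; abel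
  have hw0 : w 0 = 0 := by
    have h1 : star v * v * w 0 = w 0 := by rw [← hE1w 0, ← mul_assoc, hvvE]
    rw [← h1, ← hT2, mul_assoc, hvw, mul_zero]
  rw [← hwb 0, hw0, mul_zero]

theorem qt_D {M : VonNeumannAlgebra H} {p b : H →L[ℂ] H} (hp : IsProjIn M p)
    (hfin : FiniteProj M p) (hb : IsProjIn M b) (hb0 : b ≠ 0) :
    ∃ z, IsCentralProj M z ∧ z * b ≠ 0 ∧ QGen M b (z * p) := by
  by_cases hG : ∀ E, (IsProjIn M E ∧ p * E = E ∧ QGen M b E) →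
      ∃ w ∈ M, star w * w = b ∧ (p - E) * w = w
  · exfalso
    apply hb0
    refine qt_D_inf hp hfin hb (fun E => IsProjIn M E ∧ p * E = E ∧ QGen M b E)
      ⟨⟨zero_mem M, IsSelfAdjoint.zero _, by simp⟩, by simp, QGen.zero M b⟩
      (fun E hE => ⟨hE.1, hE.2.1⟩) ?_
    intro E hE
    obtain ⟨w, hw, hwb, hpw⟩ := hG E hE
    have hwq := QPI.of hw hwb hb.2.2
    have hEp : E * p = E := by
      simpa [hE.1.2.1.star_eq] using qt_star_l hp.2.1 hE.2.1
    have hEw : E * w = 0 := by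
      rw [← hpw, ← mul_assoc, mul_sub, hEp, hE.1.2.2, sub_self, zero_mul]
    have hwE : star w * E = 0 := by simpa [hE.1.2.1.star_eq] using congr(star $hEw)
    have hpw' : p * w = w := by rwa [sub_mul, hEw, sub_zero] at hpw
    refine ⟨w, hw, hwb, hpw, ⟨add_mem hE.1.1 hwq.proj'.1, hE.1.2.1.add hwq.proj'.2.1, ?_⟩, ?_, ?_⟩
    · rw [mul_add, add_mul, add_mul, hE.1.2.2, mul_assoc w, hwE, ← mul_assoc E, hEw, hwq.proj'.2.2]
      simp
    · rw [mul_add, hE.2.1, ← mul_assoc, hpw']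
    · exact hE.2.2.add (QGen.single hw (qt_pi_right hwb hb.2.2))
  · push Not at hG
    obtain ⟨E, ⟨hE, hpE, hgE⟩, hno⟩ := hG
    have hEp : E * p = E := by
      simpa [hE.2.1.star_eq] using qt_star_l hp.2.1 hpE
    have hpE' : IsProjIn M (p - E) := ⟨sub_mem hp.1 hE.1, hp.2.1.sub hE.2.1, by
      simp only [mul_sub, sub_mul, hp.2.2, hE.2.2, hpE, hEp]; abel⟩
    obtain ⟨v, z, hv, hvb, hpv, hz, hz1, hz2⟩ := qt_compare M hb hpE'
    refine ⟨z, hz, ?_, ?_⟩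
    · intro hzb
      apply hno v hv.mem _ hpv
      have hzv : z * (star v * v) = 0 := by
        have := qt_star_r hb.2.1 hvb
        rw [← this, ← mul_assoc, ← mul_assoc, hzb, zero_mul, zero_mul]
      rw [mul_sub, hzb, hzv, sub_zero] at hz1
      exact (sub_eq_zero.1 hz1.symm).symm
    · have hzs : star z = z := hz.1.2.1
      have hzz : z * z = z := hz.1.2.2
      have e1 : z * p = z * E * star z + (z * v) * star (z * v) := by
        have e2 : z * E * star z = z * E := by
          rw [hzs, mul_assoc, ← hz.2 E hE.1, ← mul_assoc, hzz]
        have e3 : (z * v) * star (z * v) = z * (v * star v) := by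
          rw [star_mul, hzs, ← hz.2 _ (star_mem hv.mem), mul_assoc, ← mul_assoc v, ← hz.2 _ hv.mem]
          simp only [mul_assoc, qt_r hzz]
        rw [e2, e3]
        have : z * (p - E - v * star v) = z * p - z * E - z * (v * star v) := by
          simp only [mul_sub]
        rw [hz2] at this
        rw [← sub_eq_zero, this]; abel
      rw [e1]
      exact (hgE.conj hz.1.1).add (QGen.single (mul_mem hz.1.1 hv.mem) (by rw [mul_assoc, hvb]))

theorem QPI.cent {M : VonNeumannAlgebra H} {v z : H →L[ℂ] H} (hv : QPI M v)
    (hz : IsCentralProj M z) : QPI M (z * v) := by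
  refine ⟨mul_mem hz.1.1 hv.mem, ?_⟩
  have hzz : z * z = z := hz.1.2.2
  have hzs : Star.star z = z := hz.1.2.1
  have h1 : v * z = z * v := (hz.2 _ hv.mem).symm
  have h2 : Star.star v * z = z * Star.star v := (hz.2 _ (star_mem hv.mem)).symm
  simp only [star_mul, hzs, mul_assoc, qt_r hzz, qt_r h1, qt_r h2, h1, h2, hv.pi']

theorem qt_main {M : VonNeumannAlgebra H} {p q : H →L[ℂ] H} (hp : IsProjIn M p)
    (hfin : FiniteProj M p) (hq : IsProjIn M q) {ι : Type*} (l : Filter ι) [NeBot l]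
    (Q x : ι → H →L[ℂ] H) (hQ : ∀ i, IsProjIn M (Q i)) (hxM : ∀ i, x i ∈ M)
    (hx1 : ∀ i, star (x i) * x i = Q i) (hpx : ∀ i, p * x i = x i)
    (hlim : ∀ η, Tendsto (fun i => Q i η) l (𝓝 (q η))) :
    ∃ v ∈ M, star v * v = q ∧ p * v = v := by
  obtain ⟨v, z, hv, hvq, hpv, hz, hz1, hz2⟩ := qt_compare M hq hp
  by_cases he0 : q - star v * v = 0
  · exact ⟨v, hv.mem, (sub_eq_zero.1 he0).symm, hpv⟩
  exfalso
  have hqs : star q = q := hq.2.1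
  have hps : star p = p := hp.2.1
  have hveq : v * (q - star v * v) = 0 := by rw [mul_sub, hvq, hv.pi', sub_self]
  have heq' : (q - star v * v) * q = q - star v * v := by
    simp only [sub_mul, mul_assoc, hq.2.2, hvq]
  have heM : q - star v * v ∈ M := sub_mem hq.1 hv.proj.1
  have hes : star (q - star v * v) = q - star v * v := by
    simp only [star_sub, star_mul, star_star, hqs]
  have hee : (q - star v * v) * (q - star v * v) = q - star v * v := by
    rw [sub_mul, mul_assoc (star v), hveq, mul_zero, sub_zero]
    simpa [hqs] using congr(star $heq')
  set e := q - star v * v with he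
  clear_value e
  obtain ⟨i0, hi0⟩ : ∃ i, e * Q i ≠ 0 := by
    by_contra hcon
    push Not at hcon
    apply he0
    have h1 := qt_tend_mul hlim e 1
    simp only [mul_one] at h1
    rw [← heq']
    exact qt_tend_unique (v' := fun _ => (0 : H →L[ℂ] H)) h1 (fun ξ => by simp)
      (Eventually.of_forall hcon)
  obtain ⟨u, hu, hu0, ⟨c, hc, huc⟩, hur⟩ := qt_nonzero M (x := x i0 * e)
    (mul_mem (hxM i0) heM) (by
      intro h
      apply hi0
      have h1 : Q i0 * e = 0 := by rw [← hx1, mul_assoc, h, mul_zero]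
      simpa [hes, (hQ i0).2.1.star_eq] using congr(star $h1))
  have hue : u * e = u := hur e hes (by rw [mul_assoc, hee])
  have hpu : p * u = u := by
    rw [huc, ← mul_assoc, ← mul_assoc, hpx]
  have hp0fin : FiniteProj M (u * star u) := qt_fin_sub hp hfin hu.proj'
    ⟨by rw [mul_assoc, qt_star_l hps hpu], by rw [← mul_assoc, hpu]⟩
  obtain ⟨a, b, w, ξ, ha, hb, hw, hw1, hw2, hb0, hpb, hfa, hqu⟩ := qt_quasi hu.proj' hp0fin (by
    intro h
    apply hu0
    have : star u = 0 := qt_eq_zero _ (by rw [star_star, h])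
    simpa using this)
  have hQQ : QQ M a b w ξ := ⟨ha, hb, hw, hw1, hw2, hfa, hqu⟩
  have hbs : star b = b := hb.2.1
  have hu1M : b * u ∈ M := mul_mem hb.1 hu.mem
  have hu1b : (b * u) * star (b * u) = b := by
    rw [star_mul, hbs, mul_assoc, ← mul_assoc u, hpb, hb.2.2]
  have hu1e : (b * u) * e = b * u := by rw [mul_assoc, hue]
  have hbu1 : b * (b * u) = b * u := by rw [← mul_assoc, hb.2.2]
  have hu1 : QPI M (b * u) := by
    have := (QPI.of (star_mem hu1M) (by rw [star_star, hu1b]) hb.2.2).star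
    rwa [star_star] at this
  set u1 := b * u with hu1d
  clear_value u1
  obtain ⟨z', hz', hzb, hgen⟩ := qt_D hp hfin hb hb0
  have hzz : z * z = z := hz.1.2.2
  have hzz' : z' * z' = z' := hz'.1.2.2
  have cz := hz.2
  have cz' := hz'.2
  have hvu1 : v * star u1 = 0 := by
    rw [← qt_star_r hes hu1e, ← mul_assoc, hveq, zero_mul]
  have hzu1 : z * u1 = u1 := by
    rw [cz _ hu1M, ← hu1e, mul_assoc, ← cz _ heM, hz1]
  have hX := (hv.cent hz).cent hz'
  have hY := hu1.cent hz'
  have hXq : z' * (z * v) * q = z' * (z * v) := by simp only [mul_assoc, hvq]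
  have hYq : z' * u1 * q = z' * u1 := by
    rw [mul_assoc]; congr 1
    rw [← hu1e, mul_assoc, heq']
  have hpX : p * (z' * (z * v)) = z' * (z * v) := by
    rw [← mul_assoc, ← cz' _ hp.1, mul_assoc, ← mul_assoc p, ← cz _ hp.1, mul_assoc, hpv]
  have hbY : b * (z' * u1) = z' * u1 := by
    rw [← mul_assoc, ← cz' _ hb.1, mul_assoc, hbu1]
  have hzX : z * (z' * (z * v)) = z' * (z * v) := by
    rw [← mul_assoc, ← cz' _ hz.1.1, mul_assoc, ← mul_assoc z, hzz]
  have hzX' : z' * (z' * (z * v)) = z' * (z * v) := by rw [← mul_assoc, hzz']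
  have hzY : z * (z' * u1) = z' * u1 := by
    rw [← mul_assoc, ← cz' _ hz.1.1, mul_assoc, hzu1]
  have hzY' : z' * (z' * u1) = z' * u1 := by rw [← mul_assoc, hzz']
  have hXY : z' * (z * v) * star (z' * u1) = 0 := by
    simp only [star_mul, mul_assoc]
    rw [← mul_assoc v, hvu1]; simp
  have hXX : ∀ m ∈ M, z * m = m → z' * m = m → p * m = m →
      z' * (z * v) * (star (z' * (z * v)) * m) = m := by
    intro m hm h1 h2 h3
    have e1 : star (z' * (z * v)) * m = star v * m := by
      rw [star_mul, star_mul, hz.1.2.1.star_eq, hz'.1.2.1.star_eq, mul_assoc, h2, mul_assoc, h1]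
    rw [e1]
    have e2 : z * (v * star v) * m = z * p * m := by
      have := congr($hz2 * m)
      rw [zero_mul, mul_sub, sub_mul, sub_eq_zero] at this
      exact this.symm
    rw [mul_assoc, mul_assoc, ← mul_assoc v, ← mul_assoc z, e2, mul_assoc, h3, h1, h2]
  have hY0 : star (z' * u1) * (z' * u1) ≠ 0 := by
    intro h
    apply hzb
    have h1 := qt_eq_zero _ h
    rw [← hu1b, ← mul_assoc, h1, zero_mul]
  set X := z' * (z * v) with hXd
  set Y := z' * u1 with hYd
  clear_value X Y
  have hYX : Y * star X = 0 := by simpa using congr(star $hXY)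
  have hXp : X * (star X * X) = X := hX.pi'
  have hYp : Y * (star Y * Y) = Y := hY.pi'
  have hXp' : star X * (X * star X) = star X := by simpa using hX.star.pi'
  have hYp' : star Y * (Y * star Y) = star Y := by simpa using hY.star.pi'
  obtain ⟨q', hq'⟩ : ∃ q', q' = star X * X + star Y * Y := ⟨_, rfl⟩
  have hq's : star q' = q' := by simp [hq']
  have hXq' : X * q' = X := by
    rw [hq', mul_add, hXp, ← mul_assoc X (star Y), hXY, zero_mul, add_zero]
  have hYq' : Y * q' = Y := by
    rw [hq', mul_add, hYp, ← mul_assoc Y (star X), hYX, zero_mul, zero_add]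
  have hq'P : IsProjIn M q' := by
    refine ⟨hq' ▸ add_mem hX.proj.1 hY.proj.1, hq's, ?_⟩
    nth_rw 1 [hq']
    rw [add_mul, mul_assoc, mul_assoc, hXq', hYq', hq']
  have hq'q : q' * q = q' := by
    rw [hq', add_mul, mul_assoc, mul_assoc, hXq, hYq]
  have hqq' : q * q' = q' := by simpa [hq's] using qt_star_r hqs hq'q
  have hzq' : z * q' = q' := by
    rw [hq', mul_add, ← mul_assoc, ← mul_assoc, cz _ (star_mem hX.mem), cz _ (star_mem hY.mem),
      mul_assoc, mul_assoc, hzX, hzY]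
  have hzq'' : z' * q' = q' := by
    rw [hq', mul_add, ← mul_assoc, ← mul_assoc, cz' _ (star_mem hX.mem), cz' _ (star_mem hY.mem),
      mul_assoc, mul_assoc, hzX', hzY']
  have hgen' : QGen M b q' := by
    have h1 := hgen.conj (star_mem hX.mem)
    have h2 := QGen.single (b := b) (star_mem hY.mem) (qt_star_l hbs hbY)
    have h3 : star X * (z' * p) * star (star X) = star X * X := by
      rw [star_star, mul_assoc, mul_assoc z', hpX, hzX']
    rw [h3] at h1
    rw [star_star] at h2
    rw [hq']
    exact h1.add h2
  have hq'fin := qt_gen_fin hQQ hgen' hq'P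
  have hD := hY.proj
  have key : ∀ i, ∃ V ∈ M, star V * V = star Y * Y ∧ q' * V = V ∧
      ∀ η, ‖star V η‖ ^ 2 ≤ 2 * (‖q' η‖ ^ 2 - ‖Q i (q' η)‖ ^ 2) := by
    intro i
    obtain ⟨g, s, c, hg, hc, hs, hgs, hgc, hsr, -, h2⟩ := qt_spec M (x := Q i * q')
      (mul_mem (hQ i).1 hq'P.1) (δ := 1 / 2) (by norm_num)
    obtain ⟨hsq, hqs'⟩ := hsr q' hq's (by rw [mul_assoc, hq'P.2.2])
    have hQg : Q i * g = g := by rw [hgc, ← mul_assoc, ← mul_assoc, (hQ i).2.2]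
    have hzg : z * g = g := by
      rw [hgc, cz _ (mul_mem (mul_mem (hQ i).1 hq'P.1) hc), mul_assoc, ← cz _ hc, mul_assoc,
        ← mul_assoc q', ← cz _ hq'P.1, hzq', mul_assoc]
    have hzg' : z' * g = g := by
      rw [hgc, cz' _ (mul_mem (mul_mem (hQ i).1 hq'P.1) hc), mul_assoc, ← cz' _ hc, mul_assoc,
        ← mul_assoc q', ← cz' _ hq'P.1, hzq'', mul_assoc]
    have hXXg := hXX (x i * g) (mul_mem (hxM i) hg)
      (by rw [← mul_assoc, cz _ (hxM i), mul_assoc, hzg])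
      (by rw [← mul_assoc, cz' _ (hxM i), mul_assoc, hzg'])
      (by rw [← mul_assoc, hpx])
    have hTM : star X * (x i * g) ∈ M := mul_mem (star_mem hX.mem) (mul_mem (hxM i) hg)
    have hTT : star (star X * (x i * g)) * (star X * (x i * g)) = s := by
      rw [star_mul, star_star, star_mul, mul_assoc, hXXg, mul_assoc, ← mul_assoc (star (x i)), hx1,
        hQg, hgs]
    have hT := QPI.of hTM hTT hs.2.2
    have hTs := qt_pi_right hTT hs.2.2
    have hTq' : star X * (x i * g) * q' = star X * (x i * g) := by
      rw [← hTs, mul_assoc, hsq]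
    have hq'T : q' * (star X * (x i * g)) = star X * (x i * g) := by
      rw [← mul_assoc, qt_star_r hq's hXq']
    obtain ⟨W, hWM, hW1, hW2⟩ := qt_cancel hq'P hq'fin hT hTq' hq'T
    rw [hTT] at hW1
    have hii : (q' - s) * (q' - s) = q' - s := by
      simp only [mul_sub, sub_mul, hq'P.2.2, hs.2.2, hsq, hqs']; abel
    have hWr := qt_pi_right hW1 hii
    have hWq' : W * q' = W := by
      rw [← hWr, mul_assoc, sub_mul, hq'P.2.2, hsq]
    have hDs : star (star Y * Y) = star Y * Y := hD.2.1
    refine ⟨star W * (star Y * Y), mul_mem (star_mem hWM) hD.1, ?_, ?_, ?_⟩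
    · rw [star_mul, star_star, hDs, mul_assoc, ← mul_assoc W, hW2]
      have h3 : star (star X * (x i * g)) * (star Y * Y) = 0 := by
        rw [star_mul, star_star, mul_assoc, ← mul_assoc X, hXY, zero_mul, mul_zero]
      rw [sub_mul, mul_assoc (star X * (x i * g)), h3, mul_zero, sub_zero, ← mul_assoc q',
        qt_star_r hq's hYq', hD.2.2]
    · rw [← mul_assoc, qt_star_r hq's hWq']
    · intro η
      have h3 : ‖star (star W * (star Y * Y)) η‖ ≤ ‖(q' - s) η‖ := by
        rw [star_mul, star_star, hDs, ← qt_norm_eq hW1 hii η]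
        exact qt_norm_le hDs hD.2.2 (W η)
      have h4 : ‖star (star W * (star Y * Y)) η‖ ^ 2 ≤ ‖(q' - s) η‖ ^ 2 := by gcongr
      have h5 := h2 (q' η)
      have e1 : s (q' η) = s η := congr($hsq η)
      have e2 : q' (q' η) = q' η := congr($(hq'P.2.2) η)
      have e3 : q' (s η) = s η := congr($hqs' η)
      have h6 : ‖(Q i * q') (s (q' η))‖ ^ 2 ≤ ‖s η‖ ^ 2 := by
        have : ‖(Q i * q') (s (q' η))‖ ≤ ‖s η‖ := by
          rw [e1, ContinuousLinearMap.mul_apply, e3]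
          exact qt_norm_le (hQ i).2.1 (hQ i).2.2 _
        gcongr
      have h7 := qt_pyth (v := s) (u := q' - s)
        (by rw [hs.2.1.star_eq, mul_sub, hsq, hs.2.2, sub_self]) η
      rw [add_sub_cancel] at h7
      rw [ContinuousLinearMap.mul_apply, e2] at h5
      rw [e1] at h5
      have e4 : (q' - s) η = q' η - s η := rfl
      rw [e1] at h6
      rw [e4] at h4 h7
      linarith
  choose V hVM hV1 hV2 hV3 using key
  apply hY0
  refine qt_K hQQ hgen' l hD V hVM hV1 hV2 ?_
  intro η
  have ht : Tendsto (fun i => 2 * (‖q' η‖ ^ 2 - ‖Q i (q' η)‖ ^ 2)) l (𝓝 0) := by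
    have h1 := (((hlim (q' η)).norm.pow 2).const_sub (‖q' η‖ ^ 2)).const_mul 2
    have h2 : q (q' η) = q' η := congr($hqq' η)
    rw [h2, sub_self, mul_zero] at h1
    exact h1
  have ht2 := squeeze_zero (fun i => by positivity) (fun i => hV3 i η) ht
  rw [tendsto_zero_iff_norm_tendsto_zero]
  simpa using ht2.sqrt

theorem qt_sub_iff {M : VonNeumannAlgebra H} {p q : H →L[ℂ] H} (hp : IsProjIn M p)
    (hq : IsProjIn M q) : SubEquiv M q p ↔ ∃ v ∈ M, star v * v = q ∧ p * v = v := by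
  constructor
  · rintro ⟨r, hr, ⟨v, hv, h1, h2⟩, h3, h4⟩
    replace h1 : star v * v = q := h1
    replace h2 : v * star v = r := h2
    refine ⟨v, hv, h1, ?_⟩
    have h5 : r * v = v := by rw [← h2, mul_assoc, h1, qt_pi_right h1 hq.2.2]
    rw [← h5, ← mul_assoc, h4]
  · rintro ⟨v, hv, h1, h2⟩
    refine ⟨v * star v, (QPI.of hv h1 hq.2.2).proj', ⟨v, hv, h1, rfl⟩, ?_, ?_⟩
    · rw [mul_assoc, qt_star_l hp.2.1 h2]
    · rw [← mul_assoc, h2]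

theorem qt_sub_congr {M : VonNeumannAlgebra H} {p q r : H →L[ℂ] H} (hp : IsProjIn M p)
    (hq : IsProjIn M q) (hr : IsProjIn M r) (h : MvNEquiv M q r) :
    SubEquiv M q p ↔ SubEquiv M r p := by
  obtain ⟨x, hx, h1, h2⟩ := h
  replace h1 : star x * x = q := h1
  replace h2 : x * star x = r := h2
  have hxq := qt_pi_right h1 hq.2.2
  rw [qt_sub_iff hp hq, qt_sub_iff hp hr]
  constructor
  · rintro ⟨v, hv, h3, h4⟩
    refine ⟨v * star x, mul_mem hv (star_mem hx), ?_, by rw [← mul_assoc, h4]⟩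
    rw [star_mul, star_star, mul_assoc, ← mul_assoc (star v), h3, ← mul_assoc, hxq, h2]
  · rintro ⟨v, hv, h3, h4⟩
    refine ⟨v * x, mul_mem hv hx, ?_, by rw [← mul_assoc, h4]⟩
    rw [star_mul, mul_assoc, ← mul_assoc (star v), h3, ← h2, mul_assoc x, h1, hxq, h1]

theorem qt_cont_apply (M : VonNeumannAlgebra H) (η : H) :
    Continuous fun p : ProjSet M => p.1 η :=
  (continuous_apply η).comp continuous_induced_dom

theorem qt_closed {M : VonNeumannAlgebra H} {p : H →L[ℂ] H} (hp : IsProjIn M p)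
    (hfin : FiniteProj M p) : IsClosed {q : ProjSet M | SubEquiv M q.1 p} := by
  rw [← closure_subset_iff_isClosed]
  intro q hq
  rw [mem_closure_iff_comap_neBot] at hq
  have hh : ∀ i : {q : ProjSet M | SubEquiv M q.1 p}, ∃ v ∈ M, star v * v = i.1.1 ∧ p * v = v :=
    fun i => (qt_sub_iff hp i.1.2).1 i.2
  choose x hxM hx1 hx2 using hh
  refine (qt_sub_iff hp q.2).2 (qt_main hp hfin q.2 (comap Subtype.val (𝓝 q))
    (fun i => i.1.1) x (fun i => i.1.2) hxM hx1 hx2 ?_)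
  intro η
  exact ((qt_cont_apply M η).tendsto q).comp tendsto_comap

theorem qt_preim {M : VonNeumannAlgebra H} {p : H →L[ℂ] H} (hp : IsProjIn M p) :
    pquotMk M ⁻¹' (pquotMk M '' {q : ProjSet M | SubEquiv M q.1 p}) =
      {q : ProjSet M | SubEquiv M q.1 p} := by
  let F : PQuot M → Prop := Quot.lift (fun q : ProjSet M => SubEquiv M q.1 p)
    (fun a b h => propext (qt_sub_congr hp a.2 b.2 h))
  ext q
  constructor
  · rintro ⟨r, hr, h⟩
    have h1 : F (pquotMk M r) = F (pquotMk M q) := congrArg F h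
    exact h1.mp hr
  · intro hq
    exact ⟨q, hq, rfl⟩

theorem qt_dense {M : VonNeumannAlgebra H} (hM : ProperlyInfiniteProj M (1 : H →L[ℂ] H))
    {p q : H →L[ℂ] H} (hp : IsProjIn M p) (hq : IsProjIn M q) (h : SubEquiv M q p) :
    pquotMk M ⟨q, hq⟩ ∈ closure {x : PQuot M | x = pquotMk M ⟨p, hp⟩} := by
  obtain ⟨r, hr, hqr, hrp, hpr⟩ := h
  obtain ⟨-, e, he, hpair, heq, hsum⟩ := hM
  choose v hv hv1 hv2 using heq
  replace hv1 : ∀ n, star (v n) * v n = e n := hv1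
  replace hv2 : ∀ n, v n * star (v n) = 1 := hv2
  have hps : star p = p := hp.2.1
  have hrs : star r = r := hr.2.1
  have hve : ∀ n, v n * e n = v n := fun n => qt_pi_right (hv1 n) (he n).2.2
  have hvv : ∀ m n, m ≠ n → v m * star (v n) = 0 := by
    intro m n hmn
    rw [← hve m, ← qt_star_r (he n).2.1 (hve n), mul_assoc, ← mul_assoc (e m), hpair hmn,
      zero_mul, mul_zero]
  have hrp0 : r * (p - r) = 0 := by rw [mul_sub, hrp, hr.2.2, sub_self]
  have hpr0 : (p - r) * r = 0 := by rw [sub_mul, hpr, hr.2.2, sub_self]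
  have hd : (p - r) * (p - r) = p - r := by
    rw [mul_sub, hpr0, sub_zero, sub_mul, hp.2.2, hrp]
  have hds : star (p - r) = p - r := by rw [star_sub, hps, hrs]
  have hdM : p - r ∈ M := sub_mem hp.1 hr.1
  obtain ⟨d, hdd⟩ : ∃ d, d = p - r := ⟨_, rfl⟩
  rw [← hdd] at hrp0 hpr0 hd hds hdM
  have hpd : r + d = p := by rw [hdd]; abel
  -- the approximating partial isometries
  let W : ℕ → H →L[ℂ] H := fun n => star (v 0) * r + star (v (n + 1)) * d
  have hWM : ∀ n, W n ∈ M := fun n =>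
    add_mem (mul_mem (star_mem (hv _)) hr.1) (mul_mem (star_mem (hv _)) hdM)
  have hW1 : ∀ n, star (W n) * W n = p := by
    intro n
    simp only [W, star_add, star_mul, star_star, hrs, hds, mul_add, add_mul, mul_assoc,
      qt_r (hv2 _), qt_r (hvv 0 (n + 1) (by omega)), qt_r (hvv (n + 1) 0 (by omega)),
      one_mul, zero_mul, mul_zero, hr.2.2, hd, add_zero, zero_add, hpd]
  have hW2 : ∀ n, W n * star (W n) = star (v 0) * r * v 0 + star (v (n + 1)) * d * v (n + 1) := by
    intro n
    simp only [W, star_add, star_mul, star_star, hrs, hds, mul_add, add_mul, mul_assoc,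
      qt_r hr.2.2, qt_r hd, qt_r hrp0, qt_r hpr0, zero_mul, mul_zero, add_zero, zero_add]
  have hWQ : ∀ n, QPI M (W n) := fun n => QPI.of (hWM n) (hW1 n) hp.2.2
  have hUM : star (v 0) * r ∈ M := mul_mem (star_mem (hv 0)) hr.1
  have hU1 : star (star (v 0) * r) * (star (v 0) * r) = r := by
    rw [star_mul, star_star, hrs, mul_assoc, ← mul_assoc (v 0), hv2, one_mul, hr.2.2]
  have hU2 : (star (v 0) * r) * star (star (v 0) * r) = star (v 0) * r * v 0 := by
    rw [star_mul, star_star, hrs, mul_assoc, ← mul_assoc r, hr.2.2, mul_assoc]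
  have hU := QPI.of hUM hU1 hr.2.2
  let P : ℕ → ProjSet M := fun n => ⟨W n * star (W n), (hWQ n).proj'⟩
  let P0 : ProjSet M := ⟨(star (v 0) * r) * star (star (v 0) * r), hU.proj'⟩
  have hlim : Tendsto P atTop (𝓝 P0) := by
    rw [nhds_induced, tendsto_comap_iff, tendsto_pi_nhds]
    intro η
    change Tendsto (fun n => (W n * star (W n)) η) atTop
      (𝓝 (((star (v 0) * r) * star (star (v 0) * r)) η))
    simp only [hW2, hU2, add_apply]
    have h0 : Tendsto (fun n => (star (v (n + 1)) * d * v (n + 1)) η) atTop (𝓝 0) := by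
      have h1 : Tendsto (fun n => e (n + 1) η) atTop (𝓝 0) :=
        (tendsto_add_atTop_iff_nat 1).2 (hsum η).summable.tendsto_atTop_zero
      refine squeeze_zero_norm (fun n => ?_) (by simpa using h1.norm)
      have h2 : ‖star (v (n + 1)) (d (v (n + 1) η))‖ = ‖(1 : H →L[ℂ] H) (d (v (n + 1) η))‖ :=
        qt_norm_eq (by rw [star_star, hv2]) (by simp) _
      have h3 : ‖d (v (n + 1) η)‖ ≤ ‖v (n + 1) η‖ := qt_norm_le hds hd _
      have h4 := qt_norm_eq (hv1 (n + 1)) (he _).2.2 η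
      change ‖star (v (n + 1)) (d (v (n + 1) η))‖ ≤ _
      rw [h2, ← h4]
      exact h3
    simpa using h0.const_add ((star (v 0) * r * v 0) η)
  have hcont : Continuous (pquotMk M) := continuous_quot_mk
  have e1 : pquotMk M ⟨q, hq⟩ = pquotMk M ⟨r, hr⟩ := Quot.sound hqr
  have e2 : pquotMk M ⟨r, hr⟩ = pquotMk M P0 :=
    Quot.sound ⟨_, hUM, hU1, rfl⟩
  rw [e1, e2]
  refine mem_closure_of_tendsto ((hcont.tendsto _).comp hlim) (Eventually.of_forall fun n => ?_)
  exact (Quot.sound ⟨W n, hWM n, hW1 n, rfl⟩ : pquotMk M ⟨p, hp⟩ = _).symm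


/-- Let `M` be properly infinite and `p` a finite projection in `M`.
Then the closure of `{[p]}` in the quotient operator topology on `P(M)/∼` is
`{[q] : q ≼ p}`. -/
theorem closure_singleton_finite (M : VonNeumannAlgebra H)
    (hM : ProperlyInfiniteProj M (1 : H →L[ℂ] H))
    (p : H →L[ℂ] H) (hp : IsProjIn M p) (hfin : FiniteProj M p) :
    closure {x : PQuot M | x = pquotMk M ⟨p, hp⟩} =
      pquotMk M '' {q : ProjSet M | SubEquiv M q.1 p} := by
  apply subset_antisymm
  · apply closure_minimal
    · rintro _ rfl
      exact ⟨⟨p, hp⟩, (qt_sub_iff hp hp).2 ⟨p, hp.1, by rw [hp.2.1.star_eq, hp.2.2], hp.2.2⟩, rfl⟩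
    · have hqm : IsQuotientMap (pquotMk M) := isQuotientMap_quot_mk
      rw [← hqm.isClosed_preimage, qt_preim hp]
      exact qt_closed hp hfin
  · rintro _ ⟨⟨q, hq⟩, h, rfl⟩
    exact qt_dense hM hp hq h
end
end
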